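/- arXiv:2505.12270 — 4 statements merged into one kernel-verified Lean document; each statement's English description precedes it below -/
import Mathlib

section
/- Let n be a nonnegative integer that cannot be written as the sum of a generalized pentagonal number and six times a generalized pentagonal number (i.e. n ≠ k(3k−1)/2 + 3l(3l−1) for all integers k, l). Then b^4_{3,2}(16n+5) ≡ 0 (mod 8). -/
/-- `coloredRegular k l m n` is the number of `k`-colored partitions of `n` into parts
divisible by neither `l` nor `m`, i.e. the coefficient of `q^n` in
`∏_{j ≥ 1, l ∤ j, m ∤ j} (1 - q^j)^{-k}`.  A `k`-colored partition is a multiset of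
(part, color) pairs, where parts are positive integers not divisible by `l` or `m`
and colors range over `{0, …, k-1}`. -/
noncomputable def coloredRegular (k l m n : ℕ) : ℕ :=
  Nat.card {M : Multiset (ℕ × ℕ) //
    (∀ x ∈ M, ¬ l ∣ x.1 ∧ ¬ m ∣ x.1 ∧ x.2 < k) ∧ (M.map Prod.fst).sum = n}


open PowerSeries

namespace Stmt11

section gen
variable (R : Type*) [CommRing R]

noncomputable def Q (N : ℕ) : R⟦X⟧ := ∏ i ∈ Finset.range N, (1 - X ^ (i + 1))

lemma Q_succ (N : ℕ) : Q R (N + 1) = Q R N * (1 - X ^ (N + 1)) := by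
  simp [Q, Finset.prod_range_succ]

lemma tail_dvd (N : ℕ) (s : Finset ℕ) (hs : ∀ i ∈ s, N ≤ i) :
    (X : R⟦X⟧) ^ (N + 1) ∣ (∏ i ∈ s, (1 - X ^ (i + 1) : R⟦X⟧)) - 1 := by
  induction s using Finset.induction_on with
  | empty => simp
  | insert a s ha ih =>
    rw [Finset.prod_insert ha]
    have h1 := ih (fun i hi => hs i (Finset.mem_insert_of_mem hi))
    have h2 : (X : R⟦X⟧) ^ (N + 1) ∣ X ^ (a + 1) :=
      pow_dvd_pow _ (by have := hs a (Finset.mem_insert_self _ _); omega)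
    have : (1 - X ^ (a + 1) : R⟦X⟧) * ∏ i ∈ s, (1 - X ^ (i + 1) : R⟦X⟧) - 1 =
      ((∏ i ∈ s, (1 - X ^ (i + 1) : R⟦X⟧)) - 1) - X ^ (a + 1) * ∏ i ∈ s, (1 - X ^ (i + 1) : R⟦X⟧) := by
      ring
    rw [this]
    exact dvd_sub h1 (h2.mul_right _)

lemma eta_trunc (N : ℕ) : (X : R⟦X⟧) ^ (N + 1) ∣ pentagonalSeries R - Q R N := by
  rw [X_pow_dvd_iff]
  intro m hm
  obtain ⟨s, hs1, hs2⟩ := ((coeff_prod_one_sub_X_pow_eventually_eq R m).and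
    (Filter.eventually_ge_atTop (Finset.range N))).exists
  rw [map_sub, ← hs1, ← map_sub]
  have h : (X : R⟦X⟧) ^ (N + 1) ∣ (∏ i ∈ s, (1 - X ^ (i + 1) : R⟦X⟧)) - Q R N := by
    have h3 := tail_dvd R N (s \ Finset.range N) (by intro i hi; simp at hi; exact hi.2)
    have h4 : (∏ i ∈ s, (1 - X ^ (i + 1) : R⟦X⟧)) - Q R N =
       Q R N * ((∏ i ∈ s \ Finset.range N, (1 - X ^ (i + 1) : R⟦X⟧)) - 1) := by
      rw [← Finset.prod_sdiff hs2, Q]; ring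
    rw [h4]; exact h3.mul_left _
  exact (X_pow_dvd_iff.1 h) m hm

lemma constQ (N : ℕ) : constantCoeff (Q R N) = 1 := by
  simp [Q, map_prod]

lemma isUnit_Q (N : ℕ) : IsUnit (Q R N) := by
  rw [isUnit_iff_constantCoeff, constQ]; exact isUnit_one

lemma const_eta : constantCoeff (pentagonalSeries R) = 1 := by
  have := eta_trunc R 0
  rw [X_pow_dvd_iff] at this
  have := this 0 (by simp)
  rw [coeff_zero_eq_constantCoeff, map_sub, constQ, sub_eq_zero] at this
  exact this

lemma isUnit_eta : IsUnit (pentagonalSeries R) := by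
  rw [isUnit_iff_constantCoeff, const_eta]; exact isUnit_one

lemma map_eta {S : Type*} [CommRing S] (f : R →+* S) :
    (pentagonalSeries R).map f = pentagonalSeries S := by
  ext n
  rw [coeff_map]
  by_cases h : n ∈ Set.range pentagonal
  · obtain ⟨k, rfl⟩ := h
    rw [coeff_pentagonalSeries_pentagonal, coeff_pentagonalSeries_pentagonal]
    simp
  · rw [coeff_pentagonalSeries_eq_zero _ h, coeff_pentagonalSeries_eq_zero _ h, map_zero]

lemma expand_dvd (k : ℕ) (hk : k ≠ 0) (N M : ℕ) (hM : M ≤ k * N) (a b : R⟦X⟧)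
    (h : (X : R⟦X⟧) ^ N ∣ a - b) :
    (X : R⟦X⟧) ^ M ∣ expand k hk a - expand k hk b := by
  obtain ⟨c, hc⟩ := h
  rw [← map_sub, hc, map_mul, map_pow, expand_X, ← pow_mul]
  exact (pow_dvd_pow _ hM).mul_right _

end gen

section two

lemma two_zero : (2 : (ZMod 2)⟦X⟧) = 0 := by
  have : (2 : (ZMod 2)⟦X⟧) = C (2 : ZMod 2) := by rw [map_ofNat]
  rw [this]; rw [show (2 : ZMod 2) = 0 from rfl]; simp

lemma frob (f : (ZMod 2)⟦X⟧) : expand 2 two_ne_zero f = f ^ 2 := by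
  have h := MvPowerSeries.map_frobenius_expand (σ := Unit) (R := ZMod 2) 2 two_ne_zero (f := f)
  rw [ZMod.frobenius_zmod] at h
  rw [MvPowerSeries.map_id] at h
  exact h

noncomputable def g (n : ℕ) : (ZMod 2)⟦X⟧ := (Q (ZMod 2) n)⁻¹

lemma g_mul (n : ℕ) : g n * Q (ZMod 2) n = 1 :=
  PowerSeries.inv_mul_cancel _ (by rw [constQ]; exact one_ne_zero)

lemma g_succ (n : ℕ) : g n = (1 - X ^ (n + 1)) * g (n + 1) := by
  have h1 := g_mul n
  have h2 := g_mul (n+1)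
  rw [Q_succ] at h2
  calc g n = g n * (g (n+1) * (Q (ZMod 2) n * (1 - X ^ (n + 1)))) := by rw [h2, mul_one]
    _ = (g n * Q (ZMod 2) n) * ((1 - X ^ (n + 1)) * g (n+1)) := by ring
    _ = _ := by rw [h1, one_mul]

def T (j : ℕ) : ℕ := j * (j + 1) / 2

lemma T_succ (j : ℕ) : T (j + 1) = T j + (j + 1) := by
  unfold T
  rw [show (j+1) * (j+1+1) = j * (j+1) + (j+1) * 2 by ring, Nat.add_mul_div_right _ _ (by norm_num)]

lemma two_T (j : ℕ) : 2 * T j = j * (j + 1) := by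
  induction j with
  | zero => rfl
  | succ n ih => rw [T_succ, mul_add, ih]; ring

lemma le_T (j : ℕ) : j ≤ T j := by
  induction j with
  | zero => simp
  | succ n ih => rw [T_succ]; omega

lemma T_inj {a b : ℕ} (h : T a = T b) : a = b := by
  have h1 := two_T a
  have h2 := two_T b
  rw [h, h2] at h1
  nlinarith [lt_trichotomy a b |>.resolve_left (fun h => by nlinarith) |>.resolve_right (fun h => by nlinarith)]

noncomputable def gi : ℕ → (ZMod 2)⟦X⟧
  | 0 => 0
  | n + 1 => g n

lemma gi_succ (n : ℕ) : gi n = (1 - X ^ n) * gi (n + 1) := by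
  cases n with
  | zero => simp [gi]
  | succ n => exact g_succ n

noncomputable def cc (N j : ℕ) : (ZMod 2)⟦X⟧ :=
  Q (ZMod 2) (2 * N + 1) * gi (N + 1 - j) * g (N + 1 + j)

noncomputable def tt (N j : ℕ) : (ZMod 2)⟦X⟧ := X ^ (T j) * cc N j

lemma tt_big (N j : ℕ) (h : N < j) : tt N j = 0 := by
  simp [tt, cc, show N + 1 - j = 0 by omega, gi]

lemma tt_zero (N : ℕ) : tt (N + 1) 0 =
    X ^ (N + 1) * tt N 1 + (1 + X ^ (2 * N + 2)) * tt N 0 + X ^ (N + 1) * tt N 0 := by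
  have h1 : T 1 = 1 := rfl
  have h0 : T 0 = 0 := rfl
  simp only [tt, h1, h0, cc]
  rw [show 2 * (N + 1) + 1 = 2 * N + 1 + 1 + 1 by ring, Q_succ, Q_succ]
  simp only [add_zero, Nat.sub_zero, Nat.add_sub_cancel]
  rw [gi_succ N, gi_succ (N + 1), show gi (N + 1 + 1) = g (N + 1) from rfl, g_succ (N + 1)]
  ring

lemma cc_self (N : ℕ) : cc N N = 1 := by
  have h0 : g 0 = 1 := by have := g_mul 0; simpa [Q] using this
  rw [cc, show N + 1 - N = 0 + 1 by omega, gi, h0, mul_one,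
    show N + 1 + N = 2 * N + 1 by ring, mul_comm, g_mul]

lemma tt_succ (N j : ℕ) (hj : j ≤ N) : tt (N + 1) (j + 1) =
    X ^ (N + 1) * tt N (j + 2) + (1 + X ^ (2 * N + 2)) * tt N (j + 1) + X ^ (N + 1) * tt N j := by
  rcases hj.eq_or_lt with rfl | hj
  · rw [tt_big j (j + 2) (by omega), tt_big j (j + 1) (by omega), tt, tt, cc_self, cc_self, T_succ]
    ring
  · obtain ⟨d, rfl⟩ : ∃ d, N = j + 1 + d := ⟨N - (j + 1), by omega⟩
    simp only [tt, cc, T_succ]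
    rw [show j + 1 + d + 1 + 1 - (j + 1) = d + 1 + 1 by omega,
      show j + 1 + d + 1 - (j + 2) = d by omega,
      show j + 1 + d + 1 - (j + 1) = d + 1 by omega,
      show j + 1 + d + 1 - j = d + 1 + 1 by omega,
      show 2 * (j + 1 + d + 1) + 1 = 2 * (j + 1 + d) + 1 + 1 + 1 by ring, Q_succ, Q_succ]
    rw [show j + 1 + d + 1 + 1 + (j + 1) = 2 * j + d + 2 + 1 + 1 by ring,
      show j + 1 + d + 1 + (j + 2) = 2 * j + d + 2 + 1 + 1 by ring,
      show j + 1 + d + 1 + (j + 1) = 2 * j + d + 2 + 1 by ring,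
      show j + 1 + d + 1 + j = 2 * j + d + 2 by ring]
    rw [gi_succ d, gi_succ (d + 1), g_succ (2 * j + d + 2), g_succ (2 * j + d + 2 + 1)]
    ring

noncomputable def SS (N : ℕ) : (ZMod 2)⟦X⟧ := ∑ j ∈ Finset.range (N + 1), tt N j

lemma SS_succ (N : ℕ) : SS (N + 1) = (1 + X ^ (N + 1)) ^ 2 * SS N := by
  have e : SS (N + 1) = ∑ j ∈ Finset.range (N + 1), (X ^ (N + 1) * tt N (j + 2) +
      (1 + X ^ (2 * N + 2)) * tt N (j + 1) + X ^ (N + 1) * tt N j) + tt (N + 1) 0 := by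
    rw [SS, Finset.sum_range_succ']
    congr 1
    exact Finset.sum_congr rfl (fun j hj => tt_succ N j (by simp at hj; omega))
  have s1 : ∑ j ∈ Finset.range (N + 1), tt N (j + 1) = SS N - tt N 0 := by
    have h := Finset.sum_range_succ' (fun j => tt N j) (N + 1)
    rw [Finset.sum_range_succ, tt_big N (N + 1) (by omega), add_zero] at h
    exact (sub_eq_iff_eq_add.2 h).symm
  have s2 : ∑ j ∈ Finset.range (N + 1), tt N (j + 2) = SS N - tt N 0 - tt N 1 := by
    have h := Finset.sum_range_succ' (fun j => tt N (j + 1)) (N + 1)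
    rw [Finset.sum_range_succ, s1, tt_big N (N + 1 + 1) (by omega)] at h
    simp only [zero_add, add_zero] at h
    exact (sub_eq_iff_eq_add.2 h).symm
  rw [e, Finset.sum_add_distrib, Finset.sum_add_distrib, ← Finset.mul_sum, ← Finset.mul_sum,
    ← Finset.mul_sum, s1, s2, tt_zero]
  rw [show ∑ j ∈ Finset.range (N + 1), tt N j = SS N from rfl]
  ring

lemma SS_eq (N : ℕ) : SS N = Q (ZMod 2) N ^ 2 := by
  induction N with
  | zero => simp [SS, tt, cc_self, Q, T]
  | succ N ih =>
    rw [SS_succ, ih, Q_succ]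
    linear_combination (2 * X ^ (N + 1) * Q (ZMod 2) N ^ 2) * two_zero

open Classical in
noncomputable def Psi : (ZMod 2)⟦X⟧ := mk fun n => if ∃ j, T j = n then 1 else 0

noncomputable def PsiN (N : ℕ) : (ZMod 2)⟦X⟧ := ∑ j ∈ Finset.range (N + 1), X ^ T j

lemma Psi_trunc (N : ℕ) : (X : (ZMod 2)⟦X⟧) ^ (N + 1) ∣ Psi - PsiN N := by
  rw [X_pow_dvd_iff]
  intro m hm
  rw [map_sub, PsiN, map_sum, Psi, coeff_mk, sub_eq_zero]
  simp only [coeff_X_pow]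
  split_ifs with h
  · obtain ⟨j, rfl⟩ := h
    rw [Finset.sum_eq_single j]
    · simp
    · intro b _ hb
      rw [if_neg]
      intro h
      exact hb (T_inj h.symm)
    · intro h
      have := le_T j
      simp at h
      omega
  · symm
    apply Finset.sum_eq_zero
    intro j _
    rw [if_neg]
    intro h'
    exact h ⟨j, h'.symm⟩

lemma eq_of_dvd {R : Type*} [CommRing R] (a b : R⟦X⟧)
    (h : ∀ N : ℕ, (X : R⟦X⟧) ^ (N + 1) ∣ a - b) : a = b := by
  ext n
  have := (X_pow_dvd_iff.1 (h n)) n (by omega)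
  rwa [map_sub, sub_eq_zero] at this

lemma g_trunc (N : ℕ) : (X : (ZMod 2)⟦X⟧) ^ (N + 1) ∣ g N * pentagonalSeries (ZMod 2) - 1 := by
  rw [← g_mul N, ← mul_sub]
  exact (eta_trunc _ N).mul_left _

lemma dvd_mul_sub_one {R : Type*} [CommRing R] {x a b : R} (ha : x ∣ a - 1) (hb : x ∣ b - 1) :
    x ∣ a * b - 1 := by
  have : a * b - 1 = (a - 1) * b + (b - 1) := by ring
  rw [this]
  exact dvd_add (ha.mul_right _) hb

lemma cc_trunc (N j : ℕ) (hj : j ≤ N) :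
    (X : (ZMod 2)⟦X⟧) ^ (N - j + 1) ∣ cc N j * pentagonalSeries (ZMod 2) - 1 := by
  set e := pentagonalSeries (ZMod 2) with he
  have h1 : (X : (ZMod 2)⟦X⟧) ^ (N - j + 1) ∣ g (N - j) * e - 1 := g_trunc (N - j)
  have h2 : (X : (ZMod 2)⟦X⟧) ^ (N - j + 1) ∣ g (N + 1 + j) * e - 1 :=
    (pow_dvd_pow _ (by omega)).trans (g_trunc (N + 1 + j))
  have h3 : (X : (ZMod 2)⟦X⟧) ^ (N - j + 1) ∣ e - Q _ (2 * N + 1) :=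
    (pow_dvd_pow _ (by omega)).trans (eta_trunc _ (2 * N + 1))
  have h4 := dvd_mul_sub_one h1 h2
  rw [cc, show N + 1 - j = (N - j) + 1 by omega, gi]
  have : Q (ZMod 2) (2 * N + 1) * g (N - j) * g (N + 1 + j) * e - 1 =
    (g (N - j) * e * (g (N + 1 + j) * e) - 1) -
      (e - Q _ (2 * N + 1)) * (g (N - j) * g (N + 1 + j) * e) := by ring
  rw [this]
  exact dvd_sub h4 (h3.mul_right _)

lemma SS_trunc (N : ℕ) :
    (X : (ZMod 2)⟦X⟧) ^ (N + 1) ∣ SS N * pentagonalSeries (ZMod 2) - PsiN N := by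
  rw [SS, PsiN, Finset.sum_mul, ← Finset.sum_sub_distrib]
  apply Finset.dvd_sum
  intro j hj
  have hj : j ≤ N := by simp at hj; omega
  rw [tt, mul_assoc, ← mul_sub_one]
  have := mul_dvd_mul (dvd_refl ((X : (ZMod 2)⟦X⟧) ^ T j)) (cc_trunc N j hj)
  rw [← pow_add] at this
  exact (pow_dvd_pow _ (by have := le_T j; omega)).trans this

/-- Gauss/Jacobi modulo 2. -/
lemma Psi_eq : Psi = pentagonalSeries (ZMod 2) ^ 3 := by
  apply eq_of_dvd
  intro N
  set e := pentagonalSeries (ZMod 2) with he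
  have h1 := Psi_trunc N
  have h2 := SS_trunc N
  have h3 := eta_trunc (ZMod 2) N
  rw [SS_eq] at h2
  have : Psi - e ^ 3 = (Psi - PsiN N) - (Q (ZMod 2) N ^ 2 * e - PsiN N)
    - (e - Q _ N) * ((e + Q _ N) * e) := by ring
  rw [this]
  exact dvd_sub (dvd_sub h1 h2) (h3.mul_right _)

end two
end Stmt11

open PowerSeries
namespace Stmt11

/-- The involution on pairs of indices. -/
def inv (p : ℕ × ℕ) : ℕ × ℕ :=
  if (p.1 + p.2) % 2 = 1 then ((p.1 + 3 * p.2 + 1) / 2, ((max p.1 p.2 - min p.1 p.2) - 1) / 2)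
  else ((max p.1 (3 * p.2 + 1) - min p.1 (3 * p.2 + 1) - 1) / 2, (p.1 + p.2) / 2)

lemma inv_inv (p : ℕ × ℕ) : inv (inv p) = p := by
  obtain ⟨a, b⟩ := p
  unfold inv
  dsimp only
  ext <;> (split_ifs <;> dsimp only at * <;> omega)

lemma inv_fix (p : ℕ × ℕ) : inv p = p ↔ p.1 = p.2 ∨ p.1 = 3 * p.2 + 1 := by
  obtain ⟨a, b⟩ := p
  unfold inv
  split_ifs <;> simp only [Prod.mk.injEq] at * <;> omega

lemma inv_T (p : ℕ × ℕ) : T (inv p).1 + 3 * T (inv p).2 = T p.1 + 3 * T p.2 := by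
  obtain ⟨a, b⟩ := p
  have key : ∀ a b c d : ℕ, ((2*a+1:ℤ))^2 + 3 * (2*b+1)^2 = (2*c+1)^2 + 3*(2*d+1)^2 →
      T a + 3 * T b = T c + 3 * T d := by
    intro a b c d h
    have ha := two_T a
    have hb := two_T b
    have hc := two_T c
    have hd := two_T d
    zify at *
    nlinarith
  apply key
  unfold inv
  split_ifs with h
  · dsimp only at *
    have e1 : (2 * ((a + 3 * b + 1) / 2 : ℕ) + 1 : ℤ) = a + 3 * b + 2 := by omega
    rcases le_total a b with hab | hab
    · have e2 : (2 * ((max a b - min a b - 1) / 2 : ℕ) + 1 : ℤ) = b - a := by omega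
      rw [e1, e2]; ring
    · have e2 : (2 * ((max a b - min a b - 1) / 2 : ℕ) + 1 : ℤ) = a - b := by omega
      rw [e1, e2]; ring
  · dsimp only at *
    have e1 : (2 * ((a + b) / 2 : ℕ) + 1 : ℤ) = a + b + 1 := by omega
    rcases le_total a (3 * b + 1) with hab | hab
    · have e2 : (2 * ((max a (3 * b + 1) - min a (3 * b + 1) - 1) / 2 : ℕ) + 1 : ℤ) = 3 * b + 1 - a := by omega
      rw [e1, e2]; ring
    · have e2 : (2 * ((max a (3 * b + 1) - min a (3 * b + 1) - 1) / 2 : ℕ) + 1 : ℤ) = a - (3 * b + 1) := by omega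
      rw [e1, e2]; ring

/-- The theta-function identity modulo 2. -/
lemma theta : Psi * expand 3 three_ne_zero Psi =
    expand 4 four_ne_zero Psi + X * expand 12 (by norm_num) Psi := by
  apply eq_of_dvd
  intro N
  have hP := Psi_trunc N
  have h3 := expand_dvd _ 3 three_ne_zero (N + 1) (N + 1) (by omega) _ _ hP
  have h4 := expand_dvd _ 4 four_ne_zero (N + 1) (N + 1) (by omega) _ _ hP
  have h12 := expand_dvd _ 12 (by norm_num) (N + 1) (N + 1) (by omega) _ _ hP
  have main : (X : (ZMod 2)⟦X⟧) ^ (N + 1) ∣ PsiN N * expand 3 three_ne_zero (PsiN N) -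
    (expand 4 four_ne_zero (PsiN N) + X * expand 12 (by norm_num) (PsiN N)) := by
    rw [X_pow_dvd_iff]
    intro m hm
    simp only [PsiN, map_sum, map_pow, expand_X, map_add, map_sub, Finset.mul_sum, Finset.sum_mul]
    simp only [← pow_mul, ← pow_add, coeff_X_pow, ← pow_succ']
    rw [sub_eq_zero, Finset.sum_comm, ← Finset.sum_product']
    set D := Finset.range (N + 1) ×ˢ Finset.range (N + 1) with hD
    have hDmem : ∀ p : ℕ × ℕ, m = T p.1 + 3 * T p.2 → p ∈ D := by
      intro p hp
      have := le_T p.1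
      have := le_T p.2
      simp only [hD, Finset.mem_product, Finset.mem_range]
      omega
    have s0 : ∑ p ∈ D with ¬ (p.1 = p.2 ∨ p.1 = 3 * p.2 + 1),
        (if m = T p.1 + 3 * T p.2 then (1 : ZMod 2) else 0) = 0 := by
      rw [← Finset.sum_filter]
      apply Finset.sum_involution (fun p _ => inv p)
      · intro p _; decide
      · intro p hp _ h
        simp only [Finset.mem_filter] at hp
        exact hp.1.2 ((inv_fix p).1 h)
      · intro p hp
        simp only [Finset.mem_filter] at hp ⊢
        refine ⟨⟨hDmem _ ?_, ?_⟩, ?_⟩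
        · rw [inv_T]; exact hp.2
        · rw [← inv_fix, inv_inv]
          intro h
          exact hp.1.2 ((inv_fix p).1 h.symm)
        · rw [inv_T]; exact hp.2
      · intro p _; exact inv_inv p
    rw [← Finset.sum_filter_add_sum_filter_not D (fun p => p.1 = p.2 ∨ p.1 = 3 * p.2 + 1), s0, add_zero,
      Finset.filter_or, Finset.sum_union]
    · congr 1
      · rw [← Finset.sum_filter, ← Finset.sum_filter]
        refine Finset.sum_bij' (fun p _ => p.1) (fun a _ => (a, a)) ?_ ?_ ?_ ?_ ?_
        · rintro ⟨a, b⟩ h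
          simp only [hD, Finset.mem_filter, Finset.mem_product] at h ⊢
          obtain ⟨⟨h1, rfl⟩, h2⟩ := h
          exact ⟨h1.1, by omega⟩
        · intro a h
          simp only [hD, Finset.mem_filter, Finset.mem_product] at h ⊢
          exact ⟨⟨⟨h.1, h.1⟩, trivial⟩, by omega⟩
        · rintro ⟨a, b⟩ h
          simp only [hD, Finset.mem_filter, Finset.mem_product] at h ⊢
          rw [h.1.2]
        · intros; rfl
        · intros; rfl
      · have hT : ∀ b, T (3 * b + 1) + 3 * T b = 12 * T b + 1 := by
          intro b
          have := two_T (3 * b + 1)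
          have := two_T b
          nlinarith
        rw [← Finset.sum_filter, ← Finset.sum_filter]
        refine Finset.sum_bij' (fun p _ => p.2) (fun a _ => (3 * a + 1, a)) ?_ ?_ ?_ ?_ ?_
        · rintro ⟨a, b⟩ h
          simp only [hD, Finset.mem_filter, Finset.mem_product] at h ⊢
          obtain ⟨⟨h1, rfl⟩, h2⟩ := h
          rw [hT] at h2
          exact ⟨h1.2, by omega⟩
        · intro a h
          simp only [Finset.mem_filter] at h ⊢
          have : m = T (3 * a + 1) + 3 * T a := by rw [hT]; omega
          exact ⟨⟨hDmem (3 * a + 1, a) this, trivial⟩, this⟩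
        · rintro ⟨a, b⟩ h
          simp only [hD, Finset.mem_filter, Finset.mem_product] at h ⊢
          rw [h.1.2]
        · intros; rfl
        · intros; rfl
    · rw [Finset.disjoint_left]
      intro p hp hq
      simp only [Finset.mem_filter] at hp hq
      omega
  set P := PsiN N
  have : Psi * expand 3 three_ne_zero Psi -
    (expand 4 four_ne_zero Psi + X * expand 12 (by norm_num) Psi) =
    (Psi - P) * expand 3 three_ne_zero Psi +
    (expand 3 three_ne_zero Psi - expand 3 three_ne_zero P) * P
    - (expand 4 four_ne_zero Psi - expand 4 four_ne_zero P)
    - (expand 12 (by norm_num) Psi - expand 12 (by norm_num) P) * X +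
    (P * expand 3 three_ne_zero P -
    (expand 4 four_ne_zero P + X * expand 12 (by norm_num) P)) := by ring
  rw [this]
  exact dvd_add (dvd_sub (dvd_sub (dvd_add (hP.mul_right _) (h3.mul_right _)) h4)
    (h12.mul_right _)) main

end Stmt11

open PowerSeries
namespace Stmt11

lemma coeff_eta_expand_six (n : ℕ)
    (h : ∀ k l : ℤ, 2 * (n : ℤ) ≠ k * (3 * k - 1) + 6 * (l * (3 * l - 1)))
    (R : Type*) [CommRing R] :
    coeff n (pentagonalSeries R * expand 6 (by norm_num) (pentagonalSeries R)) = 0 := by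
  rw [coeff_mul]
  apply Finset.sum_eq_zero
  rintro ⟨i, j⟩ hij
  rw [Finset.HasAntidiagonal.mem_antidiagonal] at hij
  dsimp only at *
  by_cases hi : i ∈ Set.range pentagonal
  · by_cases hj : 6 ∣ j
    · obtain ⟨j, rfl⟩ := hj
      rw [coeff_expand_mul]
      by_cases hj : j ∈ Set.range pentagonal
      · exfalso
        obtain ⟨k, rfl⟩ := hi
        obtain ⟨l, rfl⟩ := hj
        apply h k l
        rw [← two_mul_natCast_pentagonal, ← two_mul_natCast_pentagonal, ← hij]
        push_cast; ring
      · rw [coeff_pentagonalSeries_eq_zero _ hj, mul_zero]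
    · rw [coeff_expand_of_not_dvd _ _ _ hj, mul_zero]
  · rw [coeff_pentagonalSeries_eq_zero _ hi, zero_mul]

lemma expand_expand {R : Type*} [CommRing R] (p q r : ℕ) (hp : p ≠ 0) (hq : q ≠ 0) (hr : r ≠ 0)
    (h : r = p * q) (f : R⟦X⟧) : expand p hp (expand q hq f) = expand r hr f := by
  subst h
  rw [expand_mul p hp q hq]

lemma coeff_two (n : ℕ)
    (h : ∀ k l : ℤ, 2 * (n : ℤ) ≠ k * (3 * k - 1) + 6 * (l * (3 * l - 1)))
    (e : (ZMod 2)⟦X⟧)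
    (he : e * expand 3 three_ne_zero (pentagonalSeries (ZMod 2)) = pentagonalSeries (ZMod 2)) :
    coeff (4 * n + 1) (e * expand 2 two_ne_zero Psi) = 0 := by
  set η := pentagonalSeries (ZMod 2) with hη
  set η3 := expand 3 three_ne_zero η with hη3
  have f4 : ∀ f : (ZMod 2)⟦X⟧, expand 4 four_ne_zero f = f ^ 4 := by
    intro f
    rw [← expand_expand 2 2 4 two_ne_zero two_ne_zero four_ne_zero rfl, frob, frob]; ring
  have u3 : IsUnit η3 := by
    rw [isUnit_iff_constantCoeff, hη3, constantCoeff_expand, const_eta]; exact isUnit_one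
  have hPsi3 : expand 3 three_ne_zero Psi = η3 ^ 3 := by rw [Psi_eq, map_pow]
  have th := theta
  rw [Psi_eq, map_pow, ← hη, ← hη3] at th
  have key : e * expand 2 two_ne_zero Psi = expand 4 four_ne_zero (e * Psi) +
      X * expand 4 four_ne_zero (e * expand 3 three_ne_zero Psi) := by
    apply (u3.pow 4).mul_right_cancel
    rw [map_mul, map_mul, expand_expand 4 3 12 _ _ (by norm_num) rfl, Psi_eq]
    rw [f4 e, frob, add_mul, show X * (e ^ 4 * expand 12 (by norm_num) (η ^ 3)) * η3 ^ 4 =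
      (e * η3) ^ 4 * (X * expand 12 (by norm_num) (η ^ 3)) by ring,
      show e ^ 4 * expand 4 four_ne_zero (η ^ 3) * η3 ^ 4 =
      (e * η3) ^ 4 * expand 4 four_ne_zero (η ^ 3) by ring, ← mul_add, ← th, he]
    calc e * (η ^ 3) ^ 2 * η3 ^ 4 = (e * η3) * (η ^ 6 * η3 ^ 3) := by ring
      _ = _ := by rw [he]; ring
  rw [key, map_add, coeff_expand_of_not_dvd _ _ _ (by omega), zero_add, coeff_succ_X_mul,
    coeff_expand_mul, hPsi3]
  rw [show e * η3 ^ 3 = (e * η3) * η3 ^ 2 by ring, he, ← frob,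
    expand_expand 2 3 6 _ _ (by norm_num) rfl]
  exact coeff_eta_expand_six n h _

open Classical in
noncomputable def Sq : (ZMod 2)⟦X⟧ := mk fun n => if n ≠ 0 ∧ IsSquare n then 1 else 0

lemma coeff_mul_expand4 {R : Type*} [CommRing R] (e w : R⟦X⟧) (hw : ∀ m, coeff (4 * m + 1) w = 0)
    (m : ℕ) : coeff (4 * m + 1) (expand 4 four_ne_zero e * w) = 0 := by
  rw [coeff_mul]
  apply Finset.sum_eq_zero
  rintro ⟨i, j⟩ hij
  rw [Finset.HasAntidiagonal.mem_antidiagonal] at hij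
  dsimp only at *
  by_cases hi : 4 ∣ i
  · obtain ⟨i, rfl⟩ := hi
    rw [show j = 4 * (m - i) + 1 by omega, hw, mul_zero]
  · rw [coeff_expand_of_not_dvd _ _ _ hi, zero_mul]

lemma sq_mod4 (n : ℕ) (h : IsSquare n) : n % 4 = 0 ∨ n % 4 = 1 := by
  obtain ⟨r, rfl⟩ := h
  have : r % 4 < 4 := Nat.mod_lt _ (by norm_num)
  rw [Nat.mul_mod]
  interval_cases r % 4 <;> simp

lemma W_coeff (m : ℕ) : coeff (4 * m + 1) (Sq + Sq ^ 2 + expand 3 three_ne_zero Sq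
    + (expand 3 three_ne_zero Sq) ^ 2 - X * expand 8 (by norm_num) Psi) = 0 := by
  rw [← frob, ← frob, expand_expand 2 3 6 _ _ (by norm_num) rfl]
  rw [map_sub, map_add, map_add, map_add, coeff_succ_X_mul,
    coeff_expand_of_not_dvd 2 _ _ (by omega), coeff_expand_of_not_dvd 6 _ _ (by omega)]
  have h3 : coeff (4 * m + 1) (expand 3 three_ne_zero Sq) = 0 := by
    by_cases h : 3 ∣ 4 * m + 1
    · obtain ⟨k, hk⟩ := h
      rw [hk, coeff_expand_mul, Sq, coeff_mk, if_neg]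
      rintro ⟨_, hs⟩
      have := sq_mod4 k hs
      omega
    · rw [coeff_expand_of_not_dvd _ _ _ h]
  rw [h3, add_zero, add_zero, add_zero, sub_eq_zero, Sq, coeff_mk]
  by_cases hs : IsSquare (4 * m + 1)
  · rw [if_pos ⟨by omega, hs⟩]
    obtain ⟨r, hr⟩ := hs
    obtain ⟨a, rfl⟩ : ∃ a, r = 2 * a + 1 := by
      rcases Nat.even_or_odd' r with ⟨c, rfl | rfl⟩
      · exfalso
        have : 4 * m + 1 = 4 * (c * c) := by rw [hr]; ring
        omega
      · exact ⟨c, rfl⟩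
    have : 4 * m = 8 * T a := by
      have := two_T a
      nlinarith
    rw [this, coeff_expand_mul, Psi, coeff_mk, if_pos ⟨a, rfl⟩]
  · rw [if_neg (fun h => hs h.2)]
    symm
    by_cases h8 : 8 ∣ 4 * m
    · obtain ⟨k, hk⟩ := h8
      rw [hk, coeff_expand_mul, Psi, coeff_mk, if_neg]
      rintro ⟨a, rfl⟩
      apply hs
      refine ⟨2 * a + 1, ?_⟩
      rw [hk]
      have := two_T a
      nlinarith
    · rw [coeff_expand_of_not_dvd _ _ _ h8]

lemma final_two (n : ℕ)
    (h : ∀ k l : ℤ, 2 * (n : ℤ) ≠ k * (3 * k - 1) + 6 * (l * (3 * l - 1)))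
    (E : (ZMod 2)⟦X⟧)
    (hE : E * expand 12 (by norm_num) (pentagonalSeries (ZMod 2)) =
      expand 4 (by norm_num) (pentagonalSeries (ZMod 2))) :
    coeff (16 * n + 5) (E * (Sq + Sq ^ 2 + expand 3 three_ne_zero Sq
    + (expand 3 three_ne_zero Sq) ^ 2)) = 0 := by
  have u3 : IsUnit (expand 3 three_ne_zero (pentagonalSeries (ZMod 2))) := by
    rw [isUnit_iff_constantCoeff, constantCoeff_expand, const_eta]; exact isUnit_one
  obtain ⟨e, he⟩ : ∃ e, e * expand 3 three_ne_zero (pentagonalSeries (ZMod 2)) =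
      pentagonalSeries (ZMod 2) := by
    obtain ⟨v, hv⟩ := u3.exists_left_inv
    exact ⟨pentagonalSeries (ZMod 2) * v, by rw [mul_assoc, hv, mul_one]⟩
  have u12 : IsUnit (expand 12 (by norm_num) (pentagonalSeries (ZMod 2))) := by
    rw [isUnit_iff_constantCoeff, constantCoeff_expand, const_eta]; exact isUnit_one
  have hEe : E = expand 4 four_ne_zero e := by
    apply u12.mul_right_cancel
    rw [hE, ← expand_expand 4 3 12 four_ne_zero three_ne_zero _ rfl, ← map_mul, he]
  have e1 : Sq + Sq ^ 2 + expand 3 three_ne_zero Sq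
    + (expand 3 three_ne_zero Sq) ^ 2 = (Sq + Sq ^ 2 + expand 3 three_ne_zero Sq
    + (expand 3 three_ne_zero Sq) ^ 2 - X * expand 8 (by norm_num) Psi) +
      X * expand 8 (by norm_num) Psi := by ring
  rw [e1, mul_add, map_add, hEe]
  have h1 := coeff_mul_expand4 e _ W_coeff (4 * n + 1)
  rw [show 4 * (4 * n + 1) + 1 = 16 * n + 5 by ring] at h1
  rw [h1, zero_add, ← mul_assoc, mul_comm _ X, mul_assoc,
    show 16 * n + 5 = 4 * (4 * n + 1) + 1 by ring, coeff_succ_X_mul,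
    ← expand_expand 4 2 8 four_ne_zero two_ne_zero _ rfl, ← map_mul, coeff_expand_mul]
  exact coeff_two n h e he

lemma card_div (n : ℕ) : ((Nat.divisors n).card : ZMod 2) = coeff n Sq := by
  rw [Sq, coeff_mk]
  by_cases hn : n = 0
  · simp [hn]
  have s0 : ∑ d ∈ n.divisors with ¬ (d * d = n), (1 : ZMod 2) = 0 := by
    apply Finset.sum_involution (fun d _ => n / d)
    · intro p _; decide
    · intro d hd _ h
      simp only [Finset.mem_filter, Nat.mem_divisors] at hd
      apply hd.2
      nth_rewrite 1 [← h]
      exact Nat.div_mul_cancel hd.1.1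
    · intro d hd
      simp only [Finset.mem_filter, Nat.mem_divisors] at hd ⊢
      refine ⟨⟨Nat.div_dvd_of_dvd hd.1.1, hn⟩, ?_⟩
      intro h
      apply hd.2
      have h1 := Nat.div_mul_cancel hd.1.1
      have : n / d = d := by
        have hpos : 0 < n / d := Nat.div_pos (Nat.le_of_dvd (Nat.pos_of_ne_zero hn) hd.1.1)
          (Nat.pos_of_dvd_of_pos hd.1.1 (Nat.pos_of_ne_zero hn))
        exact Nat.eq_of_mul_eq_mul_left hpos (h.trans h1.symm)
      rw [this] at h1
      exact h1
    · intro d hd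
      simp only [Finset.mem_filter, Nat.mem_divisors] at hd
      exact Nat.div_div_self hd.1.1 hn
  rw [Finset.cast_card, ← Finset.sum_filter_add_sum_filter_not _ (fun d => d * d = n), s0, add_zero]
  split_ifs with h
  · obtain ⟨_, r, rfl⟩ := h
    rw [Finset.sum_eq_single_of_mem r]
    · simp only [Finset.mem_filter, Nat.mem_divisors]
      exact ⟨⟨dvd_mul_right _ _, hn⟩, trivial⟩
    · intro b hb hbr
      simp only [Finset.mem_filter] at hb
      exact absurd (Nat.mul_self_inj.1 hb.2) hbr
  · apply Finset.sum_eq_zero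
    intro d hd
    simp only [Finset.mem_filter] at hd
    exact absurd ⟨hn, d, hd.2.symm⟩ h

end Stmt11

open PowerSeries
namespace Stmt11

noncomputable def uu (j : ℕ) : ℤ⟦X⟧ := expand (j + 1) (Nat.succ_ne_zero j) (X * mk 1)

lemma uu_mul (j : ℕ) : (1 - X ^ (j + 1)) * uu j = X ^ (j + 1) := by
  have h : (1 - X) * (X * mk 1 : ℤ⟦X⟧) = X := by
    have := mk_one_mul_one_sub_eq_one ℤ
    linear_combination X * this
  have := congrArg (expand (j + 1) (Nat.succ_ne_zero j)) h
  rw [map_mul, map_sub, map_one, expand_X] at this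
  exact this

lemma coeff_uu (j m : ℕ) : coeff m (uu j) = if j + 1 ∣ m ∧ m ≠ 0 then 1 else 0 := by
  rw [uu, coeff_expand]
  by_cases h : j + 1 ∣ m
  · obtain ⟨k, rfl⟩ := h
    rw [if_pos (dvd_mul_right _ _), Nat.mul_div_cancel_left _ (Nat.succ_pos j)]
    cases k with
    | zero => simp
    | succ k => rw [coeff_succ_X_mul, coeff_mk, if_pos]; · rfl
                exact ⟨dvd_mul_right _ _, by positivity⟩
  · rw [if_neg h, if_neg (fun h' => h h'.1)]

noncomputable def LL : ℤ⟦X⟧ := mk fun n => (n.divisors.card : ℤ)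

lemma LL_trunc (N : ℕ) : (X : ℤ⟦X⟧) ^ (N + 1) ∣ LL - ∑ j ∈ Finset.range N, uu j := by
  rw [X_pow_dvd_iff]
  intro m hm
  rw [map_sub, map_sum, sub_eq_zero, LL, coeff_mk]
  simp only [coeff_uu]
  rw [Finset.sum_boole]
  norm_cast
  symm
  apply Finset.card_bij (fun j _ => j + 1)
  · intro j hj
    simp only [Finset.mem_filter] at hj
    exact Nat.mem_divisors.2 hj.2
  · intro a _ b _ h; omega
  · intro d hd
    have hd' := Nat.mem_divisors.1 hd
    have h1 := Nat.le_of_dvd (Nat.pos_of_ne_zero hd'.2) hd'.1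
    have h2 := Nat.pos_of_mem_divisors hd
    refine ⟨d - 1, ?_, by omega⟩
    simp only [Finset.mem_filter, Finset.mem_range]
    rw [show d - 1 + 1 = d by omega]
    exact ⟨by omega, hd'⟩

lemma Q_sq (N : ℕ) : ∃ Y : ℤ⟦X⟧, Q ℤ N ^ 2 =
    expand 2 two_ne_zero (Q ℤ N) * (1 + 2 * ∑ j ∈ Finset.range N, uu j) + 4 * Y := by
  induction N with
  | zero => exact ⟨0, by simp [Q]⟩
  | succ N ih =>
    obtain ⟨Y, hY⟩ := ih
    have hu := uu_mul N
    rw [Q_succ, Finset.sum_range_succ, map_mul, map_sub, map_one, map_pow, expand_X, ← pow_mul]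
    set A := expand 2 two_ne_zero (Q ℤ N)
    set S := ∑ j ∈ Finset.range N, uu j
    set u := uu N
    rw [show 2 * (N + 1) = (N + 1) + (N + 1) by ring, pow_add]
    set x : ℤ⟦X⟧ := X ^ (N + 1)
    refine ⟨Y * (1 - x) ^ 2 - A * (1 + 2 * S) * x + A * (1 - x * x) * (S * u), ?_⟩
    linear_combination (1 - x) ^ 2 * hY - 2 * A * (1 + 2 * S) * (1 + x) * hu

/-- `η² ≡ η(q²) (1 + 2 ∑ d(n) q^n)` modulo 4. -/
lemma eta_sq : ∃ Y : ℤ⟦X⟧, pentagonalSeries ℤ ^ 2 =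
    expand 2 two_ne_zero (pentagonalSeries ℤ) * (1 + 2 * LL) + 4 * Y := by
  have key : ∀ n, (4 : ℤ) ∣ coeff n (pentagonalSeries ℤ ^ 2 -
    expand 2 two_ne_zero (pentagonalSeries ℤ) * (1 + 2 * LL)) := by
    intro n
    obtain ⟨Y, hY⟩ := Q_sq n
    obtain ⟨a, ha⟩ := eta_trunc ℤ n
    obtain ⟨b, hb⟩ := expand_dvd ℤ 2 two_ne_zero (n + 1) (n + 1) (by omega) _ _ (eta_trunc ℤ n)
    obtain ⟨c, hc⟩ := LL_trunc n
    set η := pentagonalSeries ℤ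
    set η2 := expand 2 two_ne_zero η
    set q := Q ℤ n
    set q2 := expand 2 two_ne_zero q
    set S := ∑ j ∈ Finset.range n, uu j
    have : η ^ 2 - η2 * (1 + 2 * LL) = C 4 * Y +
        X ^ (n + 1) * (a * (η + q) - b * (1 + 2 * LL) - 2 * q2 * c) := by
      rw [map_ofNat]
      linear_combination hY + (η + q) * ha - (1 + 2 * LL) * hb - 2 * q2 * hc
    rw [this, map_add, coeff_C_mul, coeff_X_pow_mul', if_neg (by omega), add_zero]
    exact dvd_mul_right _ _
  choose y hy using key
  refine ⟨mk y, ?_⟩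
  rw [← sub_eq_iff_eq_add']
  ext n
  rw [hy, show (4 : ℤ⟦X⟧) = C 4 by rw [map_ofNat], coeff_C_mul, coeff_mk]

/-! generating function -/

def AS (S : Finset (ℕ × ℕ)) (n : ℕ) : Set (Multiset (ℕ × ℕ)) :=
  {M | (∀ x ∈ M, x ∈ S) ∧ (M.map Prod.fst).sum = n}

lemma AS_finite (S : Finset (ℕ × ℕ)) (hS : ∀ x ∈ S, 1 ≤ x.1) (n : ℕ) : (AS S n).Finite := by
  apply (Set.finite_Iic (n • S.val)).subset
  rintro M ⟨h1, h2⟩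
  rw [Set.mem_Iic, Multiset.le_iff_count]
  intro x
  by_cases hx : x ∈ M
  · rw [Multiset.count_nsmul, Multiset.count_eq_one_of_mem S.nodup (h1 x hx), mul_one]
    have hc : Multiset.card M ≤ n := by
      rw [← h2]
      have := Multiset.card_nsmul_le_sum (s := M.map Prod.fst) (a := 1) (by
        intro y hy
        obtain ⟨z, hz, rfl⟩ := Multiset.mem_map.1 hy
        exact hS z (h1 z hz))
      simpa using this
    exact (Multiset.count_le_card x M).trans hc
  · rw [Multiset.count_eq_zero_of_notMem hx]; exact Nat.zero_le _

noncomputable def GS (S : Finset (ℕ × ℕ)) : ℤ⟦X⟧ := mk fun n => ((AS S n).ncard : ℤ)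

lemma AS_insert_lt (S : Finset (ℕ × ℕ)) (x : ℕ × ℕ) (n : ℕ)
    (hn : n < x.1) : AS (insert x S) n = AS S n := by
  ext M
  simp only [AS, Set.mem_ofPred_eq]
  refine and_congr_left fun h => forall₂_congr fun y hy => ?_
  rw [Finset.mem_insert]
  refine ⟨fun h' => h'.resolve_left ?_, Or.inr⟩
  rintro rfl
  have := Multiset.le_sum_of_mem (Multiset.mem_map_of_mem Prod.fst hy)
  omega

lemma AS_insert_ge (S : Finset (ℕ × ℕ)) (x : ℕ × ℕ) (n : ℕ) :
    AS (insert x S) (n + x.1) = AS S (n + x.1) ∪ (fun M => x ::ₘ M) '' AS (insert x S) n := by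
  ext M
  simp only [AS, Set.mem_ofPred_eq, Set.mem_union, Set.mem_image]
  constructor
  · rintro ⟨h1, h2⟩
    by_cases hx : x ∈ M
    · right
      obtain ⟨M', rfl⟩ := Multiset.exists_cons_of_mem hx
      refine ⟨M', ⟨fun y hy => h1 y (Multiset.mem_cons_of_mem hy), ?_⟩, rfl⟩
      rw [Multiset.map_cons, Multiset.sum_cons] at h2
      omega
    · left
      refine ⟨fun y hy => (Finset.mem_insert.1 (h1 y hy)).resolve_left ?_, h2⟩
      rintro rfl
      exact hx hy
  · rintro (⟨h1, h2⟩ | ⟨M', ⟨h1, h2⟩, rfl⟩)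
    · exact ⟨fun y hy => Finset.mem_insert_of_mem (h1 y hy), h2⟩
    · refine ⟨?_, ?_⟩
      · intro y hy
        rcases Multiset.mem_cons.1 hy with rfl | hy
        · exact Finset.mem_insert_self _ _
        · exact h1 y hy
      · rw [Multiset.map_cons, Multiset.sum_cons, h2, add_comm]

lemma GS_insert (S : Finset (ℕ × ℕ)) (x : ℕ × ℕ) (hx : x ∉ S) (h1 : 1 ≤ x.1)
    (hS : ∀ x ∈ S, 1 ≤ x.1) : GS (insert x S) * (1 - X ^ x.1) = GS S := by
  have hS' : ∀ y ∈ insert x S, 1 ≤ y.1 := by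
    intro y hy
    rcases Finset.mem_insert.1 hy with rfl | hy
    · exact h1
    · exact hS y hy
  ext n
  rw [mul_sub, mul_one, map_sub, coeff_mul_X_pow']
  simp only [GS, coeff_mk]
  split_ifs with h
  · obtain ⟨k, rfl⟩ : ∃ k, n = k + x.1 := ⟨n - x.1, by omega⟩
    rw [Nat.add_sub_cancel, AS_insert_ge, Set.ncard_union_eq _ (AS_finite S hS _)
      ((AS_finite _ hS' _).image _),
      Set.ncard_image_of_injective _ (fun _ _ h => (Multiset.cons_inj_right x).1 h)]
    · push_cast; ring
    · rw [Set.disjoint_left]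
      rintro M ⟨hM, _⟩ ⟨M', _, rfl⟩
      exact hx (hM x (Multiset.mem_cons_self _ _))
  · rw [AS_insert_lt _ _ _ (by omega), sub_zero]

lemma GS_prod (S : Finset (ℕ × ℕ)) (hS : ∀ x ∈ S, 1 ≤ x.1) :
    GS S * ∏ x ∈ S, (1 - X ^ x.1) = 1 := by
  induction S using Finset.induction_on with
  | empty =>
    rw [Finset.prod_empty, mul_one]
    ext n
    rw [GS, coeff_mk, coeff_one]
    split_ifs with h
    · have : AS ∅ n = {0} := by
        ext M
        simp only [AS, Set.mem_ofPred_eq, Set.mem_singleton_iff, h, Finset.notMem_empty]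
        constructor
        · rintro ⟨h1, _⟩; exact Multiset.eq_zero_of_forall_notMem h1
        · rintro rfl; simp
      simp [this]
    · have : AS ∅ n = ∅ := by
        ext M
        simp only [AS, Set.mem_ofPred_eq, Finset.notMem_empty, Set.mem_empty_iff_false, iff_false]
        rintro ⟨h1, h2⟩
        rw [Multiset.eq_zero_of_forall_notMem h1] at h2
        simp at h2; omega
      simp [this]
  | insert x S hx ih =>
    have hS' : ∀ x ∈ S, 1 ≤ x.1 := fun y hy => hS y (Finset.mem_insert_of_mem hy)
    rw [Finset.prod_insert hx, ← mul_assoc, GS_insert S x hx (hS x (Finset.mem_insert_self _ _)) hS',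
      ih hS']

def J (M : ℕ) : Finset ℕ := (Finset.range (6 * M)).filter (fun j => ¬ 3 ∣ j ∧ ¬ 2 ∣ j)

noncomputable def DD (M : ℕ) : ℤ⟦X⟧ := ∏ j ∈ J M, (1 - X ^ j)

lemma DD_succ (M : ℕ) : DD (M + 1) = DD M * ((1 - X ^ (6 * M + 1)) * (1 - X ^ (6 * M + 5))) := by
  unfold DD J
  rw [Finset.prod_filter, Finset.prod_filter, show 6 * (M + 1) = 6 * M + 5 + 1 by ring]
  rw [Finset.prod_range_succ, Finset.prod_range_succ, Finset.prod_range_succ,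
    Finset.prod_range_succ, Finset.prod_range_succ, Finset.prod_range_succ]
  rw [if_neg (show ¬ (¬ 3 ∣ 6 * M ∧ ¬ 2 ∣ 6 * M) by omega),
    if_pos (show (¬ 3 ∣ 6 * M + 1 ∧ ¬ 2 ∣ 6 * M + 1) by omega),
    if_neg (show ¬ (¬ 3 ∣ 6 * M + 2 ∧ ¬ 2 ∣ 6 * M + 2) by omega),
    if_neg (show ¬ (¬ 3 ∣ 6 * M + 3 ∧ ¬ 2 ∣ 6 * M + 3) by omega),
    if_neg (show ¬ (¬ 3 ∣ 6 * M + 4 ∧ ¬ 2 ∣ 6 * M + 4) by omega),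
    if_pos (show (¬ 3 ∣ 6 * M + 5 ∧ ¬ 2 ∣ 6 * M + 5) by omega)]
  ring

lemma DD_eq (M : ℕ) : Q ℤ (6 * M) * expand 6 (by norm_num) (Q ℤ M) =
    DD M * expand 2 two_ne_zero (Q ℤ (3 * M)) * expand 3 three_ne_zero (Q ℤ (2 * M)) := by
  induction M with
  | zero => simp [Q, DD, J]
  | succ M ih =>
    rw [show 6 * (M + 1) = 6 * M + 1 + 1 + 1 + 1 + 1 + 1 by ring,
      show 3 * (M + 1) = 3 * M + 1 + 1 + 1 by ring, show 2 * (M + 1) = 2 * M + 1 + 1 by ring, DD_succ]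
    simp only [Q_succ, map_mul, map_sub, map_one, map_pow, expand_X, ← pow_mul]
    rw [show 6 * M + 1 + 1 + 1 + 1 + 1 + 1 = 6 * M + 6 by ring,
      show 6 * M + 1 + 1 + 1 + 1 + 1 = 6 * M + 5 by ring,
      show 6 * M + 1 + 1 + 1 + 1 = 6 * M + 4 by ring,
      show 6 * M + 1 + 1 + 1 = 6 * M + 3 by ring,
      show 6 * M + 1 + 1 = 6 * M + 2 by ring,
      show 6 * (M + 1) = 6 * M + 6 by ring,
      show 2 * (3 * M + 1 + 1 + 1) = 6 * M + 6 by ring,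
      show 2 * (3 * M + 1 + 1) = 6 * M + 4 by ring,
      show 2 * (3 * M + 1) = 6 * M + 2 by ring,
      show 3 * (2 * M + 1 + 1) = 6 * M + 6 by ring,
      show 3 * (2 * M + 1) = 6 * M + 3 by ring]
    generalize (X : ℤ⟦X⟧) ^ (6 * M + 1) = x1
    generalize (X : ℤ⟦X⟧) ^ (6 * M + 2) = x2
    generalize (X : ℤ⟦X⟧) ^ (6 * M + 3) = x3
    generalize (X : ℤ⟦X⟧) ^ (6 * M + 4) = x4
    generalize (X : ℤ⟦X⟧) ^ (6 * M + 5) = x5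
    generalize (X : ℤ⟦X⟧) ^ (6 * M + 6) = x6
    linear_combination ((1 - x1) * (1 - x2) * (1 - x3) * (1 - x4) * (1 - x5) * (1 - x6) ^ 2) * ih

end Stmt11


open PowerSeries
namespace Stmt11

lemma colored_eq (M n : ℕ) (hn : n < 6 * M) :
    coloredRegular 4 3 2 n = (AS (J M ×ˢ Finset.range 4) n).ncard := by
  have : AS (J M ×ˢ Finset.range 4) n = {M : Multiset (ℕ × ℕ) |
    (∀ x ∈ M, ¬ 3 ∣ x.1 ∧ ¬ 2 ∣ x.1 ∧ x.2 < 4) ∧ (M.map Prod.fst).sum = n} := by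
    ext A
    simp only [AS, Set.mem_ofPred_eq]
    refine and_congr_left fun h => forall₂_congr fun y hy => ?_
    have := Multiset.le_sum_of_mem (Multiset.mem_map_of_mem Prod.fst hy)
    simp only [J, Finset.mem_product, Finset.mem_filter, Finset.mem_range]
    constructor
    · rintro ⟨⟨_, h1, h2⟩, h3⟩; exact ⟨h1, h2, h3⟩
    · rintro ⟨h1, h2, h3⟩; exact ⟨⟨by omega, h1, h2⟩, h3⟩
  rw [this]
  rfl

noncomputable def FF : ℤ⟦X⟧ := mk fun n => (coloredRegular 4 3 2 n : ℤ)

lemma dvd_mul_sub {R : Type*} [CommRing R] {x a b c d : R} (h : x ∣ a - b) (h' : x ∣ c - d) :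
    x ∣ a * c - b * d := by
  have : a * c - b * d = (a - b) * c + b * (c - d) := by ring
  rw [this]
  exact dvd_add (h.mul_right _) (h'.mul_left _)

lemma dvd_pow_four {R : Type*} [CommRing R] {x a b : R} (h : x ∣ a - b) :
    x ∣ a ^ 4 - b ^ 4 := h.trans (sub_dvd_pow_sub_pow a b 4)

lemma FF_eq : FF * (pentagonalSeries ℤ * expand 6 (by norm_num) (pentagonalSeries ℤ)) ^ 4 =
    (expand 2 two_ne_zero (pentagonalSeries ℤ) *
      expand 3 three_ne_zero (pentagonalSeries ℤ)) ^ 4 := by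
  apply eq_of_dvd
  intro N
  set M := N + 1 with hM
  have hpow : (X : ℤ⟦X⟧) ^ (N + 1) ∣ X ^ (6 * M) := pow_dvd_pow _ (by omega)
  have hF : (X : ℤ⟦X⟧) ^ (N + 1) ∣ FF - GS (J M ×ˢ Finset.range 4) := by
    rw [X_pow_dvd_iff]
    intro m hm
    rw [map_sub, FF, GS, coeff_mk, coeff_mk, colored_eq M m (by omega), sub_self]
  have hG := GS_prod (J M ×ˢ Finset.range 4) (by
    intro x hx
    simp only [J, Finset.mem_product, Finset.mem_filter] at hx
    have := hx.1.2
    omega)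
  rw [Finset.prod_product] at hG
  simp only [Finset.prod_const, Finset.card_range, Finset.prod_pow] at hG
  have hD := DD_eq M
  rw [show ∏ j ∈ J M, (1 - X ^ j : ℤ⟦X⟧) = DD M from rfl] at hG
  have q1 : (X : ℤ⟦X⟧) ^ (N + 1) ∣ pentagonalSeries ℤ - Q ℤ (6 * M) :=
    (pow_dvd_pow _ (by omega)).trans (eta_trunc ℤ (6 * M))
  have q2 := expand_dvd ℤ 2 two_ne_zero (3 * M + 1) (N + 1) (by omega) _ _ (eta_trunc ℤ (3 * M))
  have q3 := expand_dvd ℤ 3 three_ne_zero (2 * M + 1) (N + 1) (by omega) _ _ (eta_trunc ℤ (2 * M))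
  have q6 := expand_dvd ℤ 6 (by norm_num) (M + 1) (N + 1) (by omega) _ _ (eta_trunc ℤ M)
  have key : GS (J M ×ˢ Finset.range 4) * (Q ℤ (6 * M) * expand 6 (by norm_num) (Q ℤ M)) ^ 4 =
      (expand 2 two_ne_zero (Q ℤ (3 * M)) * expand 3 three_ne_zero (Q ℤ (2 * M))) ^ 4 := by
    rw [hD]
    linear_combination (expand 2 two_ne_zero (Q ℤ (3 * M)) *
      expand 3 three_ne_zero (Q ℤ (2 * M))) ^ 4 * hG
  have hl := dvd_mul_sub hF (dvd_pow_four (dvd_mul_sub q1 q6))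
  have hr := dvd_pow_four (dvd_mul_sub q2 q3)
  rw [key] at hl
  have := dvd_sub hl hr
  rwa [sub_sub_sub_cancel_right] at this

lemma map_LL : LL.map (Int.castRingHom (ZMod 2)) = Sq := by
  ext n
  rw [coeff_map, LL, coeff_mk, ← card_div]
  simp

lemma eight_zero : (8 : (ZMod 8)⟦X⟧) = 0 := by
  have : (8 : (ZMod 8)⟦X⟧) = C (8 : ZMod 8) := by rw [map_ofNat]
  rw [this, show (8 : ZMod 8) = 0 from rfl, map_zero]

lemma isUnit_expand_eta (R : Type*) [CommRing R] (k : ℕ) (hk : k ≠ 0) :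
    IsUnit (expand k hk (pentagonalSeries R)) := by
  rw [isUnit_iff_constantCoeff, constantCoeff_expand, const_eta]; exact isUnit_one

/-- The relation `F = E (1 + 4 W)` modulo 8. -/
lemma eight_rel : ∃ E : ℤ⟦X⟧,
    E * (expand 3 three_ne_zero (pentagonalSeries ℤ)) ^ 2 = pentagonalSeries ℤ ^ 2 ∧
    FF.map (Int.castRingHom (ZMod 8)) = (expand 2 two_ne_zero E * (1 + 4 * (LL + LL ^ 2 +
      expand 3 three_ne_zero LL + (expand 3 three_ne_zero LL) ^ 2))).map
        (Int.castRingHom (ZMod 8)) := by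
  obtain ⟨v, hv⟩ := (isUnit_expand_eta ℤ 3 three_ne_zero).exists_left_inv
  obtain ⟨Y, hY⟩ := eta_sq
  have hF := FF_eq
  refine ⟨pentagonalSeries ℤ ^ 2 * v ^ 2, by rw [mul_assoc, ← mul_pow, hv, one_pow, mul_one], ?_⟩
  have hY3 := congrArg (expand 3 three_ne_zero) hY
  have hv2 := congrArg (expand 2 two_ne_zero) hv
  rw [map_mul, map_one, expand_expand 2 3 6 _ _ (by norm_num) rfl] at hv2
  rw [map_pow, map_add, map_mul, expand_expand 3 2 6 _ _ (by norm_num) rfl] at hY3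
  simp only [map_add, map_mul, map_one, map_ofNat, map_pow] at hY3 ⊢
  set η := pentagonalSeries ℤ
  set η2 := expand 2 two_ne_zero η
  set η3 := expand 3 three_ne_zero η
  set η6 := expand 6 (by norm_num) η
  set v2 := expand 2 two_ne_zero v
  set V := expand 3 three_ne_zero LL
  set Y3 := expand 3 three_ne_zero Y
  have u2 : IsUnit (map (Int.castRingHom (ZMod 8)) η2) :=
    (isUnit_expand_eta ℤ 2 two_ne_zero).map _
  have u6 : IsUnit (map (Int.castRingHom (ZMod 8)) η6) :=
    (isUnit_expand_eta ℤ 6 (by norm_num)).map _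
  set φ := map (Int.castRingHom (ZMod 8)) with hφ
  have h8 := eight_zero
  replace hF := congrArg φ hF
  replace hY := congrArg φ hY
  replace hY3 := congrArg φ hY3
  replace hv2 := congrArg φ hv2
  simp only [map_add, map_mul, map_one, map_ofNat, map_pow] at hF hY hY3 hv2 ⊢
  generalize φ η = a at *
  generalize φ η2 = b at *
  generalize φ η3 = c at *
  generalize φ η6 = d at *
  generalize φ v2 = w at *
  generalize φ FF = F at *
  generalize φ LL = L at *
  generalize φ V = K at *
  generalize φ Y = y at *
  generalize φ Y3 = z at *
  have ha : a ^ 4 = b ^ 2 * (1 + 2 * L) ^ 2 := by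
    linear_combination (a ^ 2 + b * (1 + 2 * L) + 4 * y) * hY + (b * (1 + 2 * L) * y + 2 * y ^ 2) * h8
  have hc : c ^ 4 = d ^ 2 * (1 + 2 * K) ^ 2 := by
    linear_combination (c ^ 2 + d * (1 + 2 * K) + 4 * z) * hY3 + (d * (1 + 2 * K) * z + 2 * z ^ 2) * h8
  have h1 : F * (1 + 2 * L) ^ 2 * d ^ 2 = b ^ 2 * (1 + 2 * K) ^ 2 := by
    apply ((u2.pow 2).mul (u6.pow 2)).mul_right_cancel
    linear_combination hF - F * d ^ 4 * ha + b ^ 4 * hc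
  have h2 : F * d ^ 2 = b ^ 2 * (1 + 4 * (L + L ^ 2 + K + K ^ 2)) := by
    linear_combination (1 + 2 * L) ^ 2 * h1 + (-F * d ^ 2 * (L + 3 * L ^ 2 + 4 * L ^ 3 + 2 * L ^ 4)
      + 2 * b ^ 2 * (L + L ^ 2) * (K + K ^ 2)) * h8
  calc F = F * d ^ 2 * w ^ 2 := by rw [mul_assoc, ← mul_pow, mul_comm d, hv2, one_pow, mul_one]
    _ = _ := by rw [h2]; ring

end Stmt11

open PowerSeries Stmt11

theorem stmt_11 (n : ℕ)
    (h : ∀ k l : ℤ, 2 * (n : ℤ) ≠ k * (3 * k - 1) + 6 * (l * (3 * l - 1))) :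
    coloredRegular 4 3 2 (16 * n + 5) ≡ 0 [MOD 8] := by
  obtain ⟨E, hE, hF⟩ := eight_rel
  set W := LL + LL ^ 2 + expand 3 three_ne_zero LL + (expand 3 three_ne_zero LL) ^ 2 with hW
  have hc := congrArg (coeff (16 * n + 5)) hF
  rw [coeff_map, coeff_map, FF, coeff_mk, mul_add, mul_one, map_add,
    coeff_expand_of_not_dvd _ _ _ (by omega), zero_add, ← mul_assoc, mul_comm _ (4 : ℤ⟦X⟧),
    mul_assoc, show (4 : ℤ⟦X⟧) = C 4 by rw [map_ofNat], coeff_C_mul] at hc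
  have h2 : Int.castRingHom (ZMod 2) (coeff (16 * n + 5) (expand 2 two_ne_zero E * W)) = 0 := by
    rw [← coeff_map, map_mul, hW]
    simp only [map_add, map_pow, map_expand, map_LL]
    apply final_two n h
    have hE' := congrArg (expand 2 two_ne_zero)
      (congrArg (PowerSeries.map (Int.castRingHom (ZMod 2))) hE)
    simp only [map_mul, map_pow, map_expand, map_eta] at hE'
    rw [expand_expand 2 3 6 _ _ (by norm_num) rfl, ← frob, ← frob,
      expand_expand 2 6 12 _ _ (by norm_num) rfl,
      expand_expand 2 2 4 _ _ (by norm_num) rfl] at hE'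
    exact hE'
  have h2' : (2 : ℤ) ∣ coeff (16 * n + 5) (expand 2 two_ne_zero E * W) :=
    (ZMod.intCast_zmod_eq_zero_iff_dvd _ 2).1 h2
  obtain ⟨t, ht⟩ := h2'
  rw [ht] at hc
  rw [← ZMod.natCast_eq_natCast_iff]
  have h3 : ((coloredRegular 4 3 2 (16 * n + 5) : ℕ) : ZMod 8) = ((4 * (2 * t) : ℤ) : ZMod 8) := by
    simpa using hc
  rw [h3]
  push_cast
  rw [← mul_assoc, show (4 * 2 : ZMod 8) = 0 from rfl, zero_mul]
end

section
/- Let p ≥ 5 be a prime with (−6/p) = −1 (Legendre symbol). Then for all nonnegative integers k and m with p ∤ m, b^4_{3,2}(16·p^{2k+1}·m + (2·p^{2k+2} + 1)/3) ≡ 0 (mod 8). -/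
namespace Colored

open PowerSeries Finset

/-- The Euler product `∏ (1 - q^n)` modulo 2. -/
noncomputable def U : (ZMod 2)⟦X⟧ := pentagonalSeries (ZMod 2)

/-- Partial products of the Euler product. -/
noncomputable def Un (n : ℕ) : (ZMod 2)⟦X⟧ := ∏ i ∈ range n, (1 - X ^ (i + 1))

/-- The series of `q^{j(j+1)/2}` modulo 2. -/
noncomputable def psi : (ZMod 2)⟦X⟧ := PowerSeries.mk fun n => if IsSquare (8 * n + 1) then 1 else 0

lemma Un_dvd (n M : ℕ) (h : n ≤ M) : X ^ n ∣ Un M - Un n := by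
  induction M, h using Nat.le_induction with
  | base => simp
  | succ M hM ih =>
    have : Un (M + 1) - Un n = (Un M - Un n) - X ^ (M + 1) * Un M := by
      unfold Un; rw [prod_range_succ]; ring
    rw [this]
    exact dvd_sub ih (Dvd.dvd.mul_right (pow_dvd_pow _ (by omega)) _)

lemma U_trunc (n : ℕ) : X ^ n ∣ Un n - U := by
  rw [PowerSeries.X_pow_dvd_iff]
  intro d hd
  obtain ⟨s0, hs0⟩ := Filter.eventually_atTop.1 (coeff_prod_one_sub_X_pow_eventually_eq (ZMod 2) d)
  obtain ⟨M, hM⟩ := s0.exists_nat_subset_range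
  have h1 := hs0 (range (max M n)) (hM.trans (range_mono (le_max_left _ _)))
  have h2 := (PowerSeries.X_pow_dvd_iff.1 (Un_dvd n (max M n) (le_max_right _ _))) d hd
  rw [map_sub, sub_eq_zero] at h2 ⊢
  rw [← h2]; exact h1

/-- Product of `1 - q^{2i+1}`. -/
noncomputable def Dn (n : ℕ) : (ZMod 2)⟦X⟧ := ∏ i ∈ range n, (1 - X ^ (2 * i + 1))
/-- Product of `1 - q^{2k}`, `s < k ≤ n`. -/
noncomputable def Rn (s n : ℕ) : (ZMod 2)⟦X⟧ := ∏ i ∈ Ico s n, (1 - X ^ (2 * i + 2))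

lemma Rn_succ_right {s n : ℕ} (h : s ≤ n) : Rn s (n + 1) = Rn s n * (1 - X ^ (2 * n + 2)) := by
  unfold Rn; rw [prod_Ico_succ_top h]

lemma Rn_succ_left {s n : ℕ} (h : s < n) : Rn s n = (1 - X ^ (2 * s + 2)) * Rn (s + 1) n := by
  unfold Rn; rw [prod_eq_prod_Ico_succ_bot h]

lemma Rn_self (n : ℕ) : Rn n n = 1 := by simp [Rn]

lemma Dn_succ (n : ℕ) : Dn (n + 1) = Dn n * (1 - X ^ (2 * n + 1)) := by
  unfold Dn; rw [prod_range_succ]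

lemma shanks_tel (n m : ℕ) (hm : m ≤ n) :
    ∑ s ∈ range (m + 1), (Dn s * Rn s (n + 1) * X ^ (s * (2 * n + 3))
      - (1 - X ^ (2 * n + 1)) * (Dn s * Rn s n * X ^ (s * (2 * n + 1)))) =
    Dn (m + 1) * Rn m n * X ^ ((m + 1) * (2 * n + 1)) := by
  induction m with
  | zero =>
    simp [Rn_succ_right, Dn_succ]
    ring
  | succ m ih =>
    rw [sum_range_succ, ih (by omega), Rn_succ_left (show m < n by omega),
      Rn_succ_right hm, Dn_succ (m + 1)]
    ring

lemma shanks (n : ℕ) :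
    Dn n * ∑ j ∈ range (2 * n), X ^ (j * (j + 1) / 2) =
      ∑ s ∈ range n, Dn s * Rn s n * X ^ (s * (2 * n + 1)) := by
  induction n with
  | zero => simp
  | succ n ih =>
    have h := shanks_tel n n le_rfl
    rw [sum_sub_distrib, ← mul_sum, sum_range_succ _ n, sum_range_succ _ n, Rn_self, ← ih] at h
    have e1 : 2 * n * (2 * n + 1) / 2 = n * (2 * n + 1) := by
      rw [mul_assoc]; simp
    have e2 : (2 * n + 1) * (2 * n + 1 + 1) / 2 = (n + 1) * (2 * n + 1) := by
      rw [show (2 * n + 1) * (2 * n + 1 + 1) = 2 * ((n + 1) * (2 * n + 1)) by ring]; simp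
    rw [show 2 * (n + 1) = 2 * n + 1 + 1 by ring, sum_range_succ, sum_range_succ, e1, e2,
      sum_range_succ, Dn_succ]
    rw [Dn_succ] at h
    rw [show 2 * n + 1 + 1 + 1 = 2 * n + 3 by ring]
    linear_combination -h

lemma two_eq_zero' : (2 : (ZMod 2)⟦X⟧) = 0 := by
  have : (2 : ZMod 2) = 0 := rfl
  have h := congrArg (PowerSeries.C (R := ZMod 2)) this
  rwa [map_zero, map_ofNat] at h

instance : CharP (ZMod 2)⟦X⟧ 2 := CharTwo.of_one_ne_zero_of_two_eq_zero one_ne_zero two_eq_zero'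

lemma Rn_zero (n : ℕ) : Rn 0 n = Un n ^ 2 := by
  unfold Rn Un
  rw [← prod_pow]
  simp only [Nat.Ico_zero_eq_range]
  refine prod_congr rfl fun i _ => ?_
  rw [CharTwo.sub_eq_add, CharTwo.sub_eq_add, CharTwo.add_sq]; ring

lemma Dn_Rn (n : ℕ) : Dn n * Rn 0 n = Un (2 * n) := by
  induction n with
  | zero => simp [Dn, Rn, Un]
  | succ n ih =>
    rw [Dn_succ, Rn_succ_right (Nat.zero_le n), show 2 * (n + 1) = 2 * n + 1 + 1 by ring]
    unfold Un at ih ⊢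
    rw [prod_range_succ, prod_range_succ, ← ih]; ring

lemma psi_trunc (n : ℕ) : X ^ n ∣ (∑ j ∈ range (2 * n), X ^ (j * (j + 1) / 2)) - psi := by
  rw [PowerSeries.X_pow_dvd_iff]
  intro d hd
  rw [map_sub, sub_eq_zero, map_sum, psi, coeff_mk]
  simp only [coeff_X_pow]
  have key : ∀ j : ℕ, d = j * (j + 1) / 2 ↔ 8 * d + 1 = (2 * j + 1) * (2 * j + 1) := by
    intro j
    have h2 : 2 ∣ j * (j + 1) := (Nat.even_mul_succ_self j).two_dvd
    obtain ⟨c, hc⟩ := h2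
    rw [hc]
    simp
    constructor
    · rintro rfl; nlinarith
    · intro h; nlinarith
  split_ifs with hsq
  · obtain ⟨r, hr⟩ := hsq
    have hodd : Odd r := by
      have : Odd (r * r) := by rw [← hr]; exact ⟨4 * d, by ring⟩
      exact (Nat.odd_mul.1 this).1
    obtain ⟨j, rfl⟩ := hodd
    rw [sum_eq_single j]
    · rw [if_pos ((key j).2 hr)]
    · intro b _ hb
      rw [if_neg]
      intro h
      rw [key, hr] at h
      have := Nat.mul_self_inj.1 h
      omega
    · intro h
      simp at h
      exfalso
      nlinarith
  · apply sum_eq_zero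
    intro j _
    rw [if_neg]
    intro h
    rw [key] at h
    exact hsq ⟨_, h⟩

lemma U_constCoeff : constantCoeff U = 1 := by
  have h := (PowerSeries.X_pow_dvd_iff.1 (U_trunc 1)) 0 (by norm_num)
  rw [map_sub, sub_eq_zero] at h
  rw [← coeff_zero_eq_constantCoeff_apply, ← h]
  simp [Un]

lemma eq_of_dvd (f g : (ZMod 2)⟦X⟧) (h : ∀ n, X ^ n ∣ f - g) : f = g := by
  ext d
  have := (PowerSeries.X_pow_dvd_iff.1 (h (d + 1))) d (by omega)
  rwa [map_sub, sub_eq_zero] at this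

lemma U_ne : U ≠ 0 := by
  intro h; have := U_constCoeff; rw [h] at this; simp at this

lemma U_mul_inv : U * U⁻¹ = 1 := PowerSeries.mul_inv_cancel _ (by rw [U_constCoeff]; exact one_ne_zero)

lemma psi_eq : U ^ 3 = psi := by
  apply eq_of_dvd
  intro n
  rcases Nat.eq_zero_or_pos n with rfl | hn
  · simp
  set φ := Ideal.Quotient.mk (Ideal.span {(X : (ZMod 2)⟦X⟧) ^ n}) with hφ
  have key : ∀ f g, X ^ n ∣ f - g ↔ φ f = φ g := by
    intro f g
    rw [hφ, Ideal.Quotient.eq, Ideal.mem_span_singleton]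
  rw [key]
  have h1 : φ (Un n) = φ U := (key _ _).1 (U_trunc n)
  have h2 : φ (Un (2 * n)) = φ U := (key _ _).1 ((pow_dvd_pow _ (by omega)).trans (U_trunc (2 * n)))
  have h3 := (key _ _).1 (psi_trunc n)
  have h4 := congrArg φ (shanks n)
  have h5 := congrArg φ (Dn_Rn n)
  have h6 := congrArg φ U_mul_inv
  have h7 : φ (∑ s ∈ range n, Dn s * Rn s n * X ^ (s * (2 * n + 1))) = φ (Rn 0 n) := by
    rw [← key]
    obtain ⟨m, rfl⟩ : ∃ m, n = m + 1 := ⟨n - 1, by omega⟩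
    rw [sum_range_succ']
    simp only [zero_mul, pow_zero, mul_one]
    rw [show Dn 0 = 1 by simp [Dn], one_mul, add_sub_cancel_right]
    apply dvd_sum
    intro i _
    apply Dvd.dvd.mul_left
    apply pow_dvd_pow
    nlinarith
  rw [h7, Rn_zero, map_mul, h3] at h4
  rw [Rn_zero, h2] at h5
  simp only [map_mul, map_pow, map_one, h1] at h4 h5 h6 ⊢
  have h8 : φ (Dn n) * φ U = 1 := by
    linear_combination φ U⁻¹ * h5 + (1 - φ (Dn n) * φ U) * h6
  linear_combination φ psi * h8 - φ U * h4


/-- Odd solutions of `x^2 + 3 y^2 = 8 n + 4`. -/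
def S (n : ℕ) : Finset (ℕ × ℕ) :=
  ((range (8 * n + 5)) ×ˢ (range (8 * n + 5))).filter
    fun z => z.1 % 2 = 1 ∧ z.2 % 2 = 1 ∧ z.1 ^ 2 + 3 * z.2 ^ 2 = 8 * n + 4

lemma mem_S (n : ℕ) (z : ℕ × ℕ) : z ∈ S n ↔
    z.1 % 2 = 1 ∧ z.2 % 2 = 1 ∧ z.1 ^ 2 + 3 * z.2 ^ 2 = 8 * n + 4 := by
  unfold S
  simp only [mem_filter, mem_product, mem_range]
  constructor
  · exact fun h => h.2
  · intro h
    refine ⟨⟨?_, ?_⟩, h⟩ <;> nlinarith [h.2.2]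

/-- The involution on `S n`: multiplication by a cube root of unity. -/
def inv (z : ℕ × ℕ) : ℕ × ℕ :=
  if z.1 % 4 = z.2 % 4 then (((z.1 : ℤ) - 3 * z.2).natAbs / 2, (z.1 + z.2) / 2)
  else ((z.1 + 3 * z.2) / 2, ((z.1 : ℤ) - z.2).natAbs / 2)

lemma inv_spec (x y : ℕ) (hx : x % 2 = 1) (hy : y % 2 = 1) :
    (inv (x, y)).1 % 2 = 1 ∧ (inv (x, y)).2 % 2 = 1 ∧ inv (inv (x, y)) = (x, y) ∧
    (inv (x, y) = (x, y) ↔ x = y ∨ x = 3 * y) := by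
  have e : inv (inv (x, y)) = if (inv (x, y)).1 % 4 = (inv (x, y)).2 % 4 then
    ((((inv (x, y)).1 : ℤ) - 3 * (inv (x, y)).2).natAbs / 2, ((inv (x, y)).1 + (inv (x, y)).2) / 2)
  else (((inv (x, y)).1 + 3 * (inv (x, y)).2) / 2, (((inv (x, y)).1 : ℤ) - (inv (x, y)).2).natAbs / 2) := rfl
  rw [e]
  by_cases h : x % 4 = y % 4
  · have : inv (x, y) = (((x : ℤ) - 3 * y).natAbs / 2, (x + y) / 2) := if_pos h
    rw [this]
    simp only [Prod.mk.injEq]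
    split_ifs <;> simp only [Prod.mk.injEq] <;> refine ⟨?_, ?_, ⟨?_, ?_⟩, ?_⟩ <;> omega
  · have : inv (x, y) = ((x + 3 * y) / 2, ((x : ℤ) - y).natAbs / 2) := if_neg h
    rw [this]
    simp only [Prod.mk.injEq]
    split_ifs <;> simp only [Prod.mk.injEq] <;> refine ⟨?_, ?_, ⟨?_, ?_⟩, ?_⟩ <;> omega

lemma inv_norm (x y : ℕ) (hx : x % 2 = 1) (hy : y % 2 = 1) :
    (inv (x, y)).1 ^ 2 + 3 * (inv (x, y)).2 ^ 2 = x ^ 2 + 3 * y ^ 2 := by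
  by_cases h : x % 4 = y % 4
  · have : inv (x, y) = (((x : ℤ) - 3 * y).natAbs / 2, (x + y) / 2) := if_pos h
    rw [this]
    simp only
    obtain ⟨a, ha⟩ : ∃ a, a = ((x : ℤ) - 3 * y).natAbs / 2 := ⟨_, rfl⟩
    obtain ⟨b, hb⟩ : ∃ b, b = (x + y) / 2 := ⟨_, rfl⟩
    rw [← ha, ← hb]
    have hb' : (x : ℤ) + y = 2 * b := by omega
    have ha' : (x : ℤ) - 3 * y = 2 * a ∨ (x : ℤ) - 3 * y = - (2 * a) := by omega
    zify
    have h4 : (4 : ℤ) * (a ^ 2 + 3 * b ^ 2) = 4 * (x ^ 2 + 3 * y ^ 2) := by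
      rcases ha' with ha' | ha'
      · linear_combination (-(x : ℤ) + 3 * y - 2 * a) * ha' + 3 * (-(x : ℤ) - y - 2 * b) * hb'
      · linear_combination (-(x : ℤ) + 3 * y + 2 * a) * ha' + 3 * (-(x : ℤ) - y - 2 * b) * hb'
    linarith
  · have : inv (x, y) = ((x + 3 * y) / 2, ((x : ℤ) - y).natAbs / 2) := if_neg h
    rw [this]
    simp only
    obtain ⟨a, ha⟩ : ∃ a, a = (x + 3 * y) / 2 := ⟨_, rfl⟩
    obtain ⟨b, hb⟩ : ∃ b, b = ((x : ℤ) - y).natAbs / 2 := ⟨_, rfl⟩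
    rw [← ha, ← hb]
    have ha' : (x : ℤ) + 3 * y = 2 * a := by omega
    have hb' : (x : ℤ) - y = 2 * b ∨ (x : ℤ) - y = - (2 * b) := by omega
    zify
    have h4 : (4 : ℤ) * (a ^ 2 + 3 * b ^ 2) = 4 * (x ^ 2 + 3 * y ^ 2) := by
      rcases hb' with hb' | hb'
      · linear_combination (-(x : ℤ) - 3 * y - 2 * a) * ha' + 3 * (-(x : ℤ) + y - 2 * b) * hb'
      · linear_combination (-(x : ℤ) - 3 * y - 2 * a) * ha' + 3 * (-(x : ℤ) + y + 2 * b) * hb'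
    linarith

lemma card_S (n : ℕ) : ((S n).card : ZMod 2) =
    (((S n).filter fun z => z.1 = z.2 ∨ z.1 = 3 * z.2).card : ZMod 2) := by
  have h := Finset.card_filter_add_card_filter_not (s := S n) (fun z => z.1 = z.2 ∨ z.1 = 3 * z.2)
  rw [← h]
  push_cast
  rw [add_eq_left, Finset.card_eq_sum_ones]
  push_cast
  refine Finset.sum_involution (fun z _ => inv z) ?_ ?_ ?_ ?_
  · intros; exact CharTwo.add_self_eq_zero 1
  · rintro ⟨x, y⟩ hz _ 
    simp only [mem_filter, mem_S] at hz
    rw [Ne, (inv_spec x y hz.1.1 hz.1.2.1).2.2.2]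
    exact hz.2
  · rintro ⟨x, y⟩ hz
    simp only [mem_filter, mem_S] at hz ⊢
    obtain ⟨i1, i2, i3, i4⟩ := inv_spec x y hz.1.1 hz.1.2.1
    refine ⟨⟨i1, i2, ?_⟩, ?_⟩
    · rw [inv_norm x y hz.1.1 hz.1.2.1]; exact hz.1.2.2
    · have := (inv_spec _ _ i1 i2).2.2.2
      rw [← this]
      intro h
      rw [show ((inv (x, y)).1, (inv (x, y)).2) = inv (x, y) from rfl, i3] at h
      exact hz.2 (i4.1 h.symm)
  · rintro ⟨x, y⟩ hz
    simp only [mem_filter, mem_S] at hz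
    exact (inv_spec x y hz.1.1 hz.1.2.1).2.2.1

open Classical in
lemma card_fix (n : ℕ) : (((S n).filter fun z => z.1 = z.2 ∨ z.1 = 3 * z.2).card : ZMod 2) =
    (if IsSquare (2 * n + 1) then 1 else 0) + (if ∃ k, 2 * n + 1 = 3 * (k * k) then 1 else 0) := by
  rw [filter_or, card_union_of_disjoint]
  swap
  · rw [disjoint_filter]
    rintro ⟨x, y⟩ hz h1 h2
    rw [mem_S] at hz
    simp only at *
    omega
  push_cast
  congr 1
  · split_ifs with h
    · obtain ⟨r, hr⟩ := h
      have : (S n).filter (fun z => z.1 = z.2) = {(r, r)} := by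
        ext ⟨x, y⟩
        simp only [mem_filter, mem_S, mem_singleton, Prod.mk.injEq]
        constructor
        · rintro ⟨⟨_, _, h⟩, rfl⟩
          have : x = r := by nlinarith
          exact ⟨this, this⟩
        · rintro ⟨rfl, rfl⟩
          have : y % 2 = 1 := by
            rw [← Nat.odd_iff]
            have : Odd (y * y) := by rw [← hr]; exact ⟨n, rfl⟩
            exact (Nat.odd_mul.1 this).1
          exact ⟨⟨this, this, by nlinarith⟩, rfl⟩
      rw [this]; simp
    · rw [filter_eq_empty_iff.2]
      · simp
      · rintro ⟨x, y⟩ hz h1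
        rw [mem_S] at hz
        simp only at *
        subst h1
        exact h ⟨x, by nlinarith [hz.2.2]⟩
  · split_ifs with h
    · obtain ⟨r, hr⟩ := h
      have : (S n).filter (fun z => z.1 = 3 * z.2) = {(3 * r, r)} := by
        ext ⟨x, y⟩
        simp only [mem_filter, mem_S, mem_singleton, Prod.mk.injEq]
        constructor
        · rintro ⟨⟨_, _, h⟩, rfl⟩
          have : y = r := by nlinarith
          exact ⟨by rw [this], this⟩
        · rintro ⟨rfl, rfl⟩
          have : y % 2 = 1 := by
            rw [← Nat.odd_iff]
            have : Odd (3 * (y * y)) := by rw [← hr]; exact ⟨n, rfl⟩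
            exact (Nat.odd_mul.1 (Nat.odd_mul.1 this).2).1
          exact ⟨⟨by omega, this, by nlinarith⟩, rfl⟩
      rw [this]; simp
    · rw [filter_eq_empty_iff.2]
      · simp
      · rintro ⟨x, y⟩ hz h1
        rw [mem_S] at hz
        simp only at *
        subst h1
        exact h ⟨y, by nlinarith [hz.2.2]⟩

lemma sq_eq_expand (f : (ZMod 2)⟦X⟧) : f ^ 2 = expand 2 two_ne_zero f := by
  have h := MvPowerSeries.map_frobenius_expand (R := ZMod 2) (p := 2) (hp := two_ne_zero) (f := f)
  rw [ZMod.frobenius_zmod] at h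
  rw [← h]
  ext n
  simp [expand]

lemma odd_of_sq {r d : ℕ} (h : 8 * d + 1 = r * r) : r % 2 = 1 := by
  rw [← Nat.odd_iff]
  have : Odd (r * r) := by rw [← h]; exact ⟨4 * d, by ring⟩
  exact (Nat.odd_mul.1 this).1

lemma sq_of_odd {r : ℕ} (h : r % 2 = 1) : ∃ d, 8 * d + 1 = r * r := by
  obtain ⟨j, rfl⟩ := Nat.odd_iff.2 h
  obtain ⟨c, hc⟩ := (Nat.even_mul_succ_self j).two_dvd
  exact ⟨c, by nlinarith⟩

lemma coeff_psi_psi (n : ℕ) :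
    coeff n (psi * expand 3 three_ne_zero psi) = ((S n).card : ZMod 2) := by
  rw [coeff_mul]
  simp only [coeff_expand, psi, coeff_mk]
  have : ∀ x ∈ antidiagonal n, ((if IsSquare (8 * x.1 + 1) then 1 else 0) *
      (if 3 ∣ x.2 then if IsSquare (8 * (x.2 / 3) + 1) then 1 else 0 else 0) : ZMod 2) =
      if (IsSquare (8 * x.1 + 1) ∧ 3 ∣ x.2 ∧ IsSquare (8 * (x.2 / 3) + 1)) then 1 else 0 := by
    intro x _
    split_ifs <;> simp_all
  rw [sum_congr rfl this, ← sum_filter, card_eq_sum_ones]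
  push_cast
  symm
  refine sum_bij (fun z _ => ((z.1 ^ 2 - 1) / 8, 3 * ((z.2 ^ 2 - 1) / 8))) ?_ ?_ ?_ ?_
  · rintro ⟨x, y⟩ hz
    rw [mem_S] at hz
    obtain ⟨h1, h2, h3⟩ := hz
    simp only at *
    obtain ⟨a, ha⟩ := sq_of_odd h1
    obtain ⟨b, hb⟩ := sq_of_odd h2
    have ea : (x ^ 2 - 1) / 8 = a := by rw [pow_two, ← ha]; omega
    have eb : (y ^ 2 - 1) / 8 = b := by rw [pow_two, ← hb]; omega
    rw [ea, eb]
    simp only [mem_filter, HasAntidiagonal.mem_antidiagonal]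
    refine ⟨by nlinarith, ⟨x, ha⟩, ⟨b, rfl⟩, ⟨y, ?_⟩⟩
    rw [← hb]; simp
  · rintro ⟨x, y⟩ hz ⟨x', y'⟩ hz' h
    rw [mem_S] at hz hz'
    obtain ⟨h1, h2, h3⟩ := hz
    obtain ⟨h1', h2', h3'⟩ := hz'
    simp only [Prod.mk.injEq] at *
    obtain ⟨a, ha⟩ := sq_of_odd h1
    obtain ⟨b, hb⟩ := sq_of_odd h2
    obtain ⟨a', ha'⟩ := sq_of_odd h1'
    obtain ⟨b', hb'⟩ := sq_of_odd h2'
    simp only [pow_two, ← ha, ← hb, ← ha', ← hb'] at h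
    constructor
    · apply Nat.mul_self_inj.1; omega
    · apply Nat.mul_self_inj.1; omega
  · rintro ⟨i, j⟩ h
    simp only [mem_filter, HasAntidiagonal.mem_antidiagonal] at h
    obtain ⟨h1, ⟨x, hx⟩, ⟨j, rfl⟩, ⟨y, hy⟩⟩ := h
    rw [Nat.mul_div_cancel_left _ (by norm_num)] at hy
    refine ⟨(x, y), ?_, ?_⟩
    · rw [mem_S]
      exact ⟨odd_of_sq hx, odd_of_sq hy, by simp only; nlinarith⟩
    · simp only [pow_two, ← hx, ← hy, Prod.mk.injEq]
      omega
  · intros; rfl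

lemma psi_identity : psi * expand 3 three_ne_zero psi =
    psi ^ 4 + X * (expand 3 three_ne_zero psi) ^ 4 := by
  have e4 : ∀ f : (ZMod 2)⟦X⟧, f ^ 4 = expand 4 four_ne_zero f := by
    intro f
    rw [show f ^ 4 = (f ^ 2) ^ 2 by ring, sq_eq_expand, sq_eq_expand, ← expand_mul]
  ext n
  rw [coeff_psi_psi, card_S, card_fix, map_add, e4, e4, ← expand_mul]
  congr 1
  · rw [coeff_expand]
    simp only [psi, coeff_mk]
    by_cases h : IsSquare (2 * n + 1)
    · rw [if_pos h]
      obtain ⟨r, hr⟩ := h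
      have hodd : r % 2 = 1 := by
        rw [← Nat.odd_iff]
        have : Odd (r * r) := by rw [← hr]; exact ⟨n, rfl⟩
        exact (Nat.odd_mul.1 this).1
      obtain ⟨d, hd⟩ := sq_of_odd hodd
      have : n = 4 * d := by omega
      subst this
      rw [if_pos ⟨d, rfl⟩, if_pos]
      exact ⟨r, by rw [← hd]; simp⟩
    · rw [if_neg h]
      split_ifs with h1 h2
      · exfalso
        obtain ⟨d, rfl⟩ := h1
        rw [Nat.mul_div_cancel_left _ (by norm_num)] at h2
        apply h
        rwa [show 2 * (4 * d) + 1 = 8 * d + 1 by ring]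
      · rfl
      · rfl
  · cases n with
    | zero =>
      rw [coeff_zero_X_mul, if_neg]
      rintro ⟨k, hk⟩; omega
    | succ n =>
      rw [coeff_succ_X_mul, coeff_expand]
      simp only [psi, coeff_mk]
      by_cases h : ∃ k, 2 * (n + 1) + 1 = 3 * (k * k)
      · rw [if_pos h]
        obtain ⟨r, hr⟩ := h
        have hodd : r % 2 = 1 := by
          rw [← Nat.odd_iff]
          have : Odd (3 * (r * r)) := by rw [← hr]; exact ⟨n + 1, rfl⟩
          exact (Nat.odd_mul.1 (Nat.odd_mul.1 this).2).1
        obtain ⟨d, hd⟩ := sq_of_odd hodd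
        have : n = 4 * 3 * d := by omega
        subst this
        rw [if_pos ⟨d, rfl⟩, if_pos]
        exact ⟨r, by rw [← hd]; simp⟩
      · rw [if_neg h]
        split_ifs with h1 h2
        · exfalso
          obtain ⟨d, rfl⟩ := h1
          rw [Nat.mul_div_cancel_left _ (by norm_num)] at h2
          obtain ⟨r, hr⟩ := h2
          exact h ⟨r, by omega⟩
        · rfl
        · rfl

/-- `∏ (1 - q^{3n})` modulo 2. -/
noncomputable def V : (ZMod 2)⟦X⟧ := expand 3 three_ne_zero U

lemma UV_identity : U ^ 3 * V ^ 3 = U ^ 12 + X * V ^ 12 := by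
  have h := psi_identity
  rw [← psi_eq, map_pow] at h
  unfold V
  rw [h]; ring

lemma V_constCoeff : constantCoeff V = 1 := by
  rw [V, constantCoeff_expand, U_constCoeff]

lemma V_mul_inv : V * V⁻¹ = 1 := PowerSeries.mul_inv_cancel _ (by rw [V_constCoeff]; exact one_ne_zero)


open scoped PowerSeries.WithPiTopology in
lemma hasProd_expand (p : ℕ) (hp : p ≠ 0) :
    HasProd (fun n : ℕ => if p ∣ n + 1 then (1 - X ^ (n + 1) : (ZMod 2)⟦X⟧) else 1)
      (expand p hp U) := by
  have h := WithPiTopology.hasProd_one_sub_X_pow (ZMod 2)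
  have hc : Continuous (expand (R := ZMod 2) p hp) := by
    rw [continuous_iff_continuousAt]
    intro f
    rw [ContinuousAt, WithPiTopology.tendsto_iff_coeff_tendsto]
    intro d
    simp only [coeff_expand]
    split_ifs
    · exact (WithPiTopology.continuous_coeff (ZMod 2) _).continuousAt
    · exact tendsto_const_nhds
  have h2 := h.map (expand (R := ZMod 2) p hp) hc
  have hinj : Function.Injective (fun n : ℕ => p * (n + 1) - 1) := by
    intro a b hab
    have ha : 0 < p * (a + 1) := by positivity
    have hb : 0 < p * (b + 1) := by positivity
    simp only at hab
    have : p * (a + 1) = p * (b + 1) := by omega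
    have := Nat.eq_of_mul_eq_mul_left (Nat.pos_of_ne_zero hp) this
    omega
  rw [← hinj.hasProd_iff]
  · convert h2 using 1
    · funext n
      have ha : 0 < p * (n + 1) := by positivity
      simp only [Function.comp_apply, map_sub, map_one, map_pow, expand_X]
      rw [Nat.sub_add_cancel ha, if_pos ⟨_, rfl⟩, pow_mul]
    · rfl
  · intro x hx
    rw [if_neg]
    rintro ⟨c, hc⟩
    apply hx
    cases c with
    | zero => omega
    | succ c => exact ⟨c, by simp only; omega⟩

/-- The allowed parts. -/
def PP (j : ℕ) : Prop := ¬ 3 ∣ j ∧ ¬ 2 ∣ j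

instance : DecidablePred PP := fun j => inferInstanceAs (Decidable (¬ 3 ∣ j ∧ ¬ 2 ∣ j))

/-- The number of one-colored partitions. -/
def r (n : ℕ) : ℕ := (Nat.Partition.restricted n PP).card

/-- The generating function of `r` modulo 2. -/
noncomputable def H : (ZMod 2)⟦X⟧ := PowerSeries.mk fun n => (r n : ZMod 2)

lemma H_mul_V : H * V = U := by
  open scoped PowerSeries.WithPiTopology in
  have h1 := Nat.Partition.hasProd_powerSeriesMk_card_restricted (ZMod 2) PP
  have h2 := hasProd_expand 1 one_ne_zero
  have h3 := hasProd_expand 2 two_ne_zero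
  have h4 := hasProd_expand 3 three_ne_zero
  have h6 := hasProd_expand (2 * 3) (by norm_num)
  have e6 : expand (2 * 3) (by norm_num) U = V ^ 2 := by
    rw [sq_eq_expand, V, expand_mul]
  rw [e6] at h6
  rw [← sq_eq_expand] at h3
  rw [expand_one_apply] at h2
  have hL := (h1.mul h2).mul h6
  have hR := h3.mul h4
  have : H * U * V ^ 2 = U ^ 2 * V := by
    refine hL.unique ?_
    refine Eq.mp (congrArg (fun f => HasProd f (U ^ 2 * V)) ?_) hR
    funext i
    symm
    have hone : (∑' j : ℕ, (X : (ZMod 2)⟦X⟧) ^ ((i + 1) * j)) * (1 - X ^ (i + 1)) = 1 := by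
      simp_rw [pow_mul]
      exact WithPiTopology.tsum_pow_mul_one_sub_of_constantCoeff_eq_zero (by simp)
    rw [if_pos (one_dvd _)]
    have hPP : PP (i + 1) ↔ ¬ 3 ∣ i + 1 ∧ ¬ 2 ∣ i + 1 := Iff.rfl
    by_cases a2 : 2 ∣ i + 1 <;> by_cases a3 : 3 ∣ i + 1
    · have a6 : 2 * 3 ∣ i + 1 := by omega
      simp [a2, a3, a6, hPP]
    · have a6 : ¬ 2 * 3 ∣ i + 1 := by omega
      simp [a2, a3, a6, hPP]
    · have a6 : ¬ 2 * 3 ∣ i + 1 := by omega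
      simp [a2, a3, a6, hPP]
    · have a6 : ¬ 2 * 3 ∣ i + 1 := by omega
      rw [if_pos (hPP.2 ⟨a3, a2⟩), if_neg a2, if_neg a3, if_neg a6, hone]
  have hV : V * V⁻¹ = 1 := V_mul_inv
  have hU : U * U⁻¹ = 1 := U_mul_inv
  have h : (H * V) * (U * U⁻¹) * (V * V⁻¹) = U * (U * U⁻¹) * (V * V⁻¹) := by
    linear_combination U⁻¹ * V⁻¹ * this
  simpa [hV, hU] using h

/-- Uniqueness of the even part. -/
lemma coeff_even (a b : (ZMod 2)⟦X⟧) (n : ℕ) : coeff (2 * n) (a ^ 2 + X * b ^ 2) = coeff n a := by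
  rw [map_add, sq_eq_expand, sq_eq_expand, coeff_expand_mul]
  cases n with
  | zero => simp
  | succ n =>
    rw [show 2 * (n + 1) = (2 * n + 1) + 1 by ring, coeff_succ_X_mul, coeff_expand_of_not_dvd]
    · simp
    · omega

lemma coeff_odd (a b : (ZMod 2)⟦X⟧) (n : ℕ) : coeff (2 * n + 1) (a ^ 2 + X * b ^ 2) = coeff n b := by
  rw [map_add, sq_eq_expand, sq_eq_expand, coeff_succ_X_mul, coeff_expand_mul, coeff_expand_of_not_dvd]
  · simp
  · omega

/-- Even part of the one-colored generating function. -/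
noncomputable def A (R : Type) [CommRing R] : R⟦X⟧ := PowerSeries.mk fun n => (r (2 * n) : R)
/-- Odd part of the one-colored generating function. -/
noncomputable def B (R : Type) [CommRing R] : R⟦X⟧ := PowerSeries.mk fun n => (r (2 * n + 1) : R)

lemma gf_split (R : Type) [CommRing R] : (PowerSeries.mk fun n => (r n : R)) =
    expand 2 two_ne_zero (A R) + X * expand 2 two_ne_zero (B R) := by
  ext n
  rw [coeff_mk, map_add]
  obtain ⟨m, rfl | rfl⟩ := Nat.even_or_odd' n
  · rw [coeff_expand_mul]
    cases m with
    | zero => simp [A]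
    | succ m =>
      rw [show 2 * (m + 1) = (2 * m + 1) + 1 by ring, coeff_succ_X_mul, coeff_expand_of_not_dvd]
      · simp [A]; congr 1
      · omega
  · rw [coeff_succ_X_mul, coeff_expand_mul, coeff_expand_of_not_dvd]
    · simp [B]
    · omega

lemma H_eq : H = A (ZMod 2) ^ 2 + X * B (ZMod 2) ^ 2 := by
  rw [sq_eq_expand, sq_eq_expand]; exact gf_split _

lemma inv_cancel_aux {f g : (ZMod 2)⟦X⟧} (a b : ℕ) (h : f * U ^ a * V ^ b = g * U ^ a * V ^ b) : f = g := by
  have hU : U ^ a * U⁻¹ ^ a = 1 := by rw [← mul_pow, U_mul_inv, one_pow]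
  have hV : V ^ b * V⁻¹ ^ b = 1 := by rw [← mul_pow, V_mul_inv, one_pow]
  linear_combination U⁻¹ ^ a * V⁻¹ ^ b * h - (f - g) * hU * (V ^ b * V⁻¹ ^ b) - (f - g) * hV

lemma H_eq' : H = (U ^ 5 * V⁻¹ ^ 2) ^ 2 + X * (V ^ 4 * U⁻¹) ^ 2 := by
  apply inv_cancel_aux 2 4
  have hU : U ^ 2 * U⁻¹ ^ 2 = 1 := by rw [← mul_pow, U_mul_inv, one_pow]
  have hV : V ^ 4 * V⁻¹ ^ 4 = 1 := by rw [← mul_pow, V_mul_inv, one_pow]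
  linear_combination U ^ 2 * V ^ 3 * H_mul_V + UV_identity - U ^ 12 * hV - X * V ^ 12 * hU

lemma A_eq : A (ZMod 2) = U ^ 5 * V⁻¹ ^ 2 := by
  ext n
  rw [← coeff_even (A (ZMod 2)) (B (ZMod 2)), ← H_eq, H_eq', coeff_even]

lemma B_eq : B (ZMod 2) = V ^ 4 * U⁻¹ := by
  ext n
  rw [← coeff_odd (A (ZMod 2)) (B (ZMod 2)), ← H_eq, H_eq', coeff_odd]

lemma g1_eq : A (ZMod 2) * B (ZMod 2) * (A (ZMod 2) ^ 2 + X * B (ZMod 2) ^ 2) = U ^ 5 * V := by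
  rw [← H_eq, A_eq, B_eq]
  have hU := U_mul_inv
  have hV : V ^ 2 * V⁻¹ ^ 2 = 1 := by rw [← mul_pow, V_mul_inv, one_pow]
  apply inv_cancel_aux 0 1
  linear_combination U ^ 5 * V⁻¹ ^ 2 * V ^ 4 * U⁻¹ * H_mul_V + U ^ 5 * V⁻¹ ^ 2 * V ^ 4 * hU + U ^ 5 * V ^ 2 * hV

lemma g1_split : U ^ 5 * V = (U ^ 7 * V⁻¹) ^ 2 + X * (U * V ^ 5) ^ 2 := by
  have hV : V ^ 2 * V⁻¹ ^ 2 = 1 := by rw [← mul_pow, V_mul_inv, one_pow]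
  apply inv_cancel_aux 0 2
  linear_combination U ^ 2 * UV_identity - U ^ 14 * hV

lemma g2_split : U ^ 7 * V⁻¹ = (U ^ 8 * V⁻¹ ^ 2) ^ 2 + X * (U ^ 2 * V ^ 4) ^ 2 := by
  have hV : V ^ 4 * V⁻¹ ^ 4 = 1 := by rw [← mul_pow, V_mul_inv, one_pow]
  apply inv_cancel_aux 0 4
  linear_combination U ^ 4 * UV_identity - U ^ 16 * hV + U ^ 7 * V ^ 3 * V_mul_inv

lemma g3_split : U ^ 8 * V⁻¹ ^ 2 = (U ^ 4 * V⁻¹) ^ 2 + X * 0 ^ 2 := by ring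

lemma coeff_g1 (n : ℕ) :
    coeff (8 * n) (A (ZMod 2) * B (ZMod 2) * (A (ZMod 2) ^ 2 + X * B (ZMod 2) ^ 2)) =
      coeff n (U * (U ^ 3 * V⁻¹)) := by
  rw [g1_eq, g1_split, show 8 * n = 2 * (2 * (2 * n)) by ring, coeff_even, g2_split, coeff_even,
    g3_split, coeff_even]
  congr 1; ring

lemma t_eq : U ^ 3 * V⁻¹ = (U ^ 3 * V⁻¹) ^ 4 + X * V ^ 8 := by
  have hV : V ^ 4 * V⁻¹ ^ 4 = 1 := by rw [← mul_pow, V_mul_inv, one_pow]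
  apply inv_cancel_aux 0 4
  linear_combination UV_identity - U ^ 12 * hV + U ^ 3 * V ^ 3 * V_mul_inv

lemma coeff_U_ne {n : ℕ} (h : coeff n U ≠ 0) : ∃ c : ℤ, 24 * (n : ℤ) + 1 = c ^ 2 := by
  unfold U at h
  rw [Ne, coeff_pentagonalSeries_eq_zero_iff, not_not] at h
  obtain ⟨k, rfl⟩ := h
  have := two_mul_natCast_pentagonal k
  exact ⟨6 * k - 1, by linear_combination 12 * this⟩

lemma coeff_t_ne (n : ℕ) (h : coeff n (U ^ 3 * V⁻¹) ≠ 0) : ∃ d : ℤ, (n : ℤ) = d ^ 2 := by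
  induction n using Nat.strong_induction_on with
  | _ n ih =>
    rcases Nat.eq_zero_or_pos n with rfl | hn
    · exact ⟨0, by simp⟩
    have e4 : ∀ f : (ZMod 2)⟦X⟧, f ^ 4 = expand 4 four_ne_zero f := by
      intro f
      rw [show f ^ 4 = (f ^ 2) ^ 2 by ring, sq_eq_expand, sq_eq_expand, ← expand_mul]
    rw [t_eq, map_add] at h
    by_cases h1 : coeff n ((U ^ 3 * V⁻¹) ^ 4) = 0
    · rw [h1, zero_add] at h
      obtain ⟨m, rfl⟩ : ∃ m, n = m + 1 := ⟨n - 1, by omega⟩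
      rw [coeff_succ_X_mul, show V ^ 8 = (V ^ 4) ^ 2 by ring, sq_eq_expand, e4, V, ← expand_mul,
        ← expand_mul, coeff_expand] at h
      split_ifs at h with hd
      · obtain ⟨c, rfl⟩ := hd
        rw [Nat.mul_div_cancel_left _ (by norm_num)] at h
        obtain ⟨d, hd⟩ := coeff_U_ne h
        exact ⟨d, by push_cast; linarith⟩
      · exact absurd rfl h
    · rw [e4, coeff_expand] at h1
      split_ifs at h1 with hd
      · obtain ⟨c, rfl⟩ := hd
        rw [Nat.mul_div_cancel_left _ (by norm_num)] at h1
        obtain ⟨d, hd⟩ := ih c (by omega) h1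
        exact ⟨2 * d, by push_cast; rw [hd]; ring⟩
      · exact absurd rfl h1

lemma coeff_g4_ne (n : ℕ) (h : coeff n (U * (U ^ 3 * V⁻¹)) ≠ 0) :
    ∃ c d : ℤ, 24 * (n : ℤ) + 1 = c ^ 2 + 6 * (2 * d) ^ 2 := by
  rw [coeff_mul] at h
  obtain ⟨⟨i, j⟩, hij, hne⟩ := exists_ne_zero_of_sum_ne_zero h
  rw [HasAntidiagonal.mem_antidiagonal] at hij
  obtain ⟨c, hc⟩ := coeff_U_ne (left_ne_zero_of_mul hne)
  obtain ⟨d, hd⟩ := coeff_t_ne _ (right_ne_zero_of_mul hne)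
  refine ⟨c, d, ?_⟩
  simp only at *
  rw [← hij]; push_cast
  linear_combination hc + 24 * hd

/-- Reduction modulo 8 of the fourth power. -/
lemma coeff_fourth (n : ℕ) : coeff (2 * n + 1) ((PowerSeries.mk fun n => (r n : ℤ)) ^ 4) =
    4 * coeff n (A ℤ * B ℤ * (A ℤ ^ 2 + X * B ℤ ^ 2)) := by
  rw [gf_split]
  have : (expand 2 two_ne_zero (A ℤ) + X * expand 2 two_ne_zero (B ℤ)) ^ 4 =
      expand 2 two_ne_zero (A ℤ ^ 4 + 6 * X * A ℤ ^ 2 * B ℤ ^ 2 + X ^ 2 * B ℤ ^ 4) +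
      4 * (X * expand 2 two_ne_zero (A ℤ * B ℤ * (A ℤ ^ 2 + X * B ℤ ^ 2))) := by
    simp only [map_add, map_mul, map_pow, expand_X, map_ofNat]
    ring
  rw [this, map_add, coeff_expand_of_not_dvd _ _ _ (by omega), zero_add,
    show (4 : ℤ⟦X⟧) = C (4 : ℤ) by simp, coeff_C_mul, coeff_succ_X_mul, coeff_expand_mul]

lemma map_A : PowerSeries.map (Int.castRingHom (ZMod 2)) (A ℤ) = A (ZMod 2) := by
  ext n; simp [A]
lemma map_B : PowerSeries.map (Int.castRingHom (ZMod 2)) (B ℤ) = B (ZMod 2) := by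
  ext n; simp [B]

lemma main_dvd (n : ℕ) (h : ¬ ∃ c d : ℤ, 24 * (n : ℤ) + 1 = c ^ 2 + 6 * (2 * d) ^ 2) :
    (8 : ℤ) ∣ coeff (16 * n + 1) ((PowerSeries.mk fun n => (r n : ℤ)) ^ 4) := by
  rw [show 16 * n + 1 = 2 * (8 * n) + 1 by ring, coeff_fourth]
  have h1 : coeff n (U * (U ^ 3 * V⁻¹)) = 0 := by
    by_contra h'
    exact h (coeff_g4_ne n h')
  rw [← coeff_g1, ← map_A, ← map_B, ← map_X (Int.castRingHom (ZMod 2)), ← map_pow, ← map_pow,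
    ← map_mul, ← map_mul, ← map_add, ← map_mul, coeff_map] at h1
  rw [eq_intCast, ZMod.intCast_zmod_eq_zero_iff_dvd] at h1
  obtain ⟨c, hc⟩ := h1
  rw [hc]
  exact ⟨c, by push_cast; ring⟩


/-- Colored partitions as a type. -/
def CP (k n : ℕ) : Type := {M : Multiset (ℕ × ℕ) //
    (∀ x ∈ M, ¬ 3 ∣ x.1 ∧ ¬ 2 ∣ x.1 ∧ x.2 < k) ∧ (M.map Prod.fst).sum = n}

/-- One-colored partitions as a type. -/
def OP (n : ℕ) : Type := {M : Multiset ℕ // (∀ x ∈ M, PP x) ∧ M.sum = n}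

/-- One-colored partitions are the restricted partitions. -/
def opEquiv (n : ℕ) : OP n ≃ {x : n.Partition // x ∈ Nat.Partition.restricted n PP} where
  toFun M := ⟨⟨M.1, fun {i} hi => Nat.pos_of_ne_zero (by
      rintro rfl; exact (M.2.1 0 hi).1 (dvd_zero 3)), M.2.2⟩, by
      simp only [Nat.Partition.restricted, mem_filter, mem_univ, true_and]; exact M.2.1⟩
  invFun x := ⟨x.1.parts, by
      have := x.2
      simp only [Nat.Partition.restricted, mem_filter, mem_univ, true_and] at this
      exact this, x.1.parts_sum⟩
  left_inv _ := rfl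
  right_inv _ := rfl

instance (n : ℕ) : Finite (OP n) := Finite.of_equiv _ (opEquiv n).symm

lemma card_OP (n : ℕ) : Nat.card (OP n) = r n := by
  rw [Nat.card_congr (opEquiv n), Nat.card_eq_fintype_card, Fintype.card_coe, r]

/-- Splitting off the last color. -/
noncomputable def cpEquiv (k n : ℕ) :
    CP (k + 1) n ≃ Σ z : {z : ℕ × ℕ // z ∈ HasAntidiagonal.antidiagonal n}, CP k z.1.1 × OP z.1.2 := by
  classical
  refine Equiv.symm (Equiv.ofBijective (fun w => ⟨w.2.1.1 + w.2.2.1.map (fun a => (a, k)), ?_, ?_⟩) ⟨?_, ?_⟩)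
  · intro x hx
    rw [Multiset.mem_add] at hx
    rcases hx with hx | hx
    · obtain ⟨h1, h2, h3⟩ := w.2.1.2.1 x hx
      exact ⟨h1, h2, by omega⟩
    · rw [Multiset.mem_map] at hx
      obtain ⟨a, ha, rfl⟩ := hx
      obtain ⟨h1, h2⟩ := w.2.2.2.1 a ha
      exact ⟨h1, h2, by simp⟩
  · rw [Multiset.map_add, Multiset.sum_add, w.2.1.2.2, Multiset.map_map]
    simp only [Function.comp_def, Multiset.map_id']
    rw [w.2.2.2.2]
    exact HasAntidiagonal.mem_antidiagonal.1 w.1.2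
  · rintro ⟨⟨⟨i, j⟩, hz⟩, ⟨M, hM⟩, ⟨N, hN⟩⟩ ⟨⟨⟨i', j'⟩, hz'⟩, ⟨M', hM'⟩, ⟨N', hN'⟩⟩ h
    have h' : M + N.map (fun a => (a, k)) = M' + N'.map (fun a => (a, k)) := congrArg Subtype.val h
    have f1 : ∀ (M : Multiset (ℕ × ℕ)) (N : Multiset ℕ),
        (∀ x ∈ M, ¬ 3 ∣ x.1 ∧ ¬ 2 ∣ x.1 ∧ x.2 < k) →
        (M + N.map (fun a => (a, k))).filter (fun x => x.2 < k) = M := by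
      intro M N hM
      rw [Multiset.filter_add, Multiset.filter_eq_self.2 (fun x hx => (hM x hx).2.2),
        Multiset.filter_eq_nil.2, add_zero]
      intro x hx
      rw [Multiset.mem_map] at hx
      obtain ⟨a, ha, rfl⟩ := hx
      simp
    have hMM : M = M' := by rw [← f1 M N hM.1, h', f1 M' N' hM'.1]
    subst hMM
    have hNN : N = N' := Multiset.map_injective (fun a b hab => (Prod.mk.inj hab).1) (add_left_cancel h')
    subst hNN
    clear h
    simp only at hM hN hM' hN'
    obtain ⟨hM1, rfl⟩ := hM
    obtain ⟨hN1, rfl⟩ := hN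
    obtain ⟨hM1', rfl⟩ := hM'
    obtain ⟨hN1', rfl⟩ := hN'
    rfl
  · rintro ⟨M, hM, hs⟩
    have hsplit : M.filter (fun x => x.2 < k) + ((M.filter (fun x => ¬ x.2 < k)).map Prod.fst).map (fun a => (a, k)) = M := by
      conv_rhs => rw [← Multiset.filter_add_not (fun x : ℕ × ℕ => x.2 < k) M]
      congr 1
      rw [Multiset.map_map]
      conv_rhs => rw [← Multiset.map_id (Multiset.filter (fun x : ℕ × ℕ => ¬ x.2 < k) M)]
      apply Multiset.map_congr rfl
      rintro ⟨a, b⟩ hx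
      rw [Multiset.mem_filter] at hx
      have := (hM _ hx.1).2.2
      simp only [Function.comp_apply, id, Prod.mk.injEq, true_and]
      have := hx.2
      simp only at *
      omega
    refine ⟨⟨⟨(((M.filter (fun x => x.2 < k)).map Prod.fst).sum,
      ((M.filter (fun x => ¬ x.2 < k)).map Prod.fst).sum), ?_⟩, ⟨M.filter (fun x => x.2 < k), ?_, rfl⟩,
      ⟨(M.filter (fun x => ¬ x.2 < k)).map Prod.fst, ?_, rfl⟩⟩, ?_⟩
    · rw [HasAntidiagonal.mem_antidiagonal]
      simp only
      rw [← Multiset.sum_add, ← Multiset.map_add, Multiset.filter_add_not, hs]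
    · intro x hx
      rw [Multiset.mem_filter] at hx
      obtain ⟨h1, h2, _⟩ := hM x hx.1
      exact ⟨h1, h2, hx.2⟩
    · intro x hx
      rw [Multiset.mem_map] at hx
      obtain ⟨a, ha, rfl⟩ := hx
      rw [Multiset.mem_filter] at ha
      obtain ⟨h1, h2, _⟩ := hM a ha.1
      exact ⟨h1, h2⟩
    · exact Subtype.ext hsplit

lemma CP_zero_eq {n : ℕ} (M : CP 0 n) : M.1 = 0 :=
  Multiset.eq_zero_of_forall_notMem fun x hx => absurd (M.2.1 x hx).2.2 (by omega)

lemma card_CP (k : ℕ) : ∀ n, Finite (CP k n) ∧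
    (Nat.card (CP k n) : ℤ) = coeff n ((PowerSeries.mk fun n => (r n : ℤ)) ^ k) := by
  induction k with
  | zero =>
    intro n
    have hs : Subsingleton (CP 0 n) :=
      ⟨fun M N => Subtype.ext ((CP_zero_eq M).trans (CP_zero_eq N).symm)⟩
    refine ⟨inferInstance, ?_⟩
    rw [pow_zero, coeff_one]
    split_ifs with h
    · subst h
      have : Nonempty (CP 0 0) := ⟨⟨0, by simp, by simp⟩⟩
      rw [Nat.card_unique]; simp
    · have : IsEmpty (CP 0 n) := ⟨fun M => h (by
        have := M.2.2
        rw [CP_zero_eq M] at this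
        simpa using this.symm)⟩
      simp
  | succ k ih =>
    intro n
    have hf : ∀ n, Finite (CP k n) := fun n => (ih n).1
    refine ⟨Finite.of_equiv _ (cpEquiv k n).symm, ?_⟩
    rw [Nat.card_congr (cpEquiv k n), Nat.card_sigma, pow_succ, coeff_mul]
    push_cast
    rw [← Finset.sum_coe_sort (HasAntidiagonal.antidiagonal n)]
    refine sum_congr rfl fun z _ => ?_
    rw [Nat.card_prod, card_OP, coeff_mk, ← (ih _).2]
    push_cast; rfl

lemma descent (p : ℕ) (hp : p.Prime) (hleg : @legendreSym p ⟨hp⟩ (-6) = -1) (s : ℤ)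
    (hs : ¬ (p : ℤ) ∣ s) (k : ℕ) : ∀ c e : ℤ, (p : ℤ) ^ (2 * k + 1) * s ≠ c ^ 2 + 6 * e ^ 2 := by
  haveI : Fact p.Prime := ⟨hp⟩
  have hp0 : (p : ℤ) ≠ 0 := by exact_mod_cast hp.ne_zero
  have key : ∀ c e : ℤ, (p : ℤ) ∣ c ^ 2 + 6 * e ^ 2 → (p : ℤ) ∣ c ∧ (p : ℤ) ∣ e := by
    intro c e h
    have h0 : (c : ZMod p) ^ 2 - ((-6 : ℤ) : ZMod p) * (e : ZMod p) ^ 2 = 0 := by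
      have := (ZMod.intCast_zmod_eq_zero_iff_dvd (c ^ 2 + 6 * e ^ 2) p).2 h
      push_cast at this ⊢
      linear_combination this
    have := legendreSym.prime_dvd_of_eq_neg_one hleg (x := c) (y := e) (by
      obtain ⟨w, hw⟩ := h
      exact ⟨w, by linear_combination hw⟩)
    exact this
  induction k with
  | zero =>
    intro c e h
    obtain ⟨⟨c', rfl⟩, ⟨e', rfl⟩⟩ := key c e ⟨s, by rw [← h]; ring⟩
    apply hs
    refine ⟨c' ^ 2 + 6 * e' ^ 2, mul_left_cancel₀ hp0 ?_⟩
    linear_combination h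
  | succ k ih =>
    intro c e h
    obtain ⟨⟨c', rfl⟩, ⟨e', rfl⟩⟩ := key c e ⟨(p : ℤ) ^ (2 * k + 2) * s, by rw [← h]; ring⟩
    apply ih c' e'
    refine mul_left_cancel₀ (pow_ne_zero 2 hp0) ?_
    linear_combination h

end Colored

theorem stmt_12 (p : ℕ) (hp : p.Prime) (hp5 : 5 ≤ p)
    (hleg : @legendreSym p ⟨hp⟩ (-6) = -1) (k m : ℕ) (hm : ¬ p ∣ m) :
    coloredRegular 4 3 2 (16 * p ^ (2 * k + 1) * m + (2 * p ^ (2 * k + 2) + 1) / 3)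
      ≡ 0 [MOD 8] := by
  have h24 : ∃ q, p ^ 2 = 24 * q + 1 := by
    have h2 : ¬ 2 ∣ p := fun h => by
      have := (Nat.prime_dvd_prime_iff_eq Nat.prime_two hp).1 h; omega
    have h3 : ¬ 3 ∣ p := fun h => by
      have := (Nat.prime_dvd_prime_iff_eq Nat.prime_three hp).1 h; omega
    have : p ^ 2 % 24 = 1 := by
      have hlt : p % 24 < 24 := Nat.mod_lt _ (by norm_num)
      have h2' : (p % 24) % 2 ≠ 0 := by omega
      have h3' : (p % 24) % 3 ≠ 0 := by omega
      rw [Nat.pow_mod]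
      generalize p % 24 = a at *
      interval_cases a <;> simp_all
    exact ⟨p ^ 2 / 24, by omega⟩
  have h24' : ∃ q, p ^ (2 * k + 2) = 24 * q + 1 := by
    obtain ⟨q, hq⟩ := h24
    have : p ^ (2 * k + 2) % 24 = 1 := by
      rw [show 2 * k + 2 = 2 * (k + 1) by ring, pow_mul, hq, Nat.pow_mod]
      simp [Nat.add_mod]
    exact ⟨p ^ (2 * k + 2) / 24, by omega⟩
  obtain ⟨q, hq⟩ := h24'
  have hN : 16 * p ^ (2 * k + 1) * m + (2 * p ^ (2 * k + 2) + 1) / 3 =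
      16 * (p ^ (2 * k + 1) * m + q) + 1 := by
    rw [hq, mul_add, mul_assoc]; omega
  rw [hN, Nat.modEq_zero_iff_dvd]
  have h := (Colored.card_CP 4 (16 * (p ^ (2 * k + 1) * m + q) + 1)).2
  have h' : (coloredRegular 4 3 2 (16 * (p ^ (2 * k + 1) * m + q) + 1) : ℤ) = _ := h
  zify
  rw [h']
  apply Colored.main_dvd
  rintro ⟨c, d, hcd⟩
  refine Colored.descent p hp hleg (24 * m + p) ?_ k c (2 * d) ?_
  · intro hd
    have h1 : (p : ℤ) ∣ 24 * m := (dvd_add_left (dvd_refl _)).1 hd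
    have h2 : p ∣ 24 * m := by exact_mod_cast h1
    rcases (hp.dvd_mul).1 h2 with h3 | h3
    · rw [show 24 = 2 ^ 3 * 3 by norm_num] at h3
      rcases (hp.dvd_mul).1 h3 with h4 | h4
      · have := Nat.le_of_dvd (by norm_num) (hp.dvd_of_dvd_pow h4); omega
      · have := Nat.le_of_dvd (by norm_num) h4; omega
    · exact hm h3
  · have hq' : (p : ℤ) ^ (2 * k + 2) = 24 * q + 1 := by exact_mod_cast hq
    rw [← hcd]
    push_cast
    linear_combination hq'
end

section
/- For every nonnegative integer j, every nonnegative integer n, and each t ∈ {22, 28}, b^2_{2,5}(2·5^{2j+2}·n + (t·5^{2j+1} + 1)/3) ≡ 0 (mod 4). -/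
open PowerSeries Finset Filter

namespace St14

abbrev PS := PowerSeries (ZMod 2)

/-- coefficientwise eventual convergence -/
def Conv (F : ℕ → PS) (f : PS) : Prop :=
  ∀ n, ∀ᶠ N in atTop, coeff n (F N) = coeff n f

lemma Conv.mul {F G : ℕ → PS} {f g : PS} (hF : Conv F f) (hG : Conv G g) :
    Conv (fun N => F N * G N) (f * g) := by
  intro n
  have h1 : ∀ᶠ N in atTop, ∀ i ∈ range (n+1), coeff i (F N) = coeff i f :=
    (eventually_all_finset _).2 fun i _ => hF i
  have h2 : ∀ᶠ N in atTop, ∀ i ∈ range (n+1), coeff i (G N) = coeff i g :=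
    (eventually_all_finset _).2 fun i _ => hG i
  filter_upwards [h1, h2] with N a b
  rw [coeff_mul, coeff_mul]
  refine sum_congr rfl fun p hp => ?_
  have := mem_antidiagonal.1 hp
  rw [a p.1 (by simp; omega), b p.2 (by simp; omega)]

lemma Conv.unique {F : ℕ → PS} {f g : PS} (hF : Conv F f) (hG : Conv F g) : f = g := by
  ext n
  obtain ⟨N, h1, h2⟩ := ((hF n).and (hG n)).exists
  rw [← h1, ← h2]

lemma Conv.const (f : PS) : Conv (fun _ => f) f := fun n => by simp

lemma Conv.comp {F : ℕ → PS} {f : PS} (hF : Conv F f) {u : ℕ → ℕ}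
    (hu : Tendsto u atTop atTop) : Conv (fun N => F (u N)) f :=
  fun n => hu.eventually (hF n)

lemma Conv.prod {F : ℕ → ℕ → PS} {f : ℕ → PS} (c : ℕ) (hF : ∀ r < c, Conv (F r) (f r)) :
    Conv (fun N => ∏ r ∈ range c, F r N) (∏ r ∈ range c, f r) := by
  induction c with
  | zero => simpa using Conv.const 1
  | succ c ih =>
    simp only [prod_range_succ]
    exact (ih fun r hr => hF r (by omega)).mul (hF c (by omega))

/-- finite product -/
noncomputable def fP (a m N : ℕ) : PS := ∏ i ∈ range N, (1 + X ^ (a + m * i))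

lemma coeff_mul_one_add_high (f : PS) (n k : ℕ) (h : n < k) :
    coeff n (f * (1 + X ^ k)) = coeff n f := by
  rw [mul_add, mul_one, map_add, coeff_mul_X_pow', if_neg (by omega), add_zero]

lemma fP_stable (a m n : ℕ) (hm : 0 < m) (ha : 0 < a) (d : ℕ) :
    coeff n (fP a m (n + d)) = coeff n (fP a m n) := by
  induction d with
  | zero => rfl
  | succ d ih =>
    rw [← ih, ← add_assoc, fP, prod_range_succ, coeff_mul_one_add_high, fP]
    have : n + d ≤ m * (n + d) := Nat.le_mul_of_pos_left _ hm
    omega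

/-- infinite product `∏_{i ≥ 0} (1 + X^(a+m*i))` -/
noncomputable def P (a m : ℕ) : PS := PowerSeries.mk fun n => coeff n (fP a m n)

lemma conv_P (a m : ℕ) (hm : 0 < m) (ha : 0 < a) : Conv (fP a m) (P a m) := by
  intro n
  filter_upwards [eventually_ge_atTop n] with N hN
  obtain ⟨d, rfl⟩ := Nat.exists_eq_add_of_le hN
  rw [fP_stable a m n hm ha, P, coeff_mk]

lemma char2 (f : PS) : f + f = 0 := by
  ext n
  rw [map_add, map_zero]
  exact CharTwo.add_self_eq_zero _

lemma P_sq (a m : ℕ) (hm : 0 < m) (ha : 0 < a) : P a m ^ 2 = P (2*a) (2*m) := by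
  rw [pow_two]
  refine ((conv_P a m hm ha).mul (conv_P a m hm ha)).unique ?_
  have : (fun N => fP a m N * fP a m N) = fP (2*a) (2*m) := by
    funext N
    rw [fP, fP, ← prod_mul_distrib]
    refine prod_congr rfl fun i _ => ?_
    have := char2 (X ^ (a + m * i))
    rw [show 2 * a + 2 * m * i = (a + m*i) + (a+m*i) by ring, pow_add]
    linear_combination this
  rw [this]
  exact conv_P _ _ (by omega) (by omega)

lemma prod_range_mul' {M : Type*} [CommMonoid M] (f : ℕ → M) (c N : ℕ) :
    ∏ i ∈ range (c * N), f i = ∏ r ∈ range c, ∏ i ∈ range N, f (r + c * i) := by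
  induction N with
  | zero => simp
  | succ N ih =>
    simp only [Nat.mul_succ, prod_range_succ, prod_range_add, prod_mul_distrib, ih]
    congr 1
    exact prod_congr rfl fun r _ => by rw [add_comm]

lemma P_split (a m c : ℕ) (hm : 0 < m) (ha : 0 < a) (hc : 0 < c) :
    P a m = ∏ r ∈ range c, P (a + m * r) (c * m) := by
  have h1 : Conv (fun N => fP a m (c * N)) (P a m) :=
    (conv_P a m hm ha).comp (tendsto_id.const_mul_atTop' hc)
  refine h1.unique ?_
  have : (fun N => fP a m (c * N)) = fun N => ∏ r ∈ range c, fP (a + m * r) (c * m) N := by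
    funext N
    rw [fP, prod_range_mul']
    refine prod_congr rfl fun r _ => ?_
    rw [fP]
    refine prod_congr rfl fun i _ => ?_
    ring_nf
  rw [this]
  exact Conv.prod (F := fun r N => fP (a + m * r) (c * m) N) c
    fun r _ => conv_P _ _ (by positivity) (by omega)

lemma coeff_zero_P (a m : ℕ) : coeff 0 (P a m) = 1 := by
  simp [P, fP]

lemma P_ne (a m : ℕ) : P a m ≠ 0 := by
  intro h
  have := coeff_zero_P a m
  rw [h] at this
  simp at this

/-- Gaussian binomials -/
noncomputable def G (Q : PS) : ℕ → ℕ → PS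
  | _, 0 => 1
  | 0, _ + 1 => 0
  | n + 1, k + 1 => G Q n k + Q ^ (k + 1) * G Q n (k + 1)

lemma G_zero (Q : PS) (n : ℕ) : G Q n 0 = 1 := by cases n <;> rfl

lemma G_gt (Q : PS) (n k : ℕ) (h : n < k) : G Q n k = 0 := by
  induction n generalizing k with
  | zero => obtain ⟨k, rfl⟩ := Nat.exists_eq_succ_of_ne_zero (by omega : k ≠ 0); rfl
  | succ n ih =>
    obtain ⟨k, rfl⟩ := Nat.exists_eq_succ_of_ne_zero (by omega : k ≠ 0)
    rw [Nat.succ_eq_add_one, G, ih k (by omega), ih (k+1) (by omega)]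
    simp

lemma qbinom (Q y z : PS) (n : ℕ) :
    ∏ i ∈ range n, (y + z * Q ^ i) =
      ∑ k ∈ range (n + 1), G Q n k * Q ^ (k.choose 2) * z ^ k * y ^ (n - k) := by
  induction n generalizing z with
  | zero => simp [G_zero]
  | succ n ih =>
    have h1 : ∏ i ∈ range (n+1), (y + z * Q ^ i) =
        (y + z) * ∏ i ∈ range n, (y + (z * Q) * Q ^ i) := by
      rw [prod_range_succ', mul_comm]
      congr 1
      · simp
      · exact prod_congr rfl fun i _ => by ring
    rw [h1, ih, add_mul]
    have hA : y * ∑ k ∈ range (n + 1), G Q n k * Q ^ (k.choose 2) * (z * Q) ^ k * y ^ (n - k)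
        = y ^ (n + 1) + ∑ k ∈ range (n + 1),
          G Q n (k+1) * Q ^ ((k+1).choose 2) * (z * Q) ^ (k+1) * y ^ (n - k) := by
      rw [sum_range_succ' _ n, mul_add, sum_range_succ _ n, G_gt Q n (n+1) (by omega), mul_sum]
      simp only [G_zero, zero_mul, add_zero, Nat.choose_zero_succ, pow_zero, mul_one, one_mul,
        Nat.sub_zero]
      rw [add_comm]
      congr 1
      · ring
      · refine sum_congr rfl fun k hk => ?_
        have : n - k = (n - (k+1)) + 1 := by have := mem_range.1 hk; omega
        rw [this]; ring
    rw [hA, sum_range_succ' _ (n+1), mul_sum, add_assoc, ← sum_add_distrib, add_comm]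
    congr 1
    · refine sum_congr rfl fun k hk => ?_
      have h2 : (k+1).choose 2 = k + k.choose 2 := by
        rw [Nat.choose_succ_succ' k 1, Nat.choose_one_right]
      rw [G, Nat.add_sub_add_right, h2]
      ring
    · simp [G_zero]

lemma G_mul (m n k : ℕ) :
    fP m m k * G (X ^ m) n k = ∏ i ∈ range k, (1 + X ^ (m * (n - i))) := by
  induction n generalizing k with
  | zero =>
    cases k with
    | zero => simp [fP, G_zero]
    | succ k =>
      rw [G_gt _ _ _ (by omega), mul_zero, eq_comm]
      apply prod_eq_zero (i := 0) (by simp)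
      simpa using char2 1
  | succ n ih =>
    cases k with
    | zero => simp [fP, G_zero]
    | succ k =>
      have e1 : fP m m (k+1) = fP m m k * (1 + X ^ (m + m * k)) := by
        rw [fP, prod_range_succ, fP]
      have e2 := ih k
      have e3 := ih (k+1)
      rw [prod_range_succ, ← e2] at e3
      rw [prod_range_succ', G, mul_add]
      simp only [Nat.add_sub_add_right, Nat.sub_zero]
      rw [← e2]
      rcases le_or_gt k n with h | h
      · obtain ⟨d, rfl⟩ := Nat.exists_eq_add_of_le h
        rw [Nat.add_sub_cancel_left] at e3
        have := char2 (X ^ (m + m * k) * fP m m k * G (X ^ m) (k+d) k)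
        rw [e1] at e3 ⊢
        have e4 : (X : PS) ^ (m * (k + d + 1)) = X ^ (m + m * k) * X ^ (m * d) := by
          rw [← pow_add]; ring_nf
        have e5 : ((X : PS) ^ m) ^ (k+1) = X ^ (m + m * k) := by
          rw [← pow_mul]; ring_nf
        rw [e4, e5]
        linear_combination (X ^ (m + m * k)) * e3 + this
      · rw [G_gt _ _ _ h, G_gt _ _ (k+1) (by omega)]
        simp

lemma coeff_prod_high (m n k c : ℕ) (hm : 0 < m) (h : c + k ≤ n) (f : PS) :
    coeff c (f * ∏ i ∈ range k, (1 + X ^ (m * (n - i)))) = coeff c f := by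
  induction k with
  | zero => simp
  | succ k ih =>
    rw [prod_range_succ, ← mul_assoc, coeff_mul_one_add_high, ih (by omega)]
    have : n - k ≤ m * (n - k) := Nat.le_mul_of_pos_left _ hm
    omega

lemma coeff_P_mul (a m k c : ℕ) (hm : 0 < m) (ha : 0 < a) (h : c ≤ k) (g : PS) :
    coeff c (P a m * g) = coeff c (fP a m k * g) := by
  rw [coeff_mul, coeff_mul]
  refine sum_congr rfl fun p hp => ?_
  have := mem_antidiagonal.1 hp
  congr 1
  obtain ⟨d, rfl⟩ := Nat.exists_eq_add_of_le (show p.1 ≤ k by omega)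
  rw [fP_stable a m _ hm ha, P, coeff_mk]

lemma coeff_P_G (m n k c : ℕ) (hm : 0 < m) (h : c ≤ k) (h2 : c + k ≤ n) :
    coeff c (P m m * G (X ^ m) n k) = if c = 0 then 1 else 0 := by
  rw [coeff_P_mul m m k c hm hm h, G_mul, ← coeff_one, ← one_mul (∏ i ∈ range k, _),
    coeff_prod_high m n k c hm h2]

/-- exponent of the theta function `f(X^a, X^b)` -/
def e (a b : ℕ) (k : ℤ) : ℕ := (a * (k * (k + 1) / 2) + b * (k * (k - 1) / 2)).toNat

lemma e_spec (a b : ℕ) (k : ℤ) : 2 * (e a b k : ℤ) = a * (k * (k + 1)) + b * (k * (k - 1)) := by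
  have h1 : 2 * (k * (k+1) / 2) = k * (k+1) :=
    Int.mul_ediv_cancel' (Int.even_mul_succ_self k).two_dvd
  have h2 : 2 * (k * (k-1) / 2) = k * (k-1) :=
    Int.mul_ediv_cancel' (Int.even_mul_pred_self k).two_dvd
  have h3 : 0 ≤ k * (k+1) := by
    rcases le_or_gt 0 k with h | h <;> nlinarith
  have h4 : 0 ≤ k * (k-1) := by
    rcases le_or_gt k 0 with h | h <;> nlinarith
  have h5 : 0 ≤ (a : ℤ) * (k * (k + 1) / 2) := mul_nonneg (by positivity) (by omega)
  have h6 : 0 ≤ (b : ℤ) * (k * (k - 1) / 2) := mul_nonneg (by positivity) (by omega)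
  rw [e, Int.toNat_of_nonneg (by omega)]
  linear_combination (a : ℤ) * h1 + b * h2

lemma e_ge (a b : ℕ) (ha : 0 < a) (hb : 0 < b) (k : ℤ) : k.natAbs ≤ e a b k := by
  have h := e_spec a b k
  have h3 : 0 ≤ k * (k+1) := by
    rcases le_or_gt 0 k with h | h <;> nlinarith
  have h4 : 0 ≤ k * (k-1) := by
    rcases le_or_gt k 0 with h | h <;> nlinarith
  have h5 : k * (k+1) ≤ (a : ℤ) * (k * (k + 1)) := le_mul_of_one_le_left h3 (by omega)
  have h6 : k * (k-1) ≤ (b : ℤ) * (k * (k - 1)) := le_mul_of_one_le_left h4 (by omega)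
  have h7 : k ≤ k * k := by nlinarith
  have h8 : -k ≤ k * k := by nlinarith
  have h9 : k * (k+1) + k * (k-1) = 2 * (k * k) := by ring
  omega

/-- series attached to an exponent function -/
noncomputable def S {ι : Type*} (f : ι → ℕ) : PS :=
  PowerSeries.mk fun n => (Nat.card {i // f i = n} : ZMod 2)

lemma fin_jtp (a b N : ℕ) (hb : 0 < b) (hN : 0 < N) :
    fP a (a+b) N * fP b (a+b) N =
      ∑ k ∈ range (2 * N + 1), G (X ^ (a+b)) (2*N) k * X ^ (e a b ((k:ℤ) - N)) := by
  obtain ⟨s, hs⟩ : ∃ s, s + a = (a+b) * N := ⟨(a+b)*N - a, by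
    have : a + b ≤ (a+b) * N := Nat.le_mul_of_pos_right _ hN
    omega⟩
  set m := a + b with hm
  have key := qbinom (X ^ m) (X ^ s) 1 (2 * N)
  have hL : ∏ i ∈ range (2 * N), ((X:PS) ^ s + 1 * (X ^ m) ^ i) =
      X ^ (s * N + m * N.choose 2) * (fP a m N * fP b m N) := by
    rw [two_mul, prod_range_add]
    have h1 : ∏ i ∈ range N, ((X:PS) ^ s + 1 * (X ^ m) ^ (N + i)) = X ^ (s * N) * fP a m N := by
      rw [fP, pow_mul, ← (by simp : ∏ i ∈ range N, ((X:PS)^s) = (X^s)^N),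
        ← prod_mul_distrib]
      refine prod_congr rfl fun i _ => ?_
      have : m * (N + i) = s + (a + m * i) := by rw [mul_add, ← hs]; ring
      rw [← pow_mul, this, pow_add]; ring
    have h2 : ∏ i ∈ range N, ((X:PS) ^ s + 1 * (X ^ m) ^ i) = X ^ (m * N.choose 2) * fP b m N := by
      have : (X : PS) ^ (m * N.choose 2) = ∏ i ∈ range N, (X : PS) ^ (m * i) := by
        rw [prod_pow_eq_pow_sum, ← mul_sum, sum_range_id, Nat.choose_two_right]
      rw [this, ← prod_range_reflect (fun i => (X:PS) ^ (m * i)),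
        ← prod_range_reflect (fun i => ((X:PS) ^ s + 1 * (X ^ m) ^ i)), fP, ← prod_mul_distrib]
      refine prod_congr rfl fun i hi => ?_
      have hi := mem_range.1 hi
      obtain ⟨d, hd⟩ := Nat.exists_eq_add_of_lt hi
      have h3 : N - 1 - i = d := by omega
      have h4 : s = m * d + (b + m * i) := by
        have : s + a = m * d + (b + m * i) + a := by
          rw [hs, hd]; simp only [hm]; ring
        omega
      rw [h3, h4, pow_add, ← pow_mul]; ring
    rw [h1, h2, pow_add]; ring
  rw [hL] at key
  have hR : ∑ k ∈ range (2 * N + 1), G (X ^ m) (2*N) k * (X ^ m) ^ (k.choose 2) * 1 ^ k *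
      ((X:PS) ^ s) ^ (2 * N - k) = X ^ (s * N + m * N.choose 2) *
      ∑ k ∈ range (2 * N + 1), G (X ^ m) (2*N) k * X ^ (e a b ((k:ℤ) - N)) := by
    rw [mul_sum]
    refine sum_congr rfl fun k hk => ?_
    have hk := mem_range.1 hk
    have hE : m * k.choose 2 + s * (2 * N - k) = (s * N + m * N.choose 2) + e a b ((k:ℤ) - N) := by
      have h1 := e_spec a b ((k:ℤ) - N)
      have c2 : ∀ j : ℕ, 2 * ((j.choose 2 : ℕ) : ℤ) = j * (j - 1) := by
        intro j
        have : 2 * j.choose 2 = j * (j - 1) := by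
          rw [Nat.choose_two_right]
          exact Nat.mul_div_cancel' (Nat.even_mul_pred_self j).two_dvd
        rcases Nat.eq_zero_or_pos j with rfl | hj
        · simp
        · have h5 := congrArg (Nat.cast : ℕ → ℤ) this
          push_cast [Nat.cast_sub hj] at h5
          exact h5
      have hs' : (s : ℤ) + a = (a + b) * N := by exact_mod_cast hs
      have hsub : ((2 * N - k : ℕ) : ℤ) = 2 * N - k := by
        rw [Nat.cast_sub (by omega)]; push_cast; ring
      have : (2:ℤ) * ((m * k.choose 2 + s * (2 * N - k) : ℕ) : ℤ) =
          2 * (((s * N + m * N.choose 2) + e a b ((k:ℤ) - N) : ℕ) : ℤ) := by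
        rw [Nat.cast_add, Nat.cast_mul, Nat.cast_mul s, hsub]
        push_cast
        simp only [hm]
        push_cast
        linear_combination (a + b : ℤ) * c2 k - (a + b : ℤ) * c2 N - h1 + 2 * ((N : ℤ) - k) * hs'
      omega
    rw [one_pow, mul_one, mul_assoc, ← pow_mul, ← pow_mul, ← pow_add, hE, pow_add]
    ring
  rw [hR] at key
  exact mul_left_cancel₀ (pow_ne_zero _ X_ne_zero) key

lemma card_fiber (a b n N : ℕ) (ha : 0 < a) (hb : 0 < b) (hN : n ≤ N) :
    (∑ k ∈ range (2 * N + 1), if e a b ((k:ℤ) - N) = n then (1 : ZMod 2) else 0) =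
      (Nat.card {i : ℤ // e a b i = n} : ZMod 2) := by
  rw [← Finset.sum_filter, Finset.sum_const, nsmul_eq_mul, mul_one]
  congr 1
  rw [← Nat.card_eq_finsetCard]
  refine Nat.card_congr ⟨fun x => ⟨(x.1 : ℤ) - N, (mem_filter.1 x.2).2⟩,
    fun i => ⟨(i.1 + N).toNat, ?_⟩, fun x => ?_, fun i => ?_⟩
  · have := e_ge a b ha hb i.1
    have h := i.2
    rw [mem_filter, mem_range, Int.toNat_of_nonneg (by omega)]
    refine ⟨by omega, ?_⟩
    rw [add_sub_cancel_right]; exact h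
  · apply Subtype.ext; simp
  · have := e_ge a b ha hb i.1
    have h := i.2
    apply Subtype.ext
    simp only
    rw [Int.toNat_of_nonneg (by omega)]
    ring

theorem jtp (a b : ℕ) (ha : 0 < a) (hb : 0 < b) :
    S (e a b) = P a (a+b) * P b (a+b) * P (a+b) (a+b) := by
  have hm : 0 < a + b := by omega
  refine (Conv.unique (F := fun N => fP a (a+b) N * fP b (a+b) N * P (a+b) (a+b)) ?_
    (((conv_P _ _ hm ha).mul (conv_P _ _ hm hb)).mul (Conv.const _)))
  intro n
  filter_upwards [eventually_ge_atTop (2 * n + 1)] with N hN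
  rw [fin_jtp a b N hb (by omega), S, coeff_mk, ← card_fiber a b n N ha hb (by omega), sum_mul,
    map_sum]
  refine sum_congr rfl fun k hk => ?_
  rw [show G (X ^ (a+b)) (2*N) k * X ^ (e a b ((k:ℤ) - N)) * P (a+b) (a+b) =
    (P (a+b) (a+b) * G (X ^ (a+b)) (2*N) k) * X ^ (e a b ((k:ℤ) - N)) by ring, coeff_mul_X_pow']
  have h1 := e_ge a b ha hb ((k:ℤ) - N)
  split_ifs with h2 h3 h3
  · rw [coeff_P_G _ _ _ _ hm (by omega) (by omega), if_pos (by omega)]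
  · rw [coeff_P_G _ _ _ _ hm (by omega) (by omega), if_neg (by omega)]
  · omega
  · rfl

/-- finite fibers -/
def FF {ι : Type*} (f : ι → ℕ) : Prop := ∀ n, Finite {i // f i = n}

lemma FF_e (a b : ℕ) (ha : 0 < a) (hb : 0 < b) : FF (e a b) := by
  intro n
  have : ({i : ℤ | e a b i = n}).Finite := by
    refine (Set.finite_Icc (-(n:ℤ)) n).subset fun i hi => ?_
    have h := e_ge a b ha hb i
    have hi : e a b i = n := hi
    exact ⟨by omega, by omega⟩
  exact this.to_subtype

lemma card_mul_fiber {ι κ : Type*} (f : ι → ℕ) (g : κ → ℕ) (hf : FF f) (hg : FF g) (n : ℕ) :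
    Nat.card {p : ι × κ // f p.1 + g p.2 = n} =
    ∑ q ∈ antidiagonal n, Nat.card {i // f i = q.1} * Nat.card {i // g i = q.2} := by
  have E : {p : ι × κ // f p.1 + g p.2 = n} ≃
      (Σ q : antidiagonal n, {i // f i = q.1.1} × {i // g i = q.1.2}) :=
    ⟨fun p => ⟨⟨(f p.1.1, g p.1.2), mem_antidiagonal.2 p.2⟩, ⟨p.1.1, rfl⟩, ⟨p.1.2, rfl⟩⟩,
     fun x => ⟨(x.2.1.1, x.2.2.1), by
        have := mem_antidiagonal.1 x.1.2
        rw [x.2.1.2, x.2.2.2]; exact this⟩,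
     fun p => rfl, by
      rintro ⟨⟨⟨q1, q2⟩, hq⟩, ⟨i, hi⟩, ⟨j, hj⟩⟩
      simp only at hi hj
      subst hi; subst hj
      rfl⟩
  have : ∀ q : antidiagonal n, Finite ({i // f i = q.1.1} × {i // g i = q.1.2}) := fun q => by
    have := hf q.1.1
    have := hg q.1.2
    infer_instance
  rw [Nat.card_congr E, Nat.card_sigma]
  simp only [Nat.card_prod]
  exact Finset.sum_coe_sort (antidiagonal n)
    (fun q => Nat.card {i // f i = q.1} * Nat.card {i // g i = q.2})

lemma FF_mul {ι κ : Type*} {f : ι → ℕ} {g : κ → ℕ} (hf : FF f) (hg : FF g) :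
    FF (fun p : ι × κ => f p.1 + g p.2) := by
  intro n
  have h : ∀ m, ({i | f i ≤ m}).Finite := fun m => by
    have : {i | f i ≤ m} = ⋃ k ∈ Set.Iic m, {i | f i = k} := by ext; simp
    rw [this]
    exact (Set.finite_Iic m).biUnion fun k _ => (Set.finite_coe_iff.1 (hf k))
  have h' : ∀ m, ({i | g i ≤ m}).Finite := fun m => by
    have : {i | g i ≤ m} = ⋃ k ∈ Set.Iic m, {i | g i = k} := by ext; simp
    rw [this]
    exact (Set.finite_Iic m).biUnion fun k _ => (Set.finite_coe_iff.1 (hg k))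
  have : ({p : ι × κ | f p.1 + g p.2 = n}).Finite := by
    refine ((h n).prod (h' n)).subset fun p hp => ?_
    have hp : f p.1 + g p.2 = n := hp
    exact ⟨show f p.1 ≤ n by omega, show g p.2 ≤ n by omega⟩
  exact this.to_subtype

lemma S_mul {ι κ : Type*} (f : ι → ℕ) (g : κ → ℕ) (hf : FF f) (hg : FF g) :
    S f * S g = S (fun p : ι × κ => f p.1 + g p.2) := by
  ext n
  rw [coeff_mul]
  simp only [S, coeff_mk]
  rw [card_mul_fiber f g hf hg]
  push_cast
  rfl

lemma S_add {ι κ : Type*} (f : ι → ℕ) (g : κ → ℕ) (hf : FF f) (hg : FF g) :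
    S f + S g = S (Sum.elim f g) := by
  ext n
  have := hf n
  have := hg n
  rw [map_add]
  simp only [S, coeff_mk]
  rw [← Nat.cast_add, ← Nat.card_sum, Nat.card_congr (Equiv.subtypeSum)]
  rfl

lemma S_X {ι : Type*} (f : ι → ℕ) : X * S f = S (fun i => f i + 1) := by
  ext n
  cases n with
  | zero =>
    rw [coeff_zero_X_mul, S, coeff_mk]
    have : IsEmpty {i // f i + 1 = 0} := ⟨fun i => by have := i.2; omega⟩
    simp
  | succ n =>
    rw [coeff_succ_X_mul]
    simp [S, coeff_mk]

lemma S_congr {ι κ : Type*} {f : ι → ℕ} {g : κ → ℕ} (E : ι ≃ κ) (h : ∀ i, g (E i) = f i) :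
    S f = S g := by
  ext n
  simp only [S, coeff_mk]
  congr 1
  exact Nat.card_congr (E.subtypeEquiv fun i => by rw [h])

/-- the lattice bijection -/
def lat : (ℤ × ℤ) ⊕ (ℤ × ℤ) → ℤ × ℤ
  | Sum.inl (k, l) =>
    if k % 2 = 0 then
      if l % 2 = 0 then ((2*k-l)/2, (k+2*l)/2) else ((k+2*l)/2, (l-2*k+1)/2)
    else
      if l % 2 = 0 then ((1-k-2*l)/2, (2*k-l)/2) else ((l-2*k+1)/2, (1-k-2*l)/2)
  | Sum.inr (s, t) => (1 - s - 2*t, 2*s-t)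

lemma lat_inj : Function.Injective lat := by
  rintro (⟨k, l⟩ | ⟨k, l⟩) (⟨k', l'⟩ | ⟨k', l'⟩) h <;> simp only [lat] at h
  · split_ifs at h <;> simp only [Prod.mk.injEq] at h <;> obtain ⟨h1, h2⟩ := h <;>
    first
    | (exfalso; omega)
    | (have : k = k' := by omega
       have : l = l' := by omega
       subst k; subst l; rfl)
  · split_ifs at h <;> simp only [Prod.mk.injEq] at h <;> obtain ⟨h1, h2⟩ := h <;> omega
  · split_ifs at h <;> simp only [Prod.mk.injEq] at h <;> obtain ⟨h1, h2⟩ := h <;> omega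
  · simp only [Prod.mk.injEq] at h
    have : k = k' := by omega
    have : l = l' := by omega
    subst k; subst l; rfl

lemma lat_surj : Function.Surjective lat := by
  rintro ⟨s, t⟩
  have h : (s - 2*t) % 5 = 0 ∨ (s - 2*t) % 5 = 1 ∨ (s - 2*t) % 5 = 2 ∨ (s - 2*t) % 5 = 3 ∨
    (s - 2*t) % 5 = 4 := by omega
  rcases h with h | h | h | h | h
  · refine ⟨Sum.inl ((4*s+2*t)/5, (4*t-2*s)/5), ?_⟩
    rw [lat, if_pos (by omega), if_pos (by omega), Prod.mk.injEq]
    constructor <;> omega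
  · refine ⟨Sum.inr ((2*t-s+1)/5, (2-2*s-t)/5), ?_⟩
    rw [lat, Prod.mk.injEq]
    constructor <;> omega
  · refine ⟨Sum.inl ((3-4*s-2*t)/5, (2*s-4*t+1)/5), ?_⟩
    rw [lat, if_neg (by omega), if_neg (by omega), Prod.mk.injEq]
    constructor <;> omega
  · refine ⟨Sum.inl ((4*t-2*s+1)/5, (2-4*s-2*t)/5), ?_⟩
    rw [lat, if_neg (by omega), if_pos (by omega), Prod.mk.injEq]
    constructor <;> omega
  · refine ⟨Sum.inl ((2*s-4*t+2)/5, (4*s+2*t-1)/5), ?_⟩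
    rw [lat, if_pos (by omega), if_neg (by omega), Prod.mk.injEq]
    constructor <;> omega

lemma theta_id : S (e 1 4) * S (e 2 3) + X * (S (e 5 15) * S (e 5 15)) =
    S (e 1 3) * S (e 1 3) := by
  have f1 := FF_e 1 4 (by omega) (by omega)
  have f2 := FF_e 2 3 (by omega) (by omega)
  have f3 := FF_e 5 15 (by omega) (by omega)
  have f4 := FF_e 1 3 (by omega) (by omega)
  rw [S_mul _ _ f1 f2, S_mul _ _ f3 f3, S_mul _ _ f4 f4, S_X, S_add _ _ (FF_mul f1 f2)]
  · refine S_congr (Equiv.ofBijective lat ⟨lat_inj, lat_surj⟩) ?_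
    intro i
    change e 1 3 (lat i).1 + e 1 3 (lat i).2 = _
    rcases i with ⟨k, l⟩ | ⟨s, t⟩
    · simp only [Sum.elim_inl]
      have h1 := e_spec 1 4 k
      have h2 := e_spec 2 3 l
      have h3 := e_spec 1 3 (lat (Sum.inl (k, l))).1
      have h4 := e_spec 1 3 (lat (Sum.inl (k, l))).2
      zify
      rcases Int.emod_two_eq_zero_or_one k with hk | hk <;>
      rcases Int.emod_two_eq_zero_or_one l with hl | hl <;>
      [ obtain ⟨k, rfl⟩ : ∃ c, k = 2 * c := ⟨k/2, by omega⟩;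
        obtain ⟨k, rfl⟩ : ∃ c, k = 2 * c := ⟨k/2, by omega⟩;
        obtain ⟨k, rfl⟩ : ∃ c, k = 2 * c + 1 := ⟨k/2, by omega⟩;
        obtain ⟨k, rfl⟩ : ∃ c, k = 2 * c + 1 := ⟨k/2, by omega⟩] <;>
      [ obtain ⟨l, rfl⟩ : ∃ c, l = 2 * c := ⟨l/2, by omega⟩;
        obtain ⟨l, rfl⟩ : ∃ c, l = 2 * c + 1 := ⟨l/2, by omega⟩;
        obtain ⟨l, rfl⟩ : ∃ c, l = 2 * c := ⟨l/2, by omega⟩;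
        obtain ⟨l, rfl⟩ : ∃ c, l = 2 * c + 1 := ⟨l/2, by omega⟩]
      · have hlat : lat (Sum.inl (2*k, 2*l)) = (2*k-l, k+2*l) := by
          rw [lat, if_pos hk, if_pos hl, Prod.mk.injEq]; constructor <;> omega
        rw [hlat] at h3 h4 ⊢
        push_cast at *
        linarith
      · have hlat : lat (Sum.inl (2*k, 2*l+1)) = (k+2*l+1, l-2*k+1) := by
          rw [lat, if_pos hk, if_neg (by omega), Prod.mk.injEq]; constructor <;> omega
        rw [hlat] at h3 h4 ⊢
        push_cast at *
        linarith
      · have hlat : lat (Sum.inl (2*k+1, 2*l)) = (-k-2*l, 2*k+1-l) := by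
          rw [lat, if_neg (by omega), if_pos hl, Prod.mk.injEq]; constructor <;> omega
        rw [hlat] at h3 h4 ⊢
        push_cast at *
        linarith
      · have hlat : lat (Sum.inl (2*k+1, 2*l+1)) = (l-2*k, -k-2*l-1) := by
          rw [lat, if_neg (by omega), if_neg (by omega), Prod.mk.injEq]; constructor <;> omega
        rw [hlat] at h3 h4 ⊢
        push_cast at *
        linarith
    · simp only [Sum.elim_inr, lat]
      have h1 := e_spec 5 15 s
      have h2 := e_spec 5 15 t
      have h3 := e_spec 1 3 (1 - s - 2*t)
      have h4 := e_spec 1 3 (2*s-t)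
      zify
      push_cast at *
      linarith
  · intro n
    cases n with
    | zero =>
      have : IsEmpty {i : ℤ × ℤ // e 5 15 i.1 + e 5 15 i.2 + 1 = 0} :=
        ⟨fun i => by have := i.2; omega⟩
      infer_instance
    | succ n =>
      simp only [add_left_inj]
      exact FF_mul f3 f3 n

/-- Euler products -/
noncomputable abbrev E (d : ℕ) : PS := P d d

lemma E_two (d : ℕ) (hd : 0 < d) : E (2 * d) = E d ^ 2 := (P_sq d d hd hd).symm

lemma theta3 (d : ℕ) (hd : 0 < d) : S (e d (3*d)) = E d ^ 3 := by
  have h := jtp d (3*d) hd (by omega)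
  have h1 := P_split d d 4 hd hd (by omega)
  have h2 := P_split (2*d) (2*d) 2 (by omega) (by omega) (by omega)
  have h3 := E_two d hd
  have h4 := E_two (2*d) (by omega)
  simp only [prod_range_succ, prod_range_zero, one_mul, mul_zero, add_zero, mul_one] at h1 h2
  simp only [E] at *
  rw [show d + 3 * d = 4 * d by ring] at h
  rw [show d + d = 2 * d by ring, show d + d * 2 = 3 * d by ring,
    show d + d * 3 = 4 * d by ring] at h1
  rw [show 2 * d + 2 * d = 4 * d by ring, show 2 * (2 * d) = 4 * d by ring] at h2
  rw [show 2 * (2 * d) = 4 * d by ring] at h4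
  have hne := P_ne d d
  refine mul_left_cancel₀ (pow_ne_zero 2 hne) ?_
  rw [h3] at h4 h2
  rw [h]
  linear_combination (P d (4*d) * P (3*d) (4*d) * P (4*d) (4*d)) * h2
    - P (4*d) (4*d) * h1 + P d d * h4

lemma euler5 : S (e 5 10) = E 5 := by
  have h := jtp 5 10 (by omega) (by omega)
  have h1 := P_split 5 5 3 (by omega) (by omega) (by omega)
  simp [prod_range_succ] at h h1
  rw [h, E, h1]

lemma theta14 : S (e 1 4) * S (e 2 3) = E 1 * E 5 := by
  have h := jtp 1 4 (by omega) (by omega)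
  have h' := jtp 2 3 (by omega) (by omega)
  have h1 := P_split 1 1 5 (by omega) (by omega) (by omega)
  simp [prod_range_succ] at h h' h1
  rw [h, h', E, h1]
  ring

lemma main_id : E 1 * E 5 = (E 1 ^ 3) ^ 2 + X * (E 5 ^ 3) ^ 2 := by
  have h := theta_id
  rw [theta14, theta3 1 (by omega), theta3 5 (by omega)] at h
  have := char2 (X * (E 5 ^ 3) ^ 2)
  linear_combination h - this

/-- allowed parts -/
abbrev ok (i : ℕ) : Prop := ¬ 2 ∣ i ∧ ¬ 5 ∣ i

/-- number of one-coloured partitions -/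
def a (n : ℕ) : ℕ := (Nat.Partition.restricted n ok).card

/-- its generating function mod 2 -/
noncomputable def A : PS := PowerSeries.mk fun n => (a n : ZMod 2)

open scoped PowerSeries.WithPiTopology in
lemma exists_conv : ∃ g : ℕ → PS, (∀ i, g i * (if ok (i+1) then 1 + X ^ (i+1) else 1) = 1) ∧
    Conv (fun N => ∏ i ∈ range N, g i) A := by
  let _ : TopologicalSpace (ZMod 2) := ⊥
  have : DiscreteTopology (ZMod 2) := ⟨rfl⟩
  have h := Nat.Partition.hasProd_powerSeriesMk_card_restricted (ZMod 2) ok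
  refine ⟨fun i => if ok (i + 1) then ∑' j : ℕ, X ^ ((i + 1) * j) else 1,
    fun i => ?_, fun n => ?_⟩
  · by_cases hi : ok (i+1)
    · simp only [if_pos hi]
      have h1 : (1 : PS) + X ^ (i+1) = 1 - X ^ (i+1) := by
        have := char2 (X ^ (i+1)); linear_combination this
      rw [h1]
      simp_rw [pow_mul]
      exact PowerSeries.WithPiTopology.tsum_pow_mul_one_sub_of_constantCoeff_eq_zero (by simp)
    · simp only [if_neg hi, mul_one]
  · have h2 := h.tendsto_prod_nat
    rw [PowerSeries.WithPiTopology.tendsto_iff_coeff_tendsto] at h2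
    have h3 := h2 n
    rw [nhds_discrete, tendsto_pure] at h3
    exact h3

lemma A_spec : A * (P 1 10 * P 3 10 * P 7 10 * P 9 10) = 1 := by
  obtain ⟨g, hg, hc⟩ := exists_conv
  have hc10 : Conv (fun N => ∏ i ∈ range (10 * N), g i) A :=
    hc.comp (tendsto_id.const_mul_atTop' (by norm_num : 0 < 10))
  have hP := ((((conv_P 1 10 (by omega) (by omega)).mul (conv_P 3 10 (by omega) (by omega))).mul
    (conv_P 7 10 (by omega) (by omega))).mul (conv_P 9 10 (by omega) (by omega)))
  refine (hc10.mul hP).unique ?_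
  have : (fun N => (∏ i ∈ range (10 * N), g i) *
      (fP 1 10 N * fP 3 10 N * fP 7 10 N * fP 9 10 N)) = fun _ => 1 := by
    funext N
    have h1 : fP 1 10 N * fP 3 10 N * fP 7 10 N * fP 9 10 N =
        ∏ i ∈ range (10 * N), (if ok (i+1) then 1 + (X:PS) ^ (i+1) else 1) := by
      rw [prod_range_mul']
      have hyes : ∀ r, ok (r+1) → ∏ i ∈ range N, (if ok (r + 10 * i + 1) then
          1 + (X:PS) ^ (r + 10 * i + 1) else 1) = fP (r+1) 10 N := by
        intro r hr
        rw [fP]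
        refine prod_congr rfl fun i _ => ?_
        rw [if_pos (by unfold ok at *; omega)]
        congr 2; omega
      have hno : ∀ r, ¬ ok (r+1) → ∏ i ∈ range N, (if ok (r + 10 * i + 1) then
          1 + (X:PS) ^ (r + 10 * i + 1) else 1) = 1 := by
        intro r hr
        refine prod_eq_one fun i _ => ?_
        rw [if_neg (by unfold ok at *; omega)]
      simp only [prod_range_succ _ 9, prod_range_succ _ 8, prod_range_succ _ 7,
        prod_range_succ _ 6, prod_range_succ _ 5, prod_range_succ _ 4, prod_range_succ _ 3,
        prod_range_succ _ 2, prod_range_succ _ 1, prod_range_succ _ 0, prod_range_zero]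
      rw [hyes 0 (by decide), hno 1 (by decide), hyes 2 (by decide), hno 3 (by decide),
        hno 4 (by decide), hno 5 (by decide), hyes 6 (by decide), hno 7 (by decide),
        hyes 8 (by decide), hno 9 (by decide)]
      simp only [one_mul, mul_one]
    rw [h1, ← prod_mul_distrib]
    exact prod_eq_one fun i _ => hg i
  rw [this]
  exact Conv.const 1

lemma A_E : A * E 5 = E 1 := by
  have h := A_spec
  have h1 := P_split 1 1 10 (by omega) (by omega) (by omega)
  have h2 := P_split 2 2 5 (by omega) (by omega) (by omega)
  have h5 := P_split 5 5 2 (by omega) (by omega) (by omega)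
  have e2 := E_two 1 (by omega)
  have e10 := E_two 5 (by omega)
  simp only [prod_range_succ, prod_range_zero, one_mul, mul_zero, add_zero, mul_one] at h1 h2 h5
  norm_num at h1 h2 h5
  simp only [E] at *
  norm_num at e2 e10
  have hne : P 1 1 * P 5 5 ≠ 0 := mul_ne_zero (P_ne _ _) (P_ne _ _)
  refine mul_left_cancel₀ hne ?_
  have key : A * P 1 1 * P 10 10 = P 2 2 * P 5 5 := by
    rw [h1, h2, h5]
    linear_combination (P 2 10 * P 4 10 * P 5 10 * P 6 10 * P 8 10 * P 10 10 ^ 2) * h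
  rw [e2, e10] at key
  linear_combination key

/-- inverse of `E 5` -/
lemma exists_inv : ∃ I : PS, E 5 * I = 1 := by
  have : IsUnit (E 5) := by
    rw [PowerSeries.isUnit_iff_constantCoeff]
    have := coeff_zero_P 5 5
    rw [coeff_zero_eq_constantCoeff_apply] at this
    rw [this]; exact isUnit_one
  obtain ⟨u, hu⟩ := this
  exact ⟨↑u⁻¹, by rw [← hu, Units.mul_inv]⟩

lemma dissect : ∃ U V : PS, A = U ^ 2 + X * V ^ 2 ∧ U * V = S (e 1 3) * S (e 5 10) := by
  obtain ⟨I, hI⟩ := exists_inv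
  refine ⟨E 1 ^ 3 * I, E 5 ^ 2, ?_, ?_⟩
  · have h := main_id
    have hA := A_E
    have h1 : A = E 1 * E 5 * I ^ 2 := by
      linear_combination (- A * (1 + E 5 * I)) * hI + E 5 * I ^ 2 * hA
    rw [h1, h]
    linear_combination (X * E 5 ^ 4 * (1 + E 5 * I)) * hI
  · have := theta3 1 (by omega)
    rw [mul_one] at this
    rw [this, euler5]
    linear_combination (E 1 ^ 3 * E 5) * hI

lemma sum_antidiagonal_even (f : ℕ → ZMod 2) (n : ℕ) :
    ∑ p ∈ antidiagonal (2 * n), f p.1 * f p.2 = f n := by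
  have hmem : (n, n) ∈ antidiagonal (2 * n) := by rw [HasAntidiagonal.mem_antidiagonal]; omega
  rw [← Finset.add_sum_erase _ _ hmem]
  have h0 : ∑ p ∈ (antidiagonal (2 * n)).erase (n, n), f p.1 * f p.2 = 0 := by
    refine Finset.sum_involution (fun p _ => p.swap) ?_ ?_ ?_ ?_
    · intro p _
      simp only [Prod.fst_swap, Prod.snd_swap]
      rw [mul_comm (f p.2)]
      exact CharTwo.add_self_eq_zero _
    · rintro ⟨x, y⟩ hp _ h
      simp only [Prod.swap_prod_mk, Prod.mk.injEq] at h
      rw [mem_erase, HasAntidiagonal.mem_antidiagonal] at hp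
      apply hp.1
      rw [Prod.mk.injEq]
      have := hp.2
      simp only at this
      omega
    · rintro ⟨x, y⟩ hp
      rw [mem_erase, HasAntidiagonal.mem_antidiagonal] at hp ⊢
      simp only [Prod.swap_prod_mk, ne_eq, Prod.mk.injEq] at *
      omega
    · intro p _; exact Prod.swap_swap p
  rw [h0, add_zero]
  generalize f n = x
  revert x; decide

lemma sum_antidiagonal_odd {R : Type*} [CommSemiring R] (f : ℕ → R) (n : ℕ) :
    ∑ p ∈ antidiagonal (2 * n + 1), f p.1 * f p.2 =
      2 * ∑ p ∈ antidiagonal n, f (2 * p.1) * f (2 * p.2 + 1) := by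
  rw [← Finset.sum_filter_add_sum_filter_not (antidiagonal (2 * n + 1))
    (fun p : ℕ × ℕ => p.1 % 2 = 0) (fun p => f p.1 * f p.2),
    two_mul (∑ p ∈ antidiagonal n, f (2 * p.1) * f (2 * p.2 + 1))]
  refine congrArg₂ (· + ·) ?_ ?_
  · refine Finset.sum_bij' (fun p _ => (p.1 / 2, p.2 / 2)) (fun p _ => (2 * p.1, 2 * p.2 + 1))
      ?_ ?_ ?_ ?_ ?_
    all_goals
      rintro ⟨x, y⟩ hp
      simp only [mem_filter, HasAntidiagonal.mem_antidiagonal] at hp ⊢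
    · omega
    · omega
    · rw [Prod.mk.injEq]; omega
    · rw [Prod.mk.injEq]; omega
    · rw [show 2 * (x / 2) = x by omega, show 2 * (y / 2) + 1 = y by omega]
  · refine Finset.sum_bij' (fun p _ => (p.2 / 2, p.1 / 2)) (fun p _ => (2 * p.2 + 1, 2 * p.1))
      ?_ ?_ ?_ ?_ ?_
    all_goals
      rintro ⟨x, y⟩ hp
      simp only [mem_filter, HasAntidiagonal.mem_antidiagonal] at hp ⊢
    · omega
    · omega
    · rw [Prod.mk.injEq]; omega
    · rw [Prod.mk.injEq]; omega
    · rw [show 2 * (y / 2) = y by omega, show 2 * (x / 2) + 1 = x by omega, mul_comm]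

lemma coeff_sq_even (U : PS) (n : ℕ) : coeff (2 * n) (U ^ 2) = coeff n U := by
  rw [pow_two, coeff_mul, sum_antidiagonal_even (fun i => coeff i U)]

lemma coeff_sq_odd (U : PS) (n : ℕ) : coeff (2 * n + 1) (U ^ 2) = 0 := by
  rw [pow_two, coeff_mul, sum_antidiagonal_odd (fun i => coeff i U)]
  exact (congrArg (· * _) (show (2 : ZMod 2) = 0 from rfl)).trans (zero_mul _)

lemma half_sum (n : ℕ) : ((∑ p ∈ antidiagonal n, a (2 * p.1) * a (2 * p.2 + 1) : ℕ) : ZMod 2) =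
    coeff n (S (e 1 3) * S (e 5 10)) := by
  obtain ⟨U, V, h1, h2⟩ := dissect
  rw [← h2, coeff_mul]
  push_cast
  refine sum_congr rfl fun p _ => ?_
  have hA : ∀ i, (a i : ZMod 2) = coeff i A := fun i => by rw [A, coeff_mk]
  rw [hA, hA, h1, map_add, map_add, coeff_sq_even, coeff_sq_odd, zero_add, coeff_succ_X_mul,
    coeff_sq_even]
  congr 1
  rcases Nat.eq_zero_or_pos p.1 with h | h
  · rw [h, mul_zero, coeff_zero_X_mul, add_zero]
  · rw [show 2 * p.1 = (2 * (p.1 - 1) + 1) + 1 by omega, coeff_succ_X_mul, coeff_sq_odd, add_zero]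

/-- descent -/
lemma no_rep (j : ℕ) (M x y : ℤ) (hM : M % 5 = 2 ∨ M % 5 = 3)
    (h : 3 * x ^ 2 + 5 * y ^ 2 = 4 * (5 ^ (2 * j + 1) * M)) : False := by
  induction j generalizing x y with
  | zero =>
    have p5 : Prime (5 : ℤ) := by norm_num
    have hx : (5 : ℤ) ∣ x := by
      apply p5.dvd_of_dvd_pow (n := 2)
      have : (5:ℤ) ∣ 3 * x ^ 2 := ⟨4 * M - y ^ 2, by linear_combination h⟩
      omega
    obtain ⟨z, rfl⟩ := hx
    have h2 : 15 * z ^ 2 + y ^ 2 = 4 * M := by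
      norm_num at h; linarith
    have h3 : y ^ 2 % 5 = (4 * M) % 5 := by omega
    have : y % 5 = 0 ∨ y % 5 = 1 ∨ y % 5 = 2 ∨ y % 5 = 3 ∨ y % 5 = 4 := by omega
    have h4 : y ^ 2 % 5 = 0 ∨ y ^ 2 % 5 = 1 ∨ y ^ 2 % 5 = 4 := by
      rcases this with h | h | h | h | h <;> simp [pow_two, Int.mul_emod, h]
    omega
  | succ j ih =>
    have p5 : Prime (5 : ℤ) := by norm_num
    set W : ℤ := 5 ^ (2 * j + 1) * M with hW
    have h' : 3 * x ^ 2 + 5 * y ^ 2 = 100 * W := by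
      rw [h, hW]; ring
    have hx : (5 : ℤ) ∣ x := by
      apply p5.dvd_of_dvd_pow (n := 2)
      omega
    obtain ⟨z, rfl⟩ := hx
    have h2 : 15 * z ^ 2 + y ^ 2 = 20 * W := by linarith
    have hy : (5 : ℤ) ∣ y := by
      apply p5.dvd_of_dvd_pow (n := 2)
      omega
    obtain ⟨w, rfl⟩ := hy
    refine ih z w ?_
    linarith

lemma coeff_zero_of (j n t N : ℕ) (ht : t = 22 ∨ t = 28)
    (hN : 2 * N + 1 = 2 * 5 ^ (2 * j + 2) * n + (t * 5 ^ (2 * j + 1) + 1) / 3) :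
    coeff N (S (e 1 3) * S (e 5 10)) = 0 := by
  rw [S_mul _ _ (FF_e 1 3 (by omega) (by omega)) (FF_e 5 10 (by omega) (by omega)), S, coeff_mk]
  have : IsEmpty {p : ℤ × ℤ // e 1 3 p.1 + e 5 10 p.2 = N} := by
    constructor
    rintro ⟨⟨s, k⟩, h⟩
    simp only at h
    have h1 := e_spec 1 3 s
    have h2 := e_spec 5 10 k
    have hmod : (t * 5 ^ (2 * j + 1) + 1) % 3 = 0 := by
      have : 5 ^ (2 * j + 1) % 3 = 2 := by
        rw [pow_succ, pow_mul, Nat.mul_mod, Nat.pow_mod]; norm_num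
      rcases ht with rfl | rfl <;> omega
    have h3 : 3 * (2 * N + 1) = 5 ^ (2 * j + 1) * (30 * n + t) + 1 := by
      have : 3 * ((t * 5 ^ (2 * j + 1) + 1) / 3) = t * 5 ^ (2 * j + 1) + 1 := by omega
      rw [hN, mul_add, this]; ring
    have h4 : 3 * (2 * (N:ℤ) + 1) = 5 ^ (2 * j + 1) * (30 * n + t) + 1 := by exact_mod_cast h3
    have h5 : (e 1 3 s : ℤ) + e 5 10 k = N := by exact_mod_cast h
    refine no_rep j (30 * n + t) (4 * s - 1) (6 * k - 1) (by omega) ?_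
    push_cast at h1 h2
    linear_combination -12 * h1 - 12 * h2 + 24 * h5 + 4 * h4
  simp

/-- multisets of allowed parts -/
abbrev Ms := {M : Multiset ℕ // ∀ x ∈ M, ok x}

/-- the size -/
def sz (M : Ms) : ℕ := M.1.sum

/-- fibers of `sz` are restricted partitions -/
def fibEquiv (n : ℕ) : {M : Ms // sz M = n} ≃ Nat.Partition.restricted n ok where
  toFun M := ⟨⟨M.1.1, fun {i} hi => by
      have := (M.1.2 i hi).1
      rcases Nat.eq_zero_or_pos i with rfl | h
      · simp at this
      · exact h, M.2⟩, by
      unfold Nat.Partition.restricted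
      rw [mem_filter]
      exact ⟨mem_univ _, M.1.2⟩⟩
  invFun p := ⟨⟨p.1.parts, by
    have := p.2
    unfold Nat.Partition.restricted at this
    rw [mem_filter] at this
    exact this.2⟩, p.1.parts_sum⟩
  left_inv M := rfl
  right_inv p := rfl

lemma FF_sz : FF sz := fun n => Finite.of_equiv _ (fibEquiv n).symm

lemma card_sz (n : ℕ) : Nat.card {M : Ms // sz M = n} = a n := by
  rw [Nat.card_congr (fibEquiv n), Nat.card_eq_finsetCard, a]

/-- splitting by colour -/
def colEquiv (n : ℕ) : {M : Multiset (ℕ × ℕ) //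
    (∀ x ∈ M, ¬ 2 ∣ x.1 ∧ ¬ 5 ∣ x.1 ∧ x.2 < 2) ∧ (M.map Prod.fst).sum = n} ≃
    {p : Ms × Ms // sz p.1 + sz p.2 = n} where
  toFun M := ⟨(⟨(M.1.filter (fun x => x.2 = 0)).map Prod.fst, by
      intro x hx
      obtain ⟨y, hy, rfl⟩ := Multiset.mem_map.1 hx
      have := M.2.1 y (Multiset.mem_filter.1 hy).1
      exact ⟨this.1, this.2.1⟩⟩,
    ⟨(M.1.filter (fun x => ¬ x.2 = 0)).map Prod.fst, by
      intro x hx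
      obtain ⟨y, hy, rfl⟩ := Multiset.mem_map.1 hx
      have := M.2.1 y (Multiset.mem_filter.1 hy).1
      exact ⟨this.1, this.2.1⟩⟩), by
    have h := M.2.2
    rw [← Multiset.filter_add_not (fun x : ℕ × ℕ => x.2 = 0) M.1, Multiset.map_add,
      Multiset.sum_add] at h
    exact h⟩
  invFun p := ⟨p.1.1.1.map (fun i => (i, 0)) + p.1.2.1.map (fun i => (i, 1)), by
    intro x hx
    rcases Multiset.mem_add.1 hx with h | h
    · obtain ⟨y, hy, rfl⟩ := Multiset.mem_map.1 h
      have := p.1.1.2 y hy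
      exact ⟨this.1, this.2, by simp⟩
    · obtain ⟨y, hy, rfl⟩ := Multiset.mem_map.1 h
      have := p.1.2.2 y hy
      exact ⟨this.1, this.2, by simp⟩, by
    have := p.2
    simpa [sz, Multiset.map_map, Function.comp_def] using this⟩
  left_inv M := by
    apply Subtype.ext
    simp only [Multiset.map_map, Function.comp_def]
    conv_rhs => rw [← Multiset.filter_add_not (fun x : ℕ × ℕ => x.2 = 0) M.1]
    congr 1
    · conv_rhs => rw [← Multiset.map_id (Multiset.filter (fun x : ℕ × ℕ => x.2 = 0) M.1)]
      refine Multiset.map_congr rfl fun x hx => ?_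
      have := (Multiset.mem_filter.1 hx).2
      exact Prod.ext rfl this.symm
    · conv_rhs => rw [← Multiset.map_id (Multiset.filter (fun x : ℕ × ℕ => ¬ x.2 = 0) M.1)]
      refine Multiset.map_congr rfl fun x hx => ?_
      have h1 := (Multiset.mem_filter.1 hx).2
      have h2 := (M.2.1 x (Multiset.mem_filter.1 hx).1).2.2
      exact Prod.ext rfl (show 1 = x.2 by omega)
  right_inv p := by
    apply Subtype.ext
    apply Prod.ext
    · apply Subtype.ext
      simp [Multiset.filter_map]
    · apply Subtype.ext
      simp [Multiset.filter_map]

lemma colored_eq (n : ℕ) : coloredRegular 2 2 5 n = ∑ p ∈ antidiagonal n, a p.1 * a p.2 := by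
  rw [coloredRegular, Nat.card_congr (colEquiv n), card_mul_fiber sz sz FF_sz FF_sz]
  simp only [card_sz]

end St14

theorem stmt_14 (j n : ℕ) (t : ℕ) (ht : t ∈ ({22, 28} : Finset ℕ)) :
    coloredRegular 2 2 5 (2 * 5 ^ (2 * j + 2) * n + (t * 5 ^ (2 * j + 1) + 1) / 3)
      ≡ 0 [MOD 4] := by
  have ht' : t = 22 ∨ t = 28 := by simpa using ht
  obtain ⟨N, hN⟩ : ∃ N, 2 * N + 1 =
      2 * 5 ^ (2 * j + 2) * n + (t * 5 ^ (2 * j + 1) + 1) / 3 := by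
    have h1 : (5 ^ (2 * j + 1)) % 6 = 5 := by
      rw [pow_succ, pow_mul, Nat.mul_mod, Nat.pow_mod]; norm_num
    have h2 : ((t * 5 ^ (2 * j + 1) + 1) / 3) % 2 = 1 := by
      rcases ht' with rfl | rfl <;> omega
    refine ⟨5 ^ (2 * j + 2) * n + ((t * 5 ^ (2 * j + 1) + 1) / 3) / 2, ?_⟩
    rw [mul_assoc]
    omega
  rw [← hN, St14.colored_eq, St14.sum_antidiagonal_odd]
  have h := St14.half_sum N
  rw [St14.coeff_zero_of j n t N ht' hN, ZMod.natCast_eq_zero_iff] at h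
  rw [Nat.modEq_zero_iff_dvd]
  exact Nat.mul_dvd_mul_left 2 h
end

section
/- Let t be a positive integer with 5 ∤ t. Then for every nonnegative integer n, b^2_{5,4t}(4n+3) ≡ 0 (mod 10). -/
open PowerSeries Finset

abbrev K5 := ZMod 5

instance fact5 : Fact (Nat.Prime 5) := ⟨by norm_num⟩

/-- Gaussian binomial coefficient in `Q`. -/
noncomputable def gb (Q : K5⟦X⟧) : ℕ → ℕ → K5⟦X⟧
  | 0, 0 => 1
  | 0, _ + 1 => 0
  | _ + 1, 0 => 1
  | m + 1, j + 1 => gb Q m j + Q ^ (j + 1) * gb Q m (j + 1)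

lemma gb_zero_right (Q : K5⟦X⟧) (m : ℕ) : gb Q m 0 = 1 := by
  cases m <;> simp [gb]

lemma gb_of_lt (Q : K5⟦X⟧) (m j : ℕ) (h : m < j) : gb Q m j = 0 := by
  induction m generalizing j with
  | zero => cases j with
    | zero => omega
    | succ j => simp [gb]
  | succ m ih => cases j with
    | zero => omega
    | succ j => simp [gb, ih j (by omega), ih (j+1) (by omega)]

noncomputable def qp (Q : K5⟦X⟧) (n : ℕ) : K5⟦X⟧ := ∏ i ∈ range n, (1 - Q ^ (i + 1))

lemma qp_succ (Q : K5⟦X⟧) (n : ℕ) : qp Q (n+1) = qp Q n * (1 - Q^(n+1)) := by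
  simp [qp, prod_range_succ]

lemma gb_mul (Q : K5⟦X⟧) (m a b : ℕ) (h : a + b = m) :
    gb Q m a * (qp Q a * qp Q b) = qp Q m := by
  induction m generalizing a b with
  | zero =>
    obtain rfl : a = 0 := by omega
    obtain rfl : b = 0 := by omega
    simp [gb, qp]
  | succ m ih =>
    cases a with
    | zero => 
      obtain rfl : b = m + 1 := by omega
      rw [gb_zero_right]; simp [qp]
    | succ a =>
      have h1 := ih a b (by omega)
      cases b with
      | zero =>
        obtain rfl : a = m := by omega
        rw [gb, gb_of_lt Q a (a+1) (by omega), qp_succ]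
        linear_combination (1 - Q^(a+1)) * h1
      | succ b =>
        have h2 := ih (a+1) b (by omega)
        obtain rfl : m = a + b + 1 := by omega
        rw [gb, qp_succ Q (a+b+1)]
        rw [qp_succ Q a] at h2 ⊢
        rw [qp_succ Q b] at h1 ⊢
        linear_combination (1 - Q^(a+1)) * h1 + Q^(a+1) * (1 - Q^(b+1)) * h2

lemma qbinom (Q x y : K5⟦X⟧) (m : ℕ) :
    ∏ i ∈ range m, (y + x * Q ^ i) =
      ∑ j ∈ range (m+1), Q ^ (j.choose 2) * gb Q m j * x ^ j * y ^ (m - j) := by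
  induction m generalizing x with
  | zero => simp [gb]
  | succ m ih =>
    rw [prod_range_succ']
    have : ∏ k ∈ range m, (y + x * Q ^ (k+1)) = ∏ k ∈ range m, (y + (x * Q) * Q ^ k) := by
      apply prod_congr rfl; intros; ring
    rw [this, ih, sum_range_succ' _ (m+1)]
    have e1 : ∑ k ∈ range (m+1), Q ^ ((k+1).choose 2) * gb Q (m+1) (k+1) * x ^ (k+1) * y ^ (m + 1 - (k+1))
      = ∑ k ∈ range (m+1), Q ^ (k.choose 2) * gb Q m k * (x*Q) ^ k * y ^ (m - k) * x + 
       ∑ k ∈ range (m+1), Q ^ ((k+1).choose 2) * gb Q m (k+1) * (x * Q) ^ (k+1) * y ^ (m + 1 - (k+1)) := by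
      rw [← sum_add_distrib]
      apply sum_congr rfl
      intro k _
      have : (k+1).choose 2 = k + k.choose 2 := by
        rw [Nat.choose_succ_succ' k 1]; simp
      rw [gb, this, Nat.add_sub_add_right]
      ring
    have e2 : (∑ j ∈ range (m+1), Q ^ (j.choose 2) * gb Q m j * (x*Q) ^ j * y ^ (m - j)) * y =
      ∑ k ∈ range (m+1), Q ^ ((k+1).choose 2) * gb Q m (k+1) * (x * Q) ^ (k+1) * y ^ (m + 1 - (k+1))
       + y ^ (m+1) := by
      have := sum_range_succ' (fun j => Q ^ (j.choose 2) * gb Q m j * (x*Q) ^ j * y ^ (m + 1 - j)) (m+1)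
      rw [sum_range_succ] at this
      rw [gb_of_lt Q m (m+1) (by omega)] at this
      simp only [gb_zero_right] at this
      simp at this
      rw [sum_mul]
      simp
      rw [← this]
      apply sum_congr rfl
      intro j hj
      have : m + 1 - j = (m - j) + 1 := by simp at hj; omega
      rw [this]; ring
    rw [e1]
    simp only [pow_zero, mul_one, mul_add]
    rw [e2, sum_mul, gb_zero_right]
    simp
    ring

lemma finite_jtp (n : ℕ) :
    (∏ i ∈ range n, (1 - (X : K5⟦X⟧) ^ (2 * i + 1))) ^ 2 =
      ∑ j ∈ range (2 * n + 1), (-1) ^ (n + j) * X ^ (((j : ℤ) - n).natAbs ^ 2) * gb (X ^ 2) (2 * n) j := by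
  have h := qbinom (X^2) (-1) (X^(2*n-1)) (2*n)
  have hl : ∏ i ∈ range (2*n), ((X:K5⟦X⟧)^(2*n-1) + (-1) * (X^2)^i) =
      (-1)^n * X^(n*(n-1) + n * (2*n-1)) * (∏ i ∈ range n, (1 - (X : K5⟦X⟧) ^ (2 * i + 1))) ^ 2 := by
    rw [two_mul n, prod_range_add, ← two_mul n]
    have a1 : ∏ x ∈ range n, ((X:K5⟦X⟧)^(2*n-1) + (-1) * (X^2)^x) =
       (-1)^n * X^(n*(n-1)) * ∏ i ∈ range n, (1 - (X : K5⟦X⟧) ^ (2 * i + 1)) := by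
      rw [← prod_range_reflect (fun i => 1 - (X : K5⟦X⟧) ^ (2 * i + 1))]
      have : (X:K5⟦X⟧)^(n*(n-1)) = ∏ i ∈ range n, X^(2*i) := by
        rw [prod_pow_eq_pow_sum, ← mul_sum, mul_comm 2, sum_range_id_mul_two]
      have h1 : (-1 : K5⟦X⟧)^n = ∏ i ∈ range n, (-1) := by simp
      rw [this, h1, ← prod_mul_distrib, ← prod_mul_distrib]
      apply prod_congr rfl
      intro i hi
      simp at hi
      have : 2 * n - 1 = 2 * i + (2 * (n - 1 - i) + 1) := by omega
      rw [this, pow_add, pow_mul]; ring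
    have a2 : ∏ x ∈ range n, ((X:K5⟦X⟧)^(2*n-1) + (-1) * (X^2)^(n+x)) =
       X^(n*(2*n-1)) * ∏ i ∈ range n, (1 - (X : K5⟦X⟧) ^ (2 * i + 1)) := by
      have : (X:K5⟦X⟧)^(n*(2*n-1)) = ∏ i ∈ range n, X^(2*n-1) := by
        simp; rw [mul_comm, pow_mul]
      rw [this, ← prod_mul_distrib]
      apply prod_congr rfl
      intro i hi
      simp at hi
      rw [mul_sub, ← pow_add, ← pow_mul]
      have : 2 * n - 1 + (2 * i + 1) = 2 * (n+i) := by omega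
      rw [this]; ring
    rw [a1, a2, pow_add]; ring
  rw [hl] at h
  have hr : ∑ j ∈ range (2 * n + 1), ((X:K5⟦X⟧)^2) ^ (j.choose 2) * gb (X^2) (2*n) j * (-1) ^ j * (X^(2*n-1)) ^ (2*n - j) =
     (-1)^n * X^(n*(n-1) + n * (2*n-1)) * ∑ j ∈ range (2 * n + 1), (-1) ^ (n + j) * X ^ (((j : ℤ) - n).natAbs ^ 2) * gb (X ^ 2) (2 * n) j := by
    rw [mul_sum]
    apply sum_congr rfl
    intro j hj
    simp at hj
    have e : 2 * j.choose 2 + (2*n-1) * (2*n-j) = n*(n-1) + n * (2*n-1) + ((j : ℤ) - n).natAbs ^ 2 := by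
      have h2 : 2 * j.choose 2 = j * (j - 1) := by
        rw [mul_comm, Nat.choose_two_right, Nat.div_mul_cancel (Nat.even_mul_pred_self j).two_dvd]
      rw [h2]
      rcases Nat.eq_zero_or_pos n with rfl | hn
      · have : j = 0 := by omega
        subst this; simp
      rcases Nat.eq_zero_or_pos j with rfl | hj0
      · zify [show 1 ≤ n by omega, show 1 ≤ 2 * n by omega]
        simp; ring
      zify [show 1 ≤ n by omega, show 1 ≤ 2 * n by omega, show j ≤ 2 * n by omega, show 1 ≤ j by omega]
      rw [sq_abs]; ring
    rw [← pow_mul, ← pow_mul]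
    have s : (-1 : K5⟦X⟧)^n * (-1)^(n+j) = (-1)^j := by
      rw [← pow_add, ← add_assoc, pow_add, ← two_mul, pow_mul]; simp
    calc _ = X ^ (2 * j.choose 2 + (2*n-1) * (2*n-j)) * gb (X^2) (2*n) j * (-1)^j := by rw [pow_add]; ring
      _ = _ := by rw [e, ← s, pow_add]; ring
  rw [hr] at h
  refine mul_left_cancel₀ ?_ h
  apply mul_ne_zero
  · simp
  · exact pow_ne_zero _ X_ne_zero

/-- Frobenius: `p`-th power is expansion over `ZMod p`. -/
lemma pow_eq_expand (p : ℕ) [hp : Fact p.Prime] (F : (ZMod p)⟦X⟧) :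
    F ^ p = expand p hp.out.ne_zero F := by
  have h := MvPowerSeries.map_frobenius_expand p hp.out.ne_zero (f := F) (R := ZMod p) (σ := Unit)
  rw [ZMod.frobenius_zmod] at h
  rw [← h]
  ext n
  simp [expand]

open PowerSeries.WithPiTopology in
noncomputable def f1 : K5⟦X⟧ := ∏' i : ℕ, (1 - X ^ (i + 1))

lemma qp_stable (D m : ℕ) (h : D ≤ m) : (X : K5⟦X⟧) ^ D ∣ qp X m - qp X D := by
  induction m, h using Nat.le_induction with
  | base => simp
  | succ m hm ih =>
    have : qp X (m+1) - qp X D = (qp X m - qp X D) - X^(m+1) * qp (X : K5⟦X⟧) m := by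
      rw [qp_succ]; ring
    rw [this]
    exact dvd_sub ih (dvd_mul_of_dvd_left (pow_dvd_pow _ (by omega)) _)

open PowerSeries.WithPiTopology in
lemma f1_approx (D m : ℕ) (h : D ≤ m) : (X : K5⟦X⟧) ^ D ∣ f1 - qp X m := by
  have h1 := (multipliable_one_sub_X_pow K5).hasProd.tendsto_prod_nat
  rw [tendsto_iff_coeff_tendsto] at h1
  rw [X_pow_dvd_iff]
  intro d hd
  have h2 := h1 d
  have h3 : Filter.Tendsto (fun i => coeff d (∏ i ∈ range i, (1 - (X : K5⟦X⟧)^(i+1)))) Filter.atTop (nhds (coeff d (qp X m))) := by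
    apply tendsto_atTop_of_eventually_const (i₀ := m)
    intro i hi
    have := X_pow_dvd_iff.1 (qp_stable m i hi) d (by omega)
    rw [map_sub, sub_eq_zero] at this
    exact this
  rw [map_sub, sub_eq_zero]
  exact tendsto_nhds_unique h2 h3

noncomputable abbrev pr (D : ℕ) := Ideal.Quotient.mk (Ideal.span {(X : K5⟦X⟧) ^ D})

lemma pr_eq (D : ℕ) (A B : K5⟦X⟧) : pr D A = pr D B ↔ X ^ D ∣ A - B := by
  rw [Ideal.Quotient.eq, Ideal.mem_span_singleton]

lemma expand2_qp (m : ℕ) : expand 2 two_ne_zero (qp X m : K5⟦X⟧) = qp (X^2) m := by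
  simp [qp]

lemma f2_approx (D m : ℕ) (h : D ≤ m) : pr D (expand 2 two_ne_zero f1) = pr D (qp (X^2) m) := by
  rw [pr_eq, ← expand2_qp, ← map_sub]
  obtain ⟨c, hc⟩ := f1_approx D m h
  rw [hc, map_mul, map_pow, expand_X, ← pow_mul]
  exact dvd_mul_of_dvd_left (pow_dvd_pow _ (by omega)) _

noncomputable def S (N : ℕ) : K5⟦X⟧ := ∑ k ∈ Icc (-N : ℤ) N, X ^ (k.natAbs ^ 2)
noncomputable def M (N : ℕ) : K5⟦X⟧ := ∑ k ∈ Icc (-N : ℤ) N, (-1) ^ k.natAbs * X ^ (k.natAbs ^ 2)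

lemma coeff_S (N n : ℕ) : coeff n (S N) = ∑ k ∈ Icc (-N : ℤ) N, if n = k.natAbs ^ 2 then 1 else 0 := by
  simp [S, coeff_X_pow]

lemma coeff_M (N n : ℕ) : coeff n (M N) = (-1) ^ n * coeff n (S N) := by
  rw [coeff_S, M, map_sum, mul_sum]
  apply sum_congr rfl
  intro k _
  have : ((-1 : K5⟦X⟧)) ^ k.natAbs = C ((-1) ^ k.natAbs) := by simp
  rw [this, coeff_C_mul, coeff_X_pow]
  split_ifs with h
  · subst h
    congr 1
    rcases Nat.even_or_odd k.natAbs with h | h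
    · rw [h.neg_one_pow, Even.neg_one_pow]; exact h.pow_of_ne_zero two_ne_zero
    · rw [h.neg_one_pow, Odd.neg_one_pow]; exact h.pow
  · simp

noncomputable def theta : K5⟦X⟧ := PowerSeries.mk fun n => coeff n (S n)

lemma coeff_S_stable (N n : ℕ) (h : n ≤ N) : coeff n (S N) = coeff n theta := by
  rw [theta, coeff_mk, coeff_S, coeff_S]
  symm
  apply sum_subset
  · apply Icc_subset_Icc <;> omega
  · intro k _ hk
    rw [if_neg]
    rintro rfl
    apply hk
    have : k.natAbs ≤ k.natAbs ^ 2 := Nat.le_self_pow two_ne_zero _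
    have h3 : (k.natAbs : ℤ) ≤ ((k.natAbs ^ 2 : ℕ) : ℤ) := by exact_mod_cast this
    simp only [mem_Icc]; omega

noncomputable def thetam : K5⟦X⟧ := PowerSeries.mk fun n => (-1) ^ n * coeff n theta

lemma M_approx (D N : ℕ) (h : D ≤ N) : pr D thetam = pr D (M N) := by
  rw [pr_eq, X_pow_dvd_iff]
  intro d hd
  rw [map_sub, coeff_M, coeff_S_stable _ _ (by omega), thetam, coeff_mk, sub_self]

lemma qp_split (n : ℕ) : qp X (2*n) = (∏ i ∈ range n, (1 - (X : K5⟦X⟧) ^ (2 * i + 1))) * qp (X^2) n := by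
  induction n with
  | zero => simp [qp]
  | succ n ih =>
    rw [show 2 * (n+1) = 2*n+1+1 by ring, qp_succ, qp_succ, ih, qp_succ, prod_range_succ]
    ring

theorem gauss : f1 ^ 2 = expand 2 two_ne_zero f1 * thetam := by
  have key : ∀ D, pr D (f1^2) = pr D (expand 2 two_ne_zero f1 * thetam) := by
    intro D
    set n := 2 * D with hn
    have h1 : pr D f1 = pr D (qp X (2*n)) := (pr_eq _ _ _).2 (f1_approx D _ (by omega))
    have h2 : (qp X (2*n) : K5⟦X⟧)^2 = ∑ j ∈ range (2 * n + 1), (-1) ^ (n + j) * X ^ (((j : ℤ) - n).natAbs ^ 2) * (gb (X ^ 2) (2 * n) j * qp (X^2) n ^ 2) := by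
      rw [qp_split, mul_pow, finite_jtp, sum_mul]
      apply sum_congr rfl; intros; ring
    have hM : M n = ∑ j ∈ range (2 * n + 1), (-1) ^ (n + j) * X ^ (((j : ℤ) - n).natAbs ^ 2) := by
      rw [M]
      symm
      refine sum_bij (fun (j : ℕ) _ => (j : ℤ) - n) ?_ ?_ ?_ ?_
      · intro a ha; simp at ha ⊢; omega
      · intro a _ b _ h; simpa using h
      · intro b hb
        simp at hb
        exact ⟨(b + n).toNat, by simp; omega, by omega⟩
      · intro j _
        congr 1
        rcases Nat.even_or_odd (n + j) with h | h
        · rw [h.neg_one_pow, Even.neg_one_pow]; rw [Int.natAbs_even]; 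
          rw [Int.even_sub]; rw [Nat.even_add] at h; simp [h]
        · rw [h.neg_one_pow, Odd.neg_one_pow]; rw [Int.natAbs_odd]
          rw [← Int.not_even_iff_odd, Int.even_sub]; rw [← Nat.not_even_iff_odd, Nat.even_add] at h; simp; tauto
    rw [map_pow, h1, ← map_pow, h2, map_mul, M_approx D n (by omega), hM, map_sum, map_sum, mul_sum]
    apply sum_congr rfl
    intro j hj
    simp at hj
    by_cases hc : D ≤ j ∧ D ≤ 2 * n - j
    · have := gb_mul (X^2) (2*n) j (2*n-j) (by omega)
      have h3 := congrArg (pr D) this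
      rw [map_mul, map_mul, ← f2_approx D _ hc.1, ← f2_approx D _ hc.2, ← f2_approx D (2*n) (by omega)] at h3
      rw [map_mul _ _ (gb _ _ _ * _), map_mul _ (gb _ _ _), map_pow _ (qp _ _), ← f2_approx D n (by omega), sq (pr D _), h3, mul_comm]
    · have h0 : pr D (X ^ (((j : ℤ) - n).natAbs ^ 2)) = 0 := by
        rw [← map_zero (pr D), pr_eq, sub_zero]
        apply pow_dvd_pow
        have : D ≤ ((j : ℤ) - n).natAbs := by omega
        exact this.trans (Nat.le_self_pow two_ne_zero _)
      simp only [map_mul, h0, mul_zero, zero_mul]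
  ext d
  have := (pr_eq _ _ _).1 (key (d+1))
  have := X_pow_dvd_iff.1 this d (by omega)
  rwa [map_sub, sub_eq_zero] at this

def Sup (m : ℕ) (s : ℕ) (F : K5⟦X⟧) : Prop := ∀ n, n % m ≠ s % m → coeff n F = 0

lemma Sup.mul {m r s : ℕ} {F G : K5⟦X⟧} (hF : Sup m r F) (hG : Sup m s G) : Sup m (r + s) (F * G) := by
  intro n hn
  rw [coeff_mul]
  apply sum_eq_zero
  intro p hp
  rw [HasAntidiagonal.mem_antidiagonal] at hp
  by_cases h1 : p.1 % m = r % m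
  · by_cases h2 : p.2 % m = s % m
    · exfalso; apply hn; rw [← hp, Nat.add_mod, h1, h2, ← Nat.add_mod]
    · rw [hG _ h2, mul_zero]
  · rw [hF _ h1, zero_mul]

lemma Sup.add {m r : ℕ} {F G : K5⟦X⟧} (hF : Sup m r F) (hG : Sup m r G) : Sup m r (F + G) := by
  intro n hn
  rw [map_add, hF n hn, hG n hn, add_zero]

lemma Sup.neg {m r : ℕ} {F : K5⟦X⟧} (hF : Sup m r F) : Sup m r (-F) := by
  intro n hn
  rw [map_neg, hF n hn, neg_zero]

lemma sup_expand (m : ℕ) (hm : m ≠ 0) (F : K5⟦X⟧) : Sup m 0 (expand m hm F) := by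
  intro n hn
  apply coeff_expand_of_not_dvd
  simpa [Nat.dvd_iff_mod_eq_zero] using hn

lemma sup2_eq (F : K5⟦X⟧) (h : Sup 2 0 F) : ∃ G, F = expand 2 two_ne_zero G := by
  refine ⟨PowerSeries.mk fun n => coeff (2*n) F, ?_⟩
  ext n
  rw [coeff_expand]
  split_ifs with h1
  · obtain ⟨k, rfl⟩ := h1
    simp
  · apply h; omega

lemma theta_ne (n : ℕ) (h : n % 4 ≠ 0) (h1 : n % 4 ≠ 1) : coeff n theta = 0 := by
  rw [theta, coeff_mk, coeff_S]
  apply sum_eq_zero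
  intro k _
  rw [if_neg]
  rintro rfl
  have : k.natAbs % 4 < 4 := Nat.mod_lt _ (by norm_num)
  rw [Nat.pow_mod] at h h1
  interval_cases k.natAbs % 4 <;> simp_all

noncomputable def ta : K5⟦X⟧ := PowerSeries.mk fun n => if Even n then coeff n theta else 0
noncomputable def tb : K5⟦X⟧ := PowerSeries.mk fun n => if Even n then 0 else coeff n theta

lemma theta_eq : theta = ta + tb := by
  ext n; simp only [ta, tb, map_add, coeff_mk]; split_ifs <;> simp

lemma thetam_eq : thetam = ta - tb := by
  ext n; simp only [ta, tb, thetam, map_sub, coeff_mk]; split_ifs with h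
  · simp [h.neg_one_pow]
  · rw [Nat.not_even_iff_odd] at h; simp [h.neg_one_pow]

lemma sup_ta : Sup 4 0 ta := by
  intro n hn
  rw [ta, coeff_mk]
  split_ifs with h
  · rw [Nat.even_iff] at h; exact theta_ne n (by omega) (by omega)
  · rfl

lemma sup_tb : Sup 4 1 tb := by
  intro n hn
  rw [tb, coeff_mk]
  split_ifs with h
  · rfl
  · rw [Nat.even_iff] at h; exact theta_ne n (by omega) (by omega)

lemma Sup.two {r : ℕ} {F : K5⟦X⟧} (h : Sup 4 r F) : Sup 2 r F := by
  intro n hn; apply h; omega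

lemma coeff_theta_sq (N n : ℕ) (h : n ≤ N) : coeff n (theta ^ 2) =
    (((Icc (-N : ℤ) N ×ˢ Icc (-N : ℤ) N).filter (fun p : ℤ × ℤ => p.1 ^ 2 + p.2 ^ 2 = (n : ℤ))).card : K5) := by
  have : coeff n (theta ^ 2) = coeff n (S N ^ 2) := by
    rw [sq, sq, coeff_mul, coeff_mul]
    apply sum_congr rfl
    intro p hp
    rw [HasAntidiagonal.mem_antidiagonal] at hp
    rw [coeff_S_stable _ _ (by omega), coeff_S_stable _ _ (by omega)]
  rw [this, sq, S, sum_mul_sum, ← sum_product', map_sum, card_filter, Nat.cast_sum]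
  apply sum_congr rfl
  intro p _
  rw [← pow_add, coeff_X_pow]
  have : (n = p.1.natAbs ^ 2 + p.2.natAbs ^ 2) ↔ (p.1 ^ 2 + p.2 ^ 2 = n) := by
    zify; simp only [sq_abs]; exact eq_comm
  simp only [this]
  split_ifs <;> simp

lemma theta_dup (n : ℕ) : coeff (2 * n) (theta ^ 2) = coeff n (theta ^ 2) := by
  rw [coeff_theta_sq (2*n) _ le_rfl, coeff_theta_sq (2*n) n (by omega)]
  congr 1
  refine card_bij' (fun p _ => ((p.1 + p.2) / 2, (p.1 - p.2) / 2)) (fun p _ => (p.1 + p.2, p.1 - p.2)) ?_ ?_ ?_ ?_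
  · rintro ⟨x, y⟩ h
    simp only [mem_filter, mem_product, mem_Icc] at h ⊢
    have hev : Even (x + y) := by
      have : Even (x^2 + y^2) := ⟨n, by rw [h.2]; push_cast; ring⟩
      simpa [Int.even_add, Int.even_pow] using this
    obtain ⟨c, hc⟩ := hev
    have h1 : (x + y) / 2 = c := by omega
    have h2 : (x - y) / 2 = c - y := by omega
    rw [h1, h2]
    refine ⟨⟨⟨by omega, by omega⟩, by omega, by omega⟩, ?_⟩
    have := h.2
    obtain rfl : x = c + c - y := by omega
    push_cast at this
    linarith
  · rintro ⟨x, y⟩ h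
    simp only [mem_filter, mem_product, mem_Icc] at h ⊢
    have e : (x + y) ^ 2 + (x - y)^2 = 2 * n := by linarith [h.2]
    have b1 : ∀ z w : ℤ, z ^ 2 + w ^2 = 2 * n → -(2 * n : ℤ) ≤ z ∧ z ≤ 2 * n := by
      intro z w h
      have : |z| ≤ z ^ 2 := by
        rw [← sq_abs]; exact Int.le_self_sq _
      have := abs_le.1 (this.trans (by nlinarith [sq_nonneg w] : z ^ 2 ≤ 2 * n))
      exact this
    have c1 := b1 _ _ e
    have c2 := b1 (x - y) (x + y) (by linarith)
    push_cast
    exact ⟨⟨c1, c2⟩, e⟩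
  · rintro ⟨x, y⟩ h
    simp only [mem_filter, mem_product, mem_Icc] at h ⊢
    have hev : Even (x + y) := by
      have : Even (x^2 + y^2) := ⟨n, by rw [h.2]; push_cast; ring⟩
      simpa [Int.even_add, Int.even_pow] using this
    obtain ⟨c, hc⟩ := hev
    ext <;> simp only <;> omega
  · rintro ⟨x, y⟩ h
    ext <;> simp only <;> omega

lemma theta_even : ta ^ 2 + tb ^ 2 = expand 2 two_ne_zero (theta ^ 2) := by
  have h1 : Sup 2 0 (ta ^ 2 + tb ^ 2) := by
    have a := (sup_ta.mul sup_ta).two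
    have b := (sup_tb.mul sup_tb).two
    rw [sq, sq]
    exact Sup.add a (fun n hn => b n (by omega))
  have h2 : Sup 2 1 (ta * tb) := (sup_ta.mul sup_tb).two
  ext n
  rw [coeff_expand]
  split_ifs with h
  · obtain ⟨k, rfl⟩ := h
    rw [Nat.mul_div_cancel_left _ two_pos, ← theta_dup, theta_eq]
    rw [show (ta + tb)^2 = (ta ^ 2 + tb ^ 2) + ta * tb + ta * tb by ring, map_add _ _ (ta * tb), map_add _ _ (ta * tb), h2 (2*k) (by omega), add_zero, add_zero]
  · apply h1; omega

theorem f1_pow8 (n : ℕ) (hn : n % 4 = 3) : coeff n (f1 ^ 8) = 0 := by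
  set E := expand (R := K5) 2 two_ne_zero with hE
  have g := gauss
  rw [thetam_eq] at g
  have g2 : E f1 ^ 2 = E (E f1) * E (ta - tb) := by rw [← map_pow, g, map_mul]
  have te := theta_even
  have hs : Sup 2 0 ((ta^2 - tb^2)^2) := by
    have a := (sup_ta.mul sup_ta).two
    have b := (sup_tb.mul sup_tb).two
    have c : Sup 2 0 (ta^2 - tb^2) := by
      rw [sq, sq, sub_eq_add_neg]
      exact Sup.add a (fun n hn => b.neg n (by omega))
    rw [sq]
    exact c.mul c
  obtain ⟨G, hG⟩ := sup2_eq _ hs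
  have e4 : ∀ F : K5⟦X⟧, Sup 4 0 (E (E F)) := by
    intro F
    rw [hE, ← expand_mul]
    exact sup_expand 4 _ F
  have g' : f1 ^ 2 = E f1 * (ta - tb) := g
  have te' : ta ^ 2 + tb ^ 2 = E theta ^ 2 := by rw [te, map_pow]
  have hG' : (ta^2 - tb^2)^2 = E G := hG
  have e1 : E (E (f1 ^ 2 * G)) = E f1 ^ 4 * E theta ^ 2 := by
    have : E (f1 ^ 2 * G) = f1 ^ 4 * theta ^ 2 := by
      rw [map_mul, map_pow, ← hG', theta_eq]
      linear_combination (-(f1^2 + E f1 * (ta - tb)) * (ta + tb)^2) * g'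
    rw [this, map_mul, map_pow, map_pow]
  have main : f1 ^ 8 = E (f1 ^ 4 * theta ^ 4) + 4 * E (f1^4) * (ta * tb) * (ta * tb)
      - 4 * (E (E (f1 ^ 2 * G)) * (ta * tb)) := by
    rw [e1, map_mul, map_pow, map_pow]
    calc f1 ^ 8 = (f1^2)^4 := by ring
      _ = (E f1)^4 * ((ta ^ 2 + tb ^ 2) - 2 * (ta * tb))^2 := by rw [g']; ring
      _ = _ := by rw [te']; ring
  have h2 : Sup 2 1 (ta * tb) := (sup_ta.mul sup_tb).two
  have c1 : Sup 2 0 (E (f1 ^ 4 * theta ^ 4)) := sup_expand 2 _ _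
  have c2 : Sup 2 0 (E (f1^4) * (ta * tb) * (ta * tb)) :=
    fun n hn => (((sup_expand 2 two_ne_zero (f1^4)).mul h2).mul h2) n (by omega)
  have c3 : Sup 4 1 (E (E (f1 ^ 2 * G)) * (ta * tb)) := (e4 _).mul (sup_ta.mul sup_tb)
  have four : (4 : K5⟦X⟧) = C 4 := (map_ofNat C 4).symm
  rw [main, mul_assoc 4, mul_assoc 4, four, map_sub, map_add, coeff_C_mul, coeff_C_mul, c1 n (by omega), c2 n (by omega), c3 n (by omega)]
  simp

lemma coeff_sq_two (F : (ZMod 2)⟦X⟧) (n : ℕ) (hn : n % 2 = 1) : coeff n (F ^ 2) = 0 := by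
  rw [pow_eq_expand 2 F]
  apply coeff_expand_of_not_dvd
  omega

def allowed (t i : ℕ) : Prop := ¬ 5 ∣ i ∧ ¬ (4 * t) ∣ i

instance (t : ℕ) : DecidablePred (allowed t) := fun i => by unfold allowed; infer_instance

noncomputable def cnt (t n : ℕ) : ℕ := (Nat.Partition.restricted n (allowed t)).card

lemma colored_eq (t n : ℕ) : coloredRegular 2 5 (4 * t) n =
    ∑ p ∈ HasAntidiagonal.antidiagonal n, cnt t p.1 * cnt t p.2 := by
  classical
  let T := (HasAntidiagonal.antidiagonal n).sigma (fun ab : ℕ × ℕ =>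
    Nat.Partition.restricted ab.1 (allowed t) ×ˢ Nat.Partition.restricted ab.2 (allowed t))
  have hT : T.card = ∑ p ∈ HasAntidiagonal.antidiagonal n, cnt t p.1 * cnt t p.2 := by
    simp [T, card_sigma, cnt]
  rw [← hT, coloredRegular, ← Nat.card_eq_finsetCard]
  symm
  have memT : ∀ x : (_ : ℕ × ℕ) × _, x ∈ T ↔ x.1.1 + x.1.2 = n ∧
      (∀ i ∈ x.2.1.parts, allowed t i) ∧ (∀ i ∈ x.2.2.parts, allowed t i) := by
    intro x
    simp [T, Nat.Partition.restricted]
  let F : T → Multiset (ℕ × ℕ) := fun x =>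
    x.1.2.1.parts.map (fun a => (a, 0)) + x.1.2.2.parts.map (fun a => (a, 1))
  have hF : ∀ x : T, (∀ y ∈ F x, ¬ 5 ∣ y.1 ∧ ¬ 4 * t ∣ y.1 ∧ y.2 < 2) ∧
      ((F x).map Prod.fst).sum = n := by
    rintro ⟨x, hx⟩
    obtain ⟨h1, h2, h3⟩ := (memT x).1 hx
    constructor
    · intro y hy
      simp only [F, Multiset.mem_add, Multiset.mem_map] at hy
      rcases hy with ⟨a, ha, rfl⟩ | ⟨a, ha, rfl⟩
      · exact ⟨(h2 a ha).1, (h2 a ha).2, by norm_num⟩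
      · exact ⟨(h3 a ha).1, (h3 a ha).2, by norm_num⟩
    · simp only [F, Multiset.map_add, Multiset.map_map, Function.comp_def, Multiset.map_id',
        Multiset.sum_add, Nat.Partition.parts_sum]
      exact h1
  apply Nat.card_congr
  refine Equiv.ofBijective (fun x => ⟨F x, hF x⟩) ⟨?_, ?_⟩
  · rintro ⟨⟨⟨a, b⟩, P, Q⟩, hx⟩ ⟨⟨⟨a', b'⟩, P', Q'⟩, hx'⟩ h
    have h : P.parts.map (fun a => (a, 0)) + Q.parts.map (fun a => (a, 1)) =
      P'.parts.map (fun a => (a, 0)) + Q'.parts.map (fun a => (a, 1)) := congrArg Subtype.val h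
    have k0 := congrArg (fun M : Multiset (ℕ × ℕ) => (M.filter (fun y => y.2 = 0)).map Prod.fst) h
    have k1 := congrArg (fun M : Multiset (ℕ × ℕ) => (M.filter (fun y => y.2 = 1)).map Prod.fst) h
    simp [Multiset.filter_add, Multiset.filter_map, Function.comp_def] at k0 k1
    have ha : a = a' := by
      have := congrArg Multiset.sum k0
      rwa [P.parts_sum, P'.parts_sum] at this
    have hb : b = b' := by
      have := congrArg Multiset.sum k1
      rwa [Q.parts_sum, Q'.parts_sum] at this
    subst ha hb
    obtain rfl := Nat.Partition.ext k0
    obtain rfl := Nat.Partition.ext k1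
    rfl
  · rintro ⟨M, hM, hs⟩
    let A := (M.filter (fun y => y.2 = 0)).map Prod.fst
    let B := (M.filter (fun y => ¬ y.2 = 0)).map Prod.fst
    have hA : ∀ i ∈ A, allowed t i := by
      intro i hi
      simp only [A, Multiset.mem_map, Multiset.mem_filter] at hi
      obtain ⟨y, ⟨hy, _⟩, rfl⟩ := hi
      exact ⟨(hM y hy).1, (hM y hy).2.1⟩
    have hB : ∀ i ∈ B, allowed t i := by
      intro i hi
      simp only [B, Multiset.mem_map, Multiset.mem_filter] at hi
      obtain ⟨y, ⟨hy, _⟩, rfl⟩ := hi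
      exact ⟨(hM y hy).1, (hM y hy).2.1⟩
    have hpos : ∀ i, allowed t i → 0 < i := by
      intro i hi
      rcases Nat.eq_zero_or_pos i with rfl | h
      · exact absurd (dvd_zero 5) hi.1
      · exact h
    let P : Nat.Partition A.sum := ⟨A, fun {i} hi => hpos i (hA i hi), rfl⟩
    let Q : Nat.Partition B.sum := ⟨B, fun {i} hi => hpos i (hB i hi), rfl⟩
    have hMM : A.map (fun a => (a, 0)) + B.map (fun a => (a, 1)) = M := by
      conv_rhs => rw [← Multiset.filter_add_not (fun y : ℕ × ℕ => y.2 = 0) M]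
      congr 1
      · simp only [A, Multiset.map_map]
        conv_rhs => rw [← Multiset.map_id (Multiset.filter _ M)]
        apply Multiset.map_congr rfl
        rintro ⟨u, v⟩ hy
        simp only [Multiset.mem_filter] at hy
        simp [hy.2]
      · simp only [B, Multiset.map_map]
        conv_rhs => rw [← Multiset.map_id (Multiset.filter _ M)]
        apply Multiset.map_congr rfl
        rintro ⟨u, v⟩ hy
        simp only [Multiset.mem_filter] at hy
        have := (hM _ hy.1).2.2
        simp only at this
        simp only [Function.comp, id, Prod.mk.injEq, true_and]
        omega
    have hsum : A.sum + B.sum = n := by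
      rw [← Multiset.sum_add, ← Multiset.map_add, Multiset.filter_add_not, hs]
    refine ⟨⟨⟨(A.sum, B.sum), (P, Q)⟩, (memT _).2 ⟨hsum, hA, hB⟩⟩, ?_⟩
    exact Subtype.ext hMM

open PowerSeries.WithPiTopology

lemma continuous_expand (k : ℕ) (hk : k ≠ 0) : Continuous (expand (R := K5) k hk) := by
  rw [continuous_iff_continuousAt]
  intro F
  unfold ContinuousAt
  rw [tendsto_iff_coeff_tendsto]
  intro d
  simp only [coeff_expand]
  split_ifs
  · exact (continuous_coeff K5 (d / k)).tendsto F
  · exact tendsto_const_nhds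

lemma hasProd_fk (k : ℕ) (hk : k ≠ 0) :
    HasProd (fun i : ℕ => if k ∣ i + 1 then 1 - (X : K5⟦X⟧) ^ (i + 1) else 1) (expand k hk f1) := by
  have h1 := (multipliable_one_sub_X_pow K5).hasProd.map (expand k hk) (continuous_expand k hk)
  have hinj : Function.Injective (fun i : ℕ => (i + 1) * k - 1) := by
    intro a b h
    simp only at h
    have ha : 0 < (a + 1) * k := by positivity
    have hb : 0 < (b + 1) * k := by positivity
    have : (a + 1) * k = (b + 1) * k := by omega
    have := Nat.eq_of_mul_eq_mul_right (Nat.pos_of_ne_zero hk) this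
    omega
  rw [← hinj.hasProd_iff]
  · change HasProd _ (expand k hk (∏' (b : ℕ), (1 - X ^ (b + 1))))
    convert h1 using 1
    ext1 i
    have : (i + 1) * k - 1 + 1 = (i + 1) * k := Nat.sub_add_cancel (Nat.mul_pos (by omega) (by omega))
    simp only [Function.comp, this, dvd_mul_left, if_true]
    simp [pow_mul, mul_comm]
  · intro x hx
    rw [if_neg]
    rintro ⟨c, hc⟩
    apply hx
    refine ⟨c - 1, ?_⟩
    have : c ≠ 0 := by rintro rfl; simp at hc
    simp only
    rw [Nat.sub_add_cancel (by omega), mul_comm, ← hc]; rfl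

lemma gen_eq (t : ℕ) (ht : 0 < t) (h5 : ¬ 5 ∣ t) (h20 : 20 * t ≠ 0) (h4 : 4 * t ≠ 0) :
    (PowerSeries.mk fun n => (cnt t n : K5)) * f1 * expand (20 * t) h20 f1
      = expand 5 (by norm_num) f1 * expand (4 * t) h4 f1 := by
  have hR := Nat.Partition.hasProd_powerSeriesMk_card_restricted K5 (allowed t)
  have h1 : HasProd (fun i : ℕ => 1 - (X : K5⟦X⟧) ^ (i + 1)) f1 := (multipliable_one_sub_X_pow K5).hasProd
  have hL := (hR.mul h1).mul (hasProd_fk (20*t) h20)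
  have hRt := (hasProd_fk 5 (by norm_num)).mul (hasProd_fk (4*t) h4)
  refine hL.unique ?_
  refine (congrArg (fun f : ℕ → K5⟦X⟧ => HasProd f (expand 5 (by norm_num) f1 * expand (4 * t) h4 f1)) ?_).mpr hRt
  funext i
  have hg : (∑' j : ℕ, (X : K5⟦X⟧) ^ ((i + 1) * j)) * (1 - X ^ (i + 1)) = 1 := by
    simp only [pow_mul]
    exact tsum_pow_mul_one_sub_of_constantCoeff_eq_zero (by simp)
  have hlcm : 20 * t ∣ i + 1 ↔ 5 ∣ i + 1 ∧ 4 * t ∣ i + 1 := by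
    have hc : Nat.Coprime 5 (4 * t) := by
      rw [Nat.Prime.coprime_iff_not_dvd (by norm_num)]
      intro h
      rcases (Nat.Prime.dvd_mul (by norm_num)).1 h with h | h
      · revert h; decide
      · exact h5 h
    rw [show 20 * t = 5 * (4 * t) by ring]
    exact ⟨fun h => ⟨(dvd_mul_right _ _).trans h, (dvd_mul_left _ _).trans h⟩,
      fun h => hc.mul_dvd_of_dvd_of_dvd h.1 h.2⟩
  by_cases a : 5 ∣ i + 1 <;> by_cases b : 4 * t ∣ i + 1 <;> simp [allowed, a, b, hlcm, hg]

lemma constantCoeff_f1 : constantCoeff f1 = 1 := by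
  have := X_pow_dvd_iff.1 (f1_approx 1 1 le_rfl) 0 (by omega)
  rw [map_sub, sub_eq_zero] at this
  rw [← coeff_zero_eq_constantCoeff_apply, this]
  simp [qp]

lemma cnt_mod5 (t : ℕ) (ht : 0 < t) (h5 : ¬ 5 ∣ t) (n : ℕ) (hn : n % 4 = 3) :
    coeff n ((PowerSeries.mk fun n => (cnt t n : K5)) ^ 2) = 0 := by
  have g := gen_eq t ht h5 (by omega) (by omega)
  set R := (PowerSeries.mk fun n => (cnt t n : K5)) with hR
  have h0 : f1 ≠ 0 := by
    intro h
    have := constantCoeff_f1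
    rw [h] at this
    simp at this
  have e20 : expand (20 * t) (by omega) f1 = (expand (4 * t) (by omega) f1) ^ 5 := by
    have : f1 ^ 5 = expand 5 (by norm_num) f1 := pow_eq_expand 5 f1
    rw [← map_pow, this, ← expand_mul]
    congr 2
    ring
  have e5 : expand 5 (by norm_num) f1 = f1 ^ 5 := (pow_eq_expand 5 f1).symm
  rw [e20, e5] at g
  set W := expand (4 * t) (by omega) f1 with hW
  have hinv : f1 * f1⁻¹ = 1 := PowerSeries.mul_inv_cancel _ (by rw [constantCoeff_f1]; simp)
  have hWV : W * expand (4 * t) (by omega) f1⁻¹ = 1 := by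
    rw [hW, ← map_mul, hinv, map_one]
  set V := expand (4 * t) (by omega) f1⁻¹ with hV
  have g2 : R * W ^ 4 = f1 ^ 4 := by
    apply mul_left_cancel₀ h0
    have hW0 : W ≠ 0 := left_ne_zero_of_mul_eq_one hWV
    apply mul_left_cancel₀ hW0
    linear_combination g
  have g3 : R ^ 2 = f1 ^ 8 * V ^ 8 := by
    have : R = f1 ^ 4 * V ^ 4 := by
      rw [← g2, mul_assoc, ← mul_pow, hWV]; simp
    rw [this]; ring
  have hV8 : Sup 4 0 (V ^ 8) := by
    rw [hV, expand_mul 4 (by norm_num) t (by omega), ← map_pow]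
    exact sup_expand _ _ _
  rw [g3, coeff_mul]
  apply sum_eq_zero
  intro p hp
  rw [HasAntidiagonal.mem_antidiagonal] at hp
  by_cases h : p.2 % 4 = 0
  · rw [f1_pow8 _ (by omega), zero_mul]
  · rw [hV8 _ (by omega), mul_zero]

theorem stmt_15 (t : ℕ) (ht : 0 < t) (h5 : ¬ 5 ∣ t) (n : ℕ) :
    coloredRegular 2 5 (4 * t) (4 * n + 3) ≡ 0 [MOD 10] := by
  have cast : ∀ (p : ℕ), ((coloredRegular 2 5 (4 * t) (4 * n + 3) : ℕ) : ZMod p) =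
      coeff (4 * n + 3) ((PowerSeries.mk fun n => (cnt t n : ZMod p)) ^ 2) := by
    intro p
    rw [colored_eq, sq, coeff_mul]
    simp
  have h2 : 2 ∣ coloredRegular 2 5 (4 * t) (4 * n + 3) := by
    rw [← ZMod.natCast_eq_zero_iff, cast 2]
    exact coeff_sq_two _ _ (by omega)
  have h5' : 5 ∣ coloredRegular 2 5 (4 * t) (4 * n + 3) := by
    rw [← ZMod.natCast_eq_zero_iff, cast 5]
    exact cnt_mod5 t ht h5 _ (by omega)
  rw [Nat.modEq_zero_iff_dvd]
  omega
end
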